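/- Upper Gaussian bound (Theorem 1.1, upper part): For every real μ ≥ 1 there exists a constant C > 0 such that for every choice of continuous ν, a : ℝ → ℝ with 1/μ ≤ ν(x) ≤ μ and 1/μ ≤ a(x) ≤ μ for all x, every real W ≥ 0, every corrector T and every fundamental solution P of the canonical equation, one has P(t,x,y) ≤ (C/t^{1/2})·exp(−|T(x) − T(y) − W t|²/(C t)) for all t > 0 and all x, y ∈ ℝ. -/

import Mathlib

open MeasureTheory Filter

/-- Two-sided ellipticity bounds `1/μ ≤ f ≤ μ`. -/
def Elliptic (μ : ℝ) (f : ℝ → ℝ) : Prop := ∀ x : ℝ, 1 / μ ≤ f x ∧ f x ≤ μ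

/-- A classical solution of the canonical equation
`ν(x)∂ₜp − ∂ₓ(ν(x)a(x)∂ₓp) + W∂ₓp = 0` for every time `t ∈ s` and every `x ∈ ℝ`. -/
def IsCanonicalSolOn (ν a : ℝ → ℝ) (W : ℝ) (u : ℝ → ℝ → ℝ) (s : Set ℝ) : Prop :=
  ∃ ut ux q : ℝ → ℝ → ℝ, ∀ t ∈ s, ∀ x : ℝ,
    HasDerivAt (fun τ => u τ x) (ut t x) t ∧
    HasDerivAt (fun ξ => u t ξ) (ux t x) x ∧
    HasDerivAt (fun ξ => ν ξ * a ξ * ux t ξ) (q t x) x ∧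
    ν x * ut t x - q t x + W * ux t x = 0

/-- A corrector: `T(0) = 0`, `−(aνT')' + WT' = Wν` and `1/μ⁵ ≤ T' ≤ μ⁵`. -/
def IsCorrector (μ : ℝ) (ν a : ℝ → ℝ) (W : ℝ) (T : ℝ → ℝ) : Prop :=
  T 0 = 0 ∧ ∃ T' : ℝ → ℝ,
    (∀ x, HasDerivAt T (T' x) x) ∧
    (∀ x, HasDerivAt (fun y => a y * ν y * T' y) (W * T' x - W * ν x) x) ∧
    (∀ x, 1 / μ ^ 5 ≤ T' x ∧ T' x ≤ μ ^ 5)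

/-- An adjoint corrector: `T̃(0) = 0`, `(aνT̃')' + WT̃' = Wν` and `1/μ⁵ ≤ T̃' ≤ μ⁵`. -/
def IsAdjointCorrector (μ : ℝ) (ν a : ℝ → ℝ) (W : ℝ) (T : ℝ → ℝ) : Prop :=
  T 0 = 0 ∧ ∃ T' : ℝ → ℝ,
    (∀ x, HasDerivAt T (T' x) x) ∧
    (∀ x, HasDerivAt (fun y => a y * ν y * T' y) (W * ν x - W * T' x) x) ∧
    (∀ x, 1 / μ ^ 5 ≤ T' x ∧ T' x ≤ μ ^ 5)

/-- A fundamental solution of the canonical equation. -/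
def IsFundSol (ν a : ℝ → ℝ) (W : ℝ) (P : ℝ → ℝ → ℝ → ℝ) : Prop :=
  (∀ y : ℝ, IsCanonicalSolOn ν a W (fun t x => P t x y) (Set.Ioi 0)) ∧
  (∀ y : ℝ, ∀ t : ℝ, 0 < t → ∀ x : ℝ, 0 ≤ P t x y) ∧
  (∀ y : ℝ, ∀ t : ℝ, 0 < t → ∫ x : ℝ, ν x * P t x y = 1) ∧
  (∀ y : ℝ, ∀ φ : ℝ → ℝ, Continuous φ → (∃ B : ℝ, ∀ x, |φ x| ≤ B) →
    Tendsto (fun t => ∫ x : ℝ, ν x * P t x y * φ x)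
      (nhdsWithin 0 (Set.Ioi 0)) (nhds (φ y))) ∧
  (∀ s t : ℝ, 0 < s → 0 < t → ∀ x y : ℝ,
    P (t + s) x y = ∫ z : ℝ, ν z * P t x z * P s z y)

/-!
In the mass coordinate `n = S x`, `S' = ν`, the distribution function `F(t, n) = ∫_{-∞}^x ν u(t)`
of a solution `u` with a pole satisfies the equation `F_t = A F_nn - W F_n` in non-divergence form,
with `A = a ν²`, and `u = F_n`. Exponential barriers give Gaussian tails for `F` and `1 - F`, and
Kruzhkov's doubling of variables, in a parabolic cylinder of size `√t` that moves with speed `W`,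
turns these into a Gaussian bound for `F_n`. Conservation of the flux of the corrector bounds
`T - S` by a multiple of `1 / |W|`, so that `T` may replace `S` at the scale `√t`.

A classical solution is only differentiable in each variable separately, so the equation for `F` is
used after averaging in time, which requires `u` to be jointly continuous. Conservation of mass
gives continuity in time with values in `L¹` (Scheffé), and a Liouville transform turns the equation
into `v_ss = ρ v_t`. If `v` were not continuous, Baire's theorem would give a time interval in which
`v` is uniformly Lipschitz in `s` at all bad times; sup-convolutions in time and a maximum principle
for masses of subintervals carry the bounds across the gaps between bad times, and `v` is continuous
there after all.
-/

namespace GaussianBound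

open Set Topology Function

/-! ### Maximum points and the weak maximum principle -/

theorem le_of_forall_pos_le_add_mul {x y K : ℝ} (h : ∀ ε > 0, x ≤ y + ε * K) : x ≤ y := by
  have hlim : Tendsto (fun ε : ℝ => y + ε * K) (𝓝[>] 0) (𝓝 y) := by
    have : Continuous fun ε : ℝ => y + ε * K := by fun_prop
    simpa using (this.tendsto 0).mono_left nhdsWithin_le_nhds
  exact ge_of_tendsto hlim (by filter_upwards [self_mem_nhdsWithin] with ε hε using h ε hε)

theorem nonneg_of_hasDerivAt_of_eventually_left_le {f : ℝ → ℝ} {f' x₀ : ℝ}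
    (hf : HasDerivAt f f' x₀) (hmax : ∀ᶠ x in 𝓝[<] x₀, f x ≤ f x₀) : 0 ≤ f' := by
  refine ge_of_tendsto (hf.tendsto_slope.mono_left (nhdsLT_le_nhdsNE x₀)) ?_
  filter_upwards [hmax, self_mem_nhdsWithin] with x hx (hlt : x < x₀)
  rw [slope_def_field]
  exact div_nonneg_of_nonpos (sub_nonpos.2 hx) (sub_nonpos.2 hlt.le)

theorem nonpos_of_hasDerivAt_of_eventually_right_le {f : ℝ → ℝ} {f' x₀ : ℝ}
    (hf : HasDerivAt f f' x₀) (hmax : ∀ᶠ x in 𝓝[>] x₀, f x ≤ f x₀) : f' ≤ 0 := by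
  refine le_of_tendsto (hf.tendsto_slope.mono_left (nhdsGT_le_nhdsNE x₀)) ?_
  filter_upwards [hmax, self_mem_nhdsWithin] with x hx (hlt : x₀ < x)
  rw [slope_def_field]
  exact div_nonpos_of_nonpos_of_nonneg (sub_nonpos.2 hx) (sub_nonneg.2 hlt.le)

theorem eventually_right_pos_of_hasDerivAt {k : ℝ → ℝ} {k' x₀ : ℝ} (hk : HasDerivAt k k' x₀)
    (hk₀ : k x₀ = 0) (hpos : 0 < k') : ∀ᶠ x in 𝓝[>] x₀, 0 < k x := by
  have hslope := hk.tendsto_slope.mono_left (nhdsGT_le_nhdsNE x₀)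
  filter_upwards [hslope.eventually (lt_mem_nhds hpos), self_mem_nhdsWithin] with x hx hlt
  rw [slope_def_field, hk₀, sub_zero] at hx
  exact (div_pos_iff_of_pos_right (sub_pos.2 hlt)).1 hx

theorem second_deriv_nonpos_of_eventually_right_le {g r k : ℝ → ℝ} {x₀ k' : ℝ}
    (hg : ∀ᶠ x in 𝓝 x₀, HasDerivAt g (r x * k x) x) (hr : ∀ᶠ x in 𝓝 x₀, 0 < r x)
    (hk₀ : k x₀ = 0) (hk : HasDerivAt k k' x₀) (hmax : ∀ᶠ x in 𝓝[>] x₀, g x ≤ g x₀) :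
    k' ≤ 0 := by
  by_contra! hpos
  have hev : ∀ᶠ x in 𝓝[>] x₀, (0 < r x * k x ∧ HasDerivAt g (r x * k x) x) ∧ g x ≤ g x₀ := by
    filter_upwards [eventually_right_pos_of_hasDerivAt hk hk₀ hpos, nhdsWithin_le_nhds hr,
      nhdsWithin_le_nhds hg, hmax] with x hkx hrx hgx hx using ⟨⟨mul_pos hrx hkx, hgx⟩, hx⟩
  obtain ⟨u, hu, hsub⟩ := (mem_nhdsGT_iff_exists_Ioo_subset).1 hev
  obtain ⟨y, hx₀y, hyu⟩ := exists_between (show x₀ < u from hu)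
  have hmono : StrictMonoOn g (Icc x₀ y) := by
    refine strictMonoOn_of_deriv_pos (convex_Icc _ _) (fun x hx => ?_) fun x hx => ?_
    · rcases hx.1.eq_or_lt with rfl | hlt
      · exact hg.self_of_nhds.continuousAt.continuousWithinAt
      · exact (hsub ⟨hlt, hx.2.trans_lt hyu⟩).1.2.continuousAt.continuousWithinAt
    · rw [interior_Icc] at hx
      obtain ⟨hpos, hgx⟩ := (hsub ⟨hx.1, hx.2.trans hyu⟩).1
      rwa [hgx.deriv]
  exact (hmono (left_mem_Icc.2 hx₀y.le) (right_mem_Icc.2 hx₀y.le) hx₀y).not_ge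
    (hsub ⟨hx₀y, hyu⟩).2

theorem second_deriv_nonpos_of_isLocalMax {g g' : ℝ → ℝ} {x₀ k' : ℝ}
    (hg : ∀ᶠ x in 𝓝 x₀, HasDerivAt g (g' x) x) (hg' : HasDerivAt g' k' x₀)
    (hmax : IsLocalMax g x₀) : k' ≤ 0 :=
  second_deriv_nonpos_of_eventually_right_le (r := fun _ => 1) (by simpa using hg) (by simp)
    (hmax.hasDerivAt_eq_zero hg.self_of_nhds) hg' (nhdsWithin_le_nhds hmax)

theorem weak_maximum_principle {z zt zx zxx : ℝ → ℝ → ℝ} {A : ℝ → ℝ} {W t₀ t₁ c d : ℝ}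
    (hcont : ContinuousOn (uncurry z) (Icc t₀ t₁ ×ˢ Icc c d))
    (hsub : ∀ t ∈ Ioc t₀ t₁, ∀ x ∈ Ioo c d, HasDerivAt (fun τ => z τ x) (zt t x) t ∧
      HasDerivAt (z t) (zx t x) x ∧ HasDerivAt (zx t) (zxx t x) x ∧
      zt t x ≤ A x * zxx t x - W * zx t x)
    (hA : ∀ x ∈ Ioo c d, 0 ≤ A x) (hinit : ∀ x ∈ Icc c d, z t₀ x ≤ 0)
    (hleft : ∀ t ∈ Icc t₀ t₁, z t c ≤ 0) (hright : ∀ t ∈ Icc t₀ t₁, z t d ≤ 0)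
    {t x : ℝ} (ht : t ∈ Icc t₀ t₁) (hx : x ∈ Icc c d) : z t x ≤ 0 := by
  refine le_of_forall_pos_le_add_mul (K := t - t₀) fun ε hε => ?_
  have hcont' : ContinuousOn (fun p : ℝ × ℝ => z p.1 p.2 - ε * (p.1 - t₀))
      (Icc t₀ t₁ ×ˢ Icc c d) := hcont.sub (by fun_prop)
  obtain ⟨⟨s, y⟩, ⟨hs, hy⟩, hmax⟩ :=
    (isCompact_Icc.prod isCompact_Icc).exists_isMaxOn ⟨(t, x), ht, hx⟩ hcont'
  have hmax' : ∀ τ ∈ Icc t₀ t₁, ∀ w ∈ Icc c d, z τ w - ε * (τ - t₀) ≤ z s y - ε * (s - t₀) :=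
    fun τ hτ w hw => hmax (show (τ, w) ∈ _ from ⟨hτ, hw⟩)
  suffices h : z s y ≤ 0 by
    have := mul_nonneg hε.le (sub_nonneg.2 hs.1)
    linarith [hmax' t ht x hx]
  rcases hs.1.eq_or_lt with rfl | hs₀
  · exact hinit y hy
  rcases hy.1.eq_or_lt with rfl | hyc
  · exact hleft s hs
  rcases hy.2.eq_or_lt with rfl | hyd
  · exact hright s hs
  exfalso
  obtain ⟨hzt, hzx, hzxx, hle⟩ := hsub s ⟨hs₀, hs.2⟩ y ⟨hyc, hyd⟩
  have htime : 0 ≤ zt s y - ε := by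
    have hd : HasDerivAt (fun τ => z τ y - ε * (τ - t₀)) (zt s y - ε) s := by
      exact (hzt.sub (((hasDerivAt_id s).sub_const t₀).const_mul ε)).congr_deriv (by ring)
    refine nonneg_of_hasDerivAt_of_eventually_left_le hd ?_
    filter_upwards [Ioo_mem_nhdsLT hs₀] with τ hτ
    exact hmax' τ ⟨hτ.1.le, hτ.2.le.trans hs.2⟩ y hy
  have hloc : IsLocalMax (z s) y := by
    filter_upwards [Ioo_mem_nhds hyc hyd] with w hw
    linarith [hmax' s hs w (Ioo_subset_Icc_self hw)]
  have hsecond : zxx s y ≤ 0 := by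
    refine second_deriv_nonpos_of_isLocalMax ?_ hzxx hloc
    filter_upwards [Ioo_mem_nhds hyc hyd] with w hw using (hsub s ⟨hs₀, hs.2⟩ w hw).2.1
  rw [hloc.hasDerivAt_eq_zero hzx] at hle
  linarith [mul_nonpos_of_nonneg_of_nonpos (hA y ⟨hyc, hyd⟩) hsecond]

/-! ### Kruzhkov's doubling of variables -/

/-- Pointwise solutions of `f_t = A f_xx - W f_x` on a set of pairs `(t, x)`; no continuity of the
derivatives is required. -/
def IsDriftDiffusionSolOn (A : ℝ → ℝ) (W : ℝ) (f : ℝ → ℝ → ℝ) (Ω : Set (ℝ × ℝ)) : Prop :=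
  ∃ fx fxx : ℝ → ℝ → ℝ, ∀ t x, (t, x) ∈ Ω →
    HasDerivAt (fun τ => f τ x) (A x * fxx t x - W * fx t x) t ∧
    HasDerivAt (f t) (fx t x) x ∧ HasDerivAt (fx t) (fxx t x) x

/-- The quadratic penalty in the doubled variables `(t, u, v)`: a strictly concave modulus of
`u - v`, localised around the moving centre `c` and before the time `T`. -/
noncomputable def doublingPenalty (c : ℝ → ℝ) (T k₁ k₂ K₂ K₃ t u v : ℝ) : ℝ :=
  k₁ * (u - v) - k₂ / 2 * (u - v) ^ 2 + K₂ * ((u - c t) ^ 2 + (v - c t) ^ 2) + K₃ * (T - t)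

theorem eq_and_second_le_of_isLocalMax_sub {g g' q q' : ℝ → ℝ} {x₀ k l : ℝ}
    (hg : ∀ᶠ x in 𝓝 x₀, HasDerivAt g (g' x) x) (hg' : HasDerivAt g' k x₀)
    (hq : ∀ x, HasDerivAt q (q' x) x) (hq' : HasDerivAt q' l x₀)
    (hmax : IsLocalMax (fun x => g x - q x) x₀) : g' x₀ = q' x₀ ∧ k ≤ l := by
  have hd : ∀ᶠ x in 𝓝 x₀, HasDerivAt (fun x => g x - q x) (g' x - q' x) x := by
    filter_upwards [hg] with x hx using hx.sub (hq x)
  exact ⟨sub_eq_zero.1 (hmax.hasDerivAt_eq_zero hd.self_of_nhds),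
    sub_nonpos.1 (second_deriv_nonpos_of_isLocalMax hd (hg'.sub hq') hmax)⟩

section Penalty

variable {c : ℝ → ℝ} {T k₁ k₂ K₂ K₃ t u v : ℝ}

theorem hasDerivAt_doublingPenalty_time {W : ℝ} (hc : HasDerivAt c W t) :
    HasDerivAt (fun τ => doublingPenalty c T k₁ k₂ K₂ K₃ τ u v)
      (-(W * (2 * K₂ * ((u - c t) + (v - c t)))) - K₃) t := by
  have hsq := (((hc.const_sub u).pow 2).add ((hc.const_sub v).pow 2)).const_mul K₂
  refine ((hsq.const_add (k₁ * (u - v) - k₂ / 2 * (u - v) ^ 2)).add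
    (((hasDerivAt_id t).const_sub T).const_mul K₃)).congr_deriv ?_
  norm_num
  ring

theorem hasDerivAt_doublingPenalty_fst (u : ℝ) :
    HasDerivAt (fun w => doublingPenalty c T k₁ k₂ K₂ K₃ t w v)
      (k₁ - k₂ * (u - v) + 2 * K₂ * (u - c t)) u := by
  have hd := (hasDerivAt_id u).sub_const v
  have hsq := ((((hasDerivAt_id u).sub_const (c t)).pow 2).add_const ((v - c t) ^ 2)).const_mul K₂
  refine ((((hd.const_mul k₁).sub ((hd.pow 2).const_mul (k₂ / 2))).add hsq).add_const
    (K₃ * (T - t))).congr_deriv ?_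
  norm_num
  ring

theorem hasDerivAt_doublingPenalty_snd (v : ℝ) :
    HasDerivAt (fun w => doublingPenalty c T k₁ k₂ K₂ K₃ t u w)
      (-(k₁ - k₂ * (u - v)) + 2 * K₂ * (v - c t)) v := by
  have hd := (hasDerivAt_id v).const_sub u
  have hsq := ((((hasDerivAt_id v).sub_const (c t)).pow 2).const_add ((u - c t) ^ 2)).const_mul K₂
  refine ((((hd.const_mul k₁).sub ((hd.pow 2).const_mul (k₂ / 2))).add hsq).add_const
    (K₃ * (T - t))).congr_deriv ?_
  norm_num
  ring

theorem le_of_isLocalMaxOn_doubling {f : ℝ → ℝ → ℝ} {A : ℝ → ℝ} {W lam : ℝ} {Ω : Set (ℝ × ℝ)}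
    (hsol : IsDriftDiffusionSolOn A W f Ω) (hc : HasDerivAt c W t)
    (hu : ∀ᶠ w in 𝓝 u, (t, w) ∈ Ω) (hv : ∀ᶠ w in 𝓝 v, (t, w) ∈ Ω)
    (hAu : lam ≤ A u) (hAv : lam ≤ A v) (hlam : 0 ≤ lam) (hk : 2 * K₂ ≤ k₂)
    (hmax : IsLocalMaxOn (fun p : ℝ × ℝ × ℝ => f p.1 p.2.1 - f p.1 p.2.2 -
      doublingPenalty c T k₁ k₂ K₂ K₃ p.1 p.2.1 p.2.2) {p | p.1 ≤ t} (t, u, v)) :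
    2 * lam * (k₂ - 2 * K₂) ≤ K₃ := by
  obtain ⟨fx, fxx, hf⟩ := hsol
  obtain ⟨hut, -, huxx⟩ := hf t u hu.self_of_nhds
  obtain ⟨hvt, -, hvxx⟩ := hf t v hv.self_of_nhds
  have htime := by
    refine nonneg_of_hasDerivAt_of_eventually_left_le
      ((hut.sub hvt).sub (hasDerivAt_doublingPenalty_time (c := c) (T := T) (k₁ := k₁) (k₂ := k₂)
        (K₂ := K₂) (K₃ := K₃) (u := u) (v := v) hc)) ?_
    have hslice : Tendsto (fun τ => (τ, u, v)) (𝓝[<] t) (𝓝[{p : ℝ × ℝ × ℝ | p.1 ≤ t}] (t, u, v)) :=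
      tendsto_nhdsWithin_iff.2 ⟨(Continuous.tendsto (by fun_prop) t).mono_left nhdsWithin_le_nhds,
        by filter_upwards [self_mem_nhdsWithin] with τ hτ using le_of_lt hτ⟩
    exact hslice.eventually hmax
  have hspace : ∀ {γ : ℝ → ℝ × ℝ × ℝ} {w : ℝ}, Continuous γ → (∀ w, (γ w).1 = t) →
      γ w = (t, u, v) → Tendsto γ (𝓝 w) (𝓝[{p : ℝ × ℝ × ℝ | p.1 ≤ t}] (t, u, v)) := by
    intro γ w hγ hγt hγw
    exact tendsto_nhdsWithin_iff.2 ⟨hγw ▸ hγ.tendsto w, .of_forall fun w => (hγt w).le⟩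
  obtain ⟨hux₁, hux₂⟩ := eq_and_second_le_of_isLocalMax_sub (l := -k₂ + 2 * K₂)
    (g := fun w => f t w - f t v) (x₀ := u)
    (by filter_upwards [hu] with w hw using (hf t w hw).2.1.sub_const _) huxx
    hasDerivAt_doublingPenalty_fst
    (((((hasDerivAt_id u).sub_const v).const_mul k₂).const_sub k₁).add
      (((hasDerivAt_id u).sub_const (c t)).const_mul (2 * K₂)) |>.congr_deriv (by ring))
    ((hspace (γ := fun w => (t, w, v)) (by fun_prop) (fun _ => rfl) rfl).eventually hmax)
  obtain ⟨hvx₁, hvx₂⟩ := eq_and_second_le_of_isLocalMax_sub (l := -k₂ + 2 * K₂)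
    (g := fun w => f t u - f t w) (x₀ := v)
    (by filter_upwards [hv] with w hw using (hf t w hw).2.1.const_sub _) hvxx.neg
    hasDerivAt_doublingPenalty_snd
    (((((hasDerivAt_id v).const_sub u).const_mul k₂).const_sub k₁).neg.add
      (((hasDerivAt_id v).sub_const (c t)).const_mul (2 * K₂)) |>.congr_deriv (by ring))
    ((hspace (γ := fun w => (t, u, w)) (by fun_prop) (fun _ => rfl) rfl).eventually hmax)
  have hflux : W * fx t u - W * fx t v = W * (2 * K₂ * ((u - c t) + (v - c t))) := by
    rw [Pi.neg_apply] at hvx₁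
    linear_combination W * hux₁ + W * hvx₁
  have hdiffu : A u * fxx t u ≤ -(lam * (k₂ - 2 * K₂)) := by nlinarith
  have hdiffv : -(A v * fxx t v) ≤ -(lam * (k₂ - 2 * K₂)) := by nlinarith
  linarith

end Penalty

/-- The backward space-time cylinder of duration `δ` and radius `R` that ends at `(T, x₀)` and is
transported with velocity `W`. -/
def driftCylinder (W T δ x₀ R : ℝ) : Set (ℝ × ℝ) :=
  {p | p.1 ∈ Icc (T - δ) T ∧ |p.2 - (x₀ + W * (p.1 - T))| ≤ R}

/-- The parabolic interior of `driftCylinder`: the top is kept, the bottom and the sides are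
removed. -/
def driftCylinderInterior (W T δ x₀ R : ℝ) : Set (ℝ × ℝ) :=
  {p | p.1 ∈ Ioc (T - δ) T ∧ |p.2 - (x₀ + W * (p.1 - T))| < R}

/-- Triples `(t, u, v)` with `v ≤ u` and both `(t, u)` and `(t, v)` in `driftCylinder`. -/
def doubledCylinder (W T δ x₀ R : ℝ) : Set (ℝ × ℝ × ℝ) :=
  {p | (p.1, p.2.1) ∈ driftCylinder W T δ x₀ R ∧ (p.1, p.2.2) ∈ driftCylinder W T δ x₀ R ∧
    p.2.2 ≤ p.2.1}

section Kruzhkov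

variable {W T δ x₀ R : ℝ}

theorem isCompact_doubledCylinder : IsCompact (doubledCylinder W T δ x₀ R) := by
  have hK : IsCompact ((Icc (T - δ) T ×ˢ Icc (-R) R ×ˢ Icc (-R) R) ∩
      {p : ℝ × ℝ × ℝ | p.2.2 ≤ p.2.1}) :=
    (isCompact_Icc.prod (isCompact_Icc.prod isCompact_Icc)).inter_right
      (isClosed_le (by fun_prop) (by fun_prop))
  have hγ : Continuous fun p : ℝ × ℝ × ℝ =>
      (p.1, x₀ + W * (p.1 - T) + p.2.1, x₀ + W * (p.1 - T) + p.2.2) := by fun_prop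
  convert hK.image hγ using 1
  ext ⟨t, u, v⟩
  constructor
  · rintro ⟨⟨ht, hu⟩, ⟨-, hv⟩, hvu⟩
    refine ⟨(t, u - (x₀ + W * (t - T)), v - (x₀ + W * (t - T))),
      ⟨⟨ht, abs_le.1 hu, abs_le.1 hv⟩, sub_le_sub_right hvu _⟩, ?_⟩
    simp only [add_sub_cancel]
  · rintro ⟨⟨t', r, s⟩, ⟨⟨ht, hr, hs⟩, hsr⟩, h⟩
    simp only [Prod.mk.injEq] at h
    obtain ⟨rfl, rfl, rfl⟩ := h
    refine ⟨⟨ht, ?_⟩, ⟨ht, ?_⟩, add_le_add_right hsr _⟩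
    · simpa only [add_sub_cancel_left] using abs_le.2 hr
    · simpa only [add_sub_cancel_left] using abs_le.2 hs

theorem interior_of_doublingPenalty_lt {f : ℝ → ℝ → ℝ} {M k₂ K₂ K₃ t u v : ℝ}
    (hosc : ∀ t u v, (t, u) ∈ driftCylinder W T δ x₀ R → (t, v) ∈ driftCylinder W T δ x₀ R →
      f t u - f t v ≤ M)
    (hk₂ : 0 ≤ k₂) (hK₂ : 0 ≤ K₂) (hK₃ : 0 ≤ K₃) (hK₂R : K₂ * R ^ 2 = M) (hK₃δ : K₃ * δ = M)
    (hmem : (t, u, v) ∈ doubledCylinder W T δ x₀ R)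
    (hlt : doublingPenalty (fun τ => x₀ + W * (τ - T)) T (4 * R * k₂) k₂ K₂ K₃ t u v <
      f t u - f t v) :
    (t, u) ∈ driftCylinderInterior W T δ x₀ R ∧ (t, v) ∈ driftCylinderInterior W T δ x₀ R ∧
      v < u := by
  obtain ⟨hu, hv, hvu⟩ := hmem
  have hM := hosc t u v hu hv
  obtain ⟨⟨hT₀, hT⟩, hu⟩ := hu
  obtain ⟨-, hv⟩ := hv
  simp only [doublingPenalty] at hlt hT₀ hT hu hv hvu
  set c := x₀ + W * (t - T)
  have hmod : 0 ≤ 4 * R * k₂ * (u - v) - k₂ / 2 * (u - v) ^ 2 := by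
    have hr : 0 ≤ 4 * R - (u - v) / 2 := by linarith [(abs_le.1 hu).2, (abs_le.1 hv).1]
    have := mul_nonneg (mul_nonneg hk₂ (sub_nonneg.2 hvu)) hr
    linarith
  have hu₀ : 0 ≤ K₂ * (u - c) ^ 2 := by positivity
  have hv₀ : 0 ≤ K₂ * (v - c) ^ 2 := by positivity
  have ht₀ : 0 ≤ K₃ * (T - t) := mul_nonneg hK₃ (sub_nonneg.2 hT)
  have hbottom : T - δ ≠ t := by
    rintro rfl
    linarith [show K₃ * (T - (T - δ)) = M by rw [sub_sub_cancel, hK₃δ]]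
  have hside : ∀ w, K₂ * (w - c) ^ 2 < M → |w - c| ≠ R := by
    rintro w hw h
    rw [← sq_abs, h, hK₂R] at hw
    exact hw.false
  have hdiag : v ≠ u := by
    rintro rfl
    linarith
  exact ⟨⟨⟨hT₀.lt_of_ne hbottom, hT⟩, hu.lt_of_ne (hside u (by linarith))⟩,
    ⟨⟨hT₀.lt_of_ne hbottom, hT⟩, hv.lt_of_ne (hside v (by linarith))⟩, hvu.lt_of_ne hdiag⟩

theorem doubledCylinder_mem_nhdsWithin {t u v : ℝ}
    (hu : (t, u) ∈ driftCylinderInterior W T δ x₀ R)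
    (hv : (t, v) ∈ driftCylinderInterior W T δ x₀ R) (hvu : v < u) :
    doubledCylinder W T δ x₀ R ∈ 𝓝[{p : ℝ × ℝ × ℝ | p.1 ≤ t}] (t, u, v) := by
  have hnhds : ∀ {g h : ℝ × ℝ × ℝ → ℝ}, Continuous g → Continuous h → g (t, u, v) < h (t, u, v) →
      ∀ᶠ p in 𝓝[{p : ℝ × ℝ × ℝ | p.1 ≤ t}] (t, u, v), g p < h p := fun hg hh hlt =>
    nhdsWithin_le_nhds ((isOpen_lt hg hh).mem_nhds hlt)
  filter_upwards [hnhds continuous_const continuous_fst hu.1.1,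
    hnhds (g := fun p => p.2.2) (h := fun p => p.2.1) (by fun_prop) (by fun_prop) hvu,
    hnhds (g := fun p => |p.2.1 - (x₀ + W * (p.1 - T))|) (by fun_prop) continuous_const hu.2,
    hnhds (g := fun p => |p.2.2 - (x₀ + W * (p.1 - T))|) (by fun_prop) continuous_const hv.2,
    self_mem_nhdsWithin] with p hbottom hdiag hside hside' htop
  have ht : p.1 ∈ Icc (T - δ) T := ⟨hbottom.le, le_trans htop hu.1.2⟩
  exact ⟨⟨ht, hside.le⟩, ⟨ht, hside'.le⟩, hdiag.le⟩

theorem driftCylinderInterior_eventually {t u : ℝ}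
    (hu : (t, u) ∈ driftCylinderInterior W T δ x₀ R) :
    ∀ᶠ w in 𝓝 u, (t, w) ∈ driftCylinderInterior W T δ x₀ R := by
  have hcont : Continuous fun w => |w - (x₀ + W * (t - T))| := by fun_prop
  filter_upwards [(isOpen_lt hcont continuous_const).mem_nhds hu.2] with w hw using ⟨hu.1, hw⟩

theorem sub_le_doublingPenalty {f : ℝ → ℝ → ℝ} {A : ℝ → ℝ} {M lam k₂ K₂ K₃ t u v : ℝ}
    (hsol : IsDriftDiffusionSolOn A W f (driftCylinderInterior W T δ x₀ R))
    (hcont : ContinuousOn (uncurry f) (driftCylinder W T δ x₀ R))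
    (hA : ∀ t x, (t, x) ∈ driftCylinderInterior W T δ x₀ R → lam ≤ A x)
    (hosc : ∀ t u v, (t, u) ∈ driftCylinder W T δ x₀ R → (t, v) ∈ driftCylinder W T δ x₀ R →
      f t u - f t v ≤ M)
    (hlam : 0 ≤ lam) (hK₂ : 0 ≤ K₂) (hK₃ : 0 ≤ K₃) (hK₂R : K₂ * R ^ 2 = M) (hK₃δ : K₃ * δ = M)
    (hk : 2 * K₂ ≤ k₂) (hk₂ : K₃ < 2 * lam * (k₂ - 2 * K₂))
    (hmem : (t, u, v) ∈ doubledCylinder W T δ x₀ R) :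
    f t u - f t v ≤
      doublingPenalty (fun τ => x₀ + W * (τ - T)) T (4 * R * k₂) k₂ K₂ K₃ t u v := by
  set Φ : ℝ × ℝ × ℝ → ℝ := fun p => f p.1 p.2.1 - f p.1 p.2.2 -
    doublingPenalty (fun τ => x₀ + W * (τ - T)) T (4 * R * k₂) k₂ K₂ K₃ p.1 p.2.1 p.2.2
  have hΦ : ContinuousOn Φ (doubledCylinder W T δ x₀ R) := by
    refine (ContinuousOn.sub ?_ ?_).sub ?_
    · exact hcont.comp (f := fun p : ℝ × ℝ × ℝ => (p.1, p.2.1)) (by fun_prop) fun p hp => hp.1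
    · exact hcont.comp (f := fun p : ℝ × ℝ × ℝ => (p.1, p.2.2)) (by fun_prop) fun p hp => hp.2.1
    · unfold doublingPenalty
      fun_prop
  obtain ⟨⟨s, ξ, η⟩, hp, hmax⟩ := isCompact_doubledCylinder.exists_isMaxOn ⟨_, hmem⟩ hΦ
  suffices h : Φ (s, ξ, η) ≤ 0 from sub_nonpos.1 ((hmax hmem).trans h)
  by_contra! hpos
  obtain ⟨hξ, hη, hlt⟩ := interior_of_doublingPenalty_lt hosc (by linarith) hK₂ hK₃ hK₂R hK₃δ hp
    (sub_pos.1 hpos)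
  have hdrift : HasDerivAt (fun τ => x₀ + W * (τ - T)) W s := by
    simpa using (((hasDerivAt_id s).sub_const T).const_mul W).const_add x₀
  refine hk₂.not_ge (le_of_isLocalMaxOn_doubling hsol hdrift (driftCylinderInterior_eventually hξ)
    (driftCylinderInterior_eventually hη) (hA s ξ hξ) (hA s η hη) hlam hk (k₁ := 4 * R * k₂)
    (T := T) ?_)
  filter_upwards [doubledCylinder_mem_nhdsWithin hξ hη hlt] with p hp using hmax hp

theorem kruzhkov_estimate {f : ℝ → ℝ → ℝ} {A : ℝ → ℝ} {M lam x y : ℝ}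
    (hsol : IsDriftDiffusionSolOn A W f (driftCylinderInterior W T δ x₀ R))
    (hcont : ContinuousOn (uncurry f) (driftCylinder W T δ x₀ R))
    (hA : ∀ t x, (t, x) ∈ driftCylinderInterior W T δ x₀ R → lam ≤ A x)
    (hosc : ∀ t u v, (t, u) ∈ driftCylinder W T δ x₀ R → (t, v) ∈ driftCylinder W T δ x₀ R →
      f t u - f t v ≤ M)
    (hlam : 0 < lam) (hδ : 0 < δ) (hR : 0 < R) (hM : 0 ≤ M)
    (hyx : y ≤ x) (hx : |x - x₀| ≤ R) (hy : |y - x₀| ≤ R) :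
    f T x - f T y ≤ 4 * R * (2 * (M / R ^ 2) + M / δ / (2 * lam)) * (x - y) +
      M / R ^ 2 * ((x - x₀) ^ 2 + (y - x₀) ^ 2) := by
  refine le_of_forall_pos_le_add_mul (K := 4 * R * (x - y)) fun ε hε => ?_
  have hT : T ∈ Icc (T - δ) T := ⟨by linarith, le_rfl⟩
  have hmem : (T, x, y) ∈ doubledCylinder W T δ x₀ R := by
    refine ⟨⟨hT, ?_⟩, ⟨hT, ?_⟩, hyx⟩ <;> simpa
  have hK : 0 ≤ M / δ / (2 * lam) := by positivity
  set k₂ := 2 * (M / R ^ 2) + M / δ / (2 * lam) + ε with hk₂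
  have hslope : M / δ < 2 * lam * (k₂ - 2 * (M / R ^ 2)) := by
    have : 2 * lam * (k₂ - 2 * (M / R ^ 2)) = M / δ + 2 * lam * ε := by
      rw [hk₂]
      field_simp
      ring
    rw [this]
    exact lt_add_of_pos_right _ (by positivity)
  have hle := sub_le_doublingPenalty hsol hcont hA hosc hlam.le (by positivity) (by positivity)
    (div_mul_cancel₀ M (by positivity)) (div_mul_cancel₀ M hδ.ne') (by linarith) hslope hmem
  have hsq : 0 ≤ k₂ / 2 * (x - y) ^ 2 := by positivity
  simp only [doublingPenalty, sub_self, mul_zero, add_zero] at hle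
  linarith

end Kruzhkov

/-! ### Chords and one-dimensional viscosity inequalities -/

/-- The difference between `q` and its chord over `[c, d]`. -/
noncomputable def chordDefect (c d : ℝ) (q : ℝ → ℝ) (s : ℝ) : ℝ :=
  q s - ((1 - (s - c) / (d - c)) * q c + (s - c) / (d - c) * q d)

/-- `q'' ≥ m` at `s₀` in the viscosity sense: some twice differentiable function with second
derivative at least `m` at `s₀` touches `q` from below there. -/
def TouchedBelow (q : ℝ → ℝ) (m s₀ : ℝ) : Prop :=
  ∃ (w w' : ℝ → ℝ) (k : ℝ), (∀ᶠ s in 𝓝 s₀, HasDerivAt w (w' s) s) ∧ HasDerivAt w' k s₀ ∧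
    w s₀ = q s₀ ∧ (∀ᶠ s in 𝓝 s₀, w s ≤ q s) ∧ m ≤ k

/-- The second antiderivative of `g` that vanishes to first order at `c`. -/
noncomputable def secondPrimitive (c : ℝ) (g : ℝ → ℝ) (s : ℝ) : ℝ :=
  ∫ z in c..s, ∫ y in c..z, g y

theorem TouchedBelow.sub {q G G' : ℝ → ℝ} {m k s₀ : ℝ} (hq : TouchedBelow q m s₀)
    (hG : ∀ s, HasDerivAt G (G' s) s) (hG' : HasDerivAt G' k s₀) :
    TouchedBelow (fun s => q s - G s) (m - k) s₀ := by
  obtain ⟨w, w', l, hw, hw', heq, hle, hml⟩ := hq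
  refine ⟨fun s => w s - G s, fun s => w' s - G' s, l - k, ?_, hw'.sub hG',
    congrArg (· - G s₀) heq, ?_, sub_le_sub_right hml k⟩
  · filter_upwards [hw] with s hs using hs.sub (hG s)
  · filter_upwards [hle] with s hs using sub_le_sub_right hs _

section Chord

variable {c d : ℝ}

theorem chordDefect_left (q : ℝ → ℝ) : chordDefect c d q c = 0 := by simp [chordDefect]

theorem chordDefect_right (hcd : c < d) (q : ℝ → ℝ) : chordDefect c d q d = 0 := by
  simp [chordDefect, div_self (sub_pos.2 hcd).ne']

theorem chordDefect_sub (q p : ℝ → ℝ) (s : ℝ) :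
    chordDefect c d (fun s => q s - p s) s = chordDefect c d q s - chordDefect c d p s := by
  simp only [chordDefect]
  ring

theorem abs_chordDefect_le {q : ℝ → ℝ} {B s : ℝ} (hq : ∀ z ∈ Icc c d, |q z| ≤ B)
    (hs : s ∈ Icc c d) : |chordDefect c d q s| ≤ 2 * B := by
  have hcd : c ≤ d := hs.1.trans hs.2
  have hθ₀ : 0 ≤ (s - c) / (d - c) := div_nonneg (sub_nonneg.2 hs.1) (sub_nonneg.2 hcd)
  have hθ₁ : (s - c) / (d - c) ≤ 1 :=
    div_le_one_of_le₀ (sub_le_sub_right hs.2 c) (sub_nonneg.2 hcd)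
  have hc := abs_le.1 (hq c (left_mem_Icc.2 hcd))
  have hd := abs_le.1 (hq d (right_mem_Icc.2 hcd))
  have hs := abs_le.1 (hq s hs)
  rw [chordDefect, abs_le]
  constructor <;> nlinarith

theorem chordDefect_nonpos_of_touchedBelow (hcd : c < d) {q : ℝ → ℝ}
    (hq : ContinuousOn q (Icc c d)) (hconv : ∀ s ∈ Ioo c d, TouchedBelow q 0 s) {s : ℝ}
    (hs : s ∈ Icc c d) : chordDefect c d q s ≤ 0 := by
  refine le_of_forall_pos_le_add_mul (K := (s - c) * (d - s)) fun ε hε => ?_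
  set ψ : ℝ → ℝ := fun z => q z - chordDefect c d q z + ε * ((z - c) * (d - z)) with hψ
  have hψ' : ∀ z, HasDerivAt ψ ((q d - q c) / (d - c) + ε * (c + d - 2 * z)) z := by
    intro z
    simp only [hψ, chordDefect, sub_sub_cancel]
    have hθ := ((hasDerivAt_id z).sub_const c).div_const (d - c)
    refine ((((hθ.const_sub 1).mul_const (q c)).add (hθ.mul_const (q d))).add
      ((((hasDerivAt_id z).sub_const c).mul ((hasDerivAt_id z).const_sub d)).const_mul ε))
      |>.congr_deriv ?_
    simp only [id]
    ring
  have hψ'' : ∀ z, HasDerivAt (fun z => (q d - q c) / (d - c) + ε * (c + d - 2 * z)) (-(2 * ε)) z :=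
    fun z => (((((hasDerivAt_id z).const_mul 2).const_sub (c + d)).const_mul ε).const_add _)
      |>.congr_deriv (by ring)
  have hcont : Continuous ψ := continuous_iff_continuousAt.2 fun z => (hψ' z).continuousAt
  obtain ⟨z, hz, hmax⟩ := isCompact_Icc.exists_isMaxOn ⟨s, hs⟩ (hq.sub hcont.continuousOn)
  have hle : q s - ψ s ≤ q z - ψ z := hmax hs
  suffices hz₀ : q z - ψ z ≤ 0 by
    simp only [hψ] at hle hz₀
    linarith
  rcases hz.1.eq_or_lt with rfl | hcz
  · simp [hψ, chordDefect_left]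
  rcases hz.2.eq_or_lt with rfl | hzd
  · simp [hψ, chordDefect_right hcd]
  exfalso
  obtain ⟨w, w', k, hw, hw', heq, hwle, hk⟩ := (hconv z ⟨hcz, hzd⟩).sub hψ' (hψ'' z)
  have hloc : IsLocalMax w z := by
    filter_upwards [hwle, Ioo_mem_nhds hcz hzd] with y hy hyI
    rw [heq]
    exact hy.trans (hmax (Ioo_subset_Icc_self hyI))
  linarith [second_deriv_nonpos_of_isLocalMax hw hw' hloc]

theorem chordDefect_le_of_touchedBelow (hcd : c < d) {q G G' g : ℝ → ℝ}
    (hq : ContinuousOn q (Icc c d)) (hG : ∀ s, HasDerivAt G (G' s) s)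
    (hG' : ∀ s, HasDerivAt G' (g s) s) (htouch : ∀ s ∈ Ioo c d, TouchedBelow q (g s) s) {s : ℝ}
    (hs : s ∈ Icc c d) : chordDefect c d q s ≤ chordDefect c d G s := by
  have hGc : Continuous G := continuous_iff_continuousAt.2 fun s => (hG s).continuousAt
  have := chordDefect_nonpos_of_touchedBelow (q := fun s => q s - G s) hcd
    (hq.sub hGc.continuousOn) (fun s hs => by simpa using (htouch s hs).sub hG (hG' s)) hs
  rw [chordDefect_sub] at this
  exact sub_nonpos.1 this

end Chord

section SecondPrimitive

variable {c : ℝ} {g h : ℝ → ℝ}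

theorem hasDerivAt_primitive (hg : Continuous g) (s : ℝ) :
    HasDerivAt (fun s => ∫ z in c..s, g z) (g s) s :=
  (hg.integral_hasStrictDerivAt c s).hasDerivAt

theorem continuous_primitive (hg : Continuous g) : Continuous fun s => ∫ z in c..s, g z :=
  intervalIntegral.continuous_primitive (fun a b => hg.intervalIntegrable a b) c

theorem hasDerivAt_secondPrimitive (hg : Continuous g) (s : ℝ) :
    HasDerivAt (secondPrimitive c g) (∫ z in c..s, g z) s :=
  hasDerivAt_primitive (continuous_primitive hg) s

theorem secondPrimitive_sub (hg : Continuous g) (hh : Continuous h) (s : ℝ) :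
    secondPrimitive c (fun z => g z - h z) s = secondPrimitive c g s - secondPrimitive c h s := by
  simp only [secondPrimitive]
  rw [← intervalIntegral.integral_sub ((continuous_primitive hg).intervalIntegrable _ _)
    ((continuous_primitive hh).intervalIntegrable _ _)]
  congr 1 with z
  exact intervalIntegral.integral_sub (hg.intervalIntegrable _ _) (hh.intervalIntegrable _ _)

theorem secondPrimitive_const_mul (b : ℝ) (s : ℝ) :
    secondPrimitive c (fun z => b * g z) s = b * secondPrimitive c g s := by
  simp only [secondPrimitive, intervalIntegral.integral_const_mul]

theorem abs_secondPrimitive_le {d B s : ℝ} (hB : ∀ z ∈ Icc c d, |g z| ≤ B) (hs : s ∈ Icc c d) :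
    |secondPrimitive c g s| ≤ B * (d - c) * (d - c) := by
  have hB₀ : 0 ≤ B := (abs_nonneg _).trans (hB s hs)
  have hinner : ∀ z ∈ uIoc c s, ‖∫ y in c..z, g y‖ ≤ B * (d - c) := by
    intro z hz
    rw [uIoc_of_le hs.1] at hz
    refine (intervalIntegral.norm_integral_le_of_norm_le_const fun y hy => ?_).trans
      (mul_le_mul_of_nonneg_left ?_ hB₀)
    · rw [uIoc_of_le hz.1.le] at hy
      exact hB y ⟨hy.1.le, hy.2.trans (hz.2.trans hs.2)⟩
    · rw [abs_of_pos (sub_pos.2 hz.1)]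
      linarith [hz.2, hs.2]
  refine (intervalIntegral.norm_integral_le_of_norm_le_const hinner).trans
    (mul_le_mul_of_nonneg_left ?_ (mul_nonneg hB₀ (by linarith [hs.1, hs.2])))
  rw [abs_of_nonneg (sub_nonneg.2 hs.1)]
  linarith [hs.2]

theorem continuous_secondPrimitive_param {g : ℝ → ℝ → ℝ} (hg : Continuous (uncurry g)) (s : ℝ) :
    Continuous fun t => secondPrimitive c (g t) s := by
  refine intervalIntegral.continuous_parametric_intervalIntegral_of_continuous' ?_ c s
  exact intervalIntegral.continuous_parametric_intervalIntegral_of_continuous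
    (f := fun (p : ℝ × ℝ) y => g p.1 y) (by fun_prop) continuous_snd

end SecondPrimitive

theorem integral_le_sub_of_le_backward_slope {E H : ℝ → ℝ} {t₁ t₂ K : ℝ} (ht : t₁ ≤ t₂)
    (hE : Continuous E) (hH : Continuous H)
    (hslope : ∀ t ∈ Icc t₁ t₂, ∀ h > 0, E t ≤ (H t - H (t - h)) / h + h * K) :
    ∫ t in t₁..t₂, E t ≤ H t₂ - H t₁ := by
  have hprim : Continuous fun τ => ∫ r in t₂..(t₂ - τ), E r :=
    (continuous_primitive hE).comp (by fun_prop)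
  -- Time is reversed, since the comparison theorem controls forward slopes from above.
  have hle := image_le_of_liminf_slope_right_le_deriv_boundary (f := fun τ => H (t₂ - τ)) (a := 0)
    (b := t₂ - t₁) (B := fun τ => H t₂ + ∫ r in t₂..(t₂ - τ), E r) (B' := fun τ => -E (t₂ - τ))
    (by fun_prop) (by simp) (continuous_const.add hprim).continuousOn (fun τ _ => ?deriv)
    (fun τ hτ r hr => ?slope) (x := t₂ - t₁) ⟨by linarith, le_rfl⟩
  case deriv =>
    refine ((((hasDerivAt_primitive hE (t₂ - τ)).comp τ
      ((hasDerivAt_id τ).const_sub t₂)).const_add (H t₂)).congr_deriv ?_).hasDerivWithinAt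
    ring
  case slope =>
    have hlim : Tendsto (fun z => -E (t₂ - τ) + (z - τ) * K) (𝓝[>] τ) (𝓝 (-E (t₂ - τ))) := by
      have : Continuous fun z => -E (t₂ - τ) + (z - τ) * K := by fun_prop
      simpa using (this.tendsto τ).mono_left nhdsWithin_le_nhds
    refine Eventually.frequently ?_
    filter_upwards [hlim.eventually (gt_mem_nhds hr), self_mem_nhdsWithin] with z hz (hτz : τ < z)
    have hback := hslope (t₂ - τ) ⟨by linarith [hτ.2], by linarith [hτ.1]⟩ (z - τ) (sub_pos.2 hτz)
    rw [show t₂ - τ - (z - τ) = t₂ - z by ring] at hback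
    have hflip : slope (fun τ => H (t₂ - τ)) τ z =
        -((H (t₂ - τ) - H (t₂ - z)) / (z - τ)) := by
      rw [slope_def_field]
      ring
    linarith
  simp only [sub_sub_cancel] at hle
  rw [intervalIntegral.integral_symm] at hle
  linarith

/-! ### The time-integrated equation for continuous solutions of `v_ss = ρ v_t` -/

/-- Pointwise solutions of `v_ss = ρ v_t` for `t ∈ I`, `s ∈ J`; no continuity of `v` or of its
derivatives is required. -/
def IsHeatSolOn (ρ : ℝ → ℝ) (v : ℝ → ℝ → ℝ) (I J : Set ℝ) : Prop :=
  ∃ vt vs : ℝ → ℝ → ℝ, ∀ t ∈ I, ∀ s ∈ J, HasDerivAt (fun τ => v τ s) (vt t s) t ∧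
    HasDerivAt (v t) (vs t s) s ∧ HasDerivAt (vs t) (ρ s * vt t s) s

/-- The sup-convolution of `V` in time over `[α, β]`. -/
noncomputable def supConv (α β lam : ℝ) (V : ℝ → ℝ → ℝ) (t s : ℝ) : ℝ :=
  sSup ((fun τ => V τ s - lam * (t - τ) ^ 2) '' Icc α β)

namespace IsHeatSolOn

variable {ρ : ℝ → ℝ} {v : ℝ → ℝ → ℝ} {I J : Set ℝ}

theorem neg (h : IsHeatSolOn ρ v I J) : IsHeatSolOn ρ (fun t s => -v t s) I J := by
  obtain ⟨vt, vs, h⟩ := h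
  refine ⟨fun t s => -vt t s, fun t s => -vs t s, fun t ht s hs => ?_⟩
  obtain ⟨htime, hspace, hsecond⟩ := h t ht s hs
  exact ⟨htime.neg, hspace.neg, hsecond.neg.congr_deriv (mul_neg _ _).symm⟩

theorem mono {I' J' : Set ℝ} (h : IsHeatSolOn ρ v I J) (hI : I' ⊆ I) (hJ : J' ⊆ J) :
    IsHeatSolOn ρ v I' J' := by
  obtain ⟨vt, vs, h⟩ := h
  exact ⟨vt, vs, fun t ht s hs => h t (hI ht) s (hJ hs)⟩

theorem congr {V : ℝ → ℝ → ℝ} (h : IsHeatSolOn ρ v I J) (hI : IsOpen I) (hJ : IsOpen J)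
    (heq : ∀ t ∈ I, ∀ s ∈ J, V t s = v t s) : IsHeatSolOn ρ V I J := by
  obtain ⟨vt, vs, h⟩ := h
  refine ⟨vt, vs, fun t ht s hs => ?_⟩
  obtain ⟨htime, hspace, hsecond⟩ := h t ht s hs
  refine ⟨htime.congr_of_eventuallyEq ?_, hspace.congr_of_eventuallyEq ?_, hsecond⟩
  · filter_upwards [hI.mem_nhds ht] with τ hτ using heq τ hτ s hs
  · filter_upwards [hJ.mem_nhds hs] with z hz using heq t ht z hz

end IsHeatSolOn

section SupConv

variable {V : ℝ → ℝ → ℝ} {α β lam : ℝ}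

theorem continuous_supConv (hV : Continuous (uncurry V)) :
    Continuous (uncurry (supConv α β lam V)) := by
  refine IsCompact.continuous_sSup (f := fun (p : ℝ × ℝ) τ => V τ p.2 - lam * (p.1 - τ) ^ 2)
    isCompact_Icc ?_
  fun_prop

theorem le_supConv (hV : Continuous (uncurry V)) (t s : ℝ) {τ : ℝ} (hτ : τ ∈ Icc α β) :
    V τ s - lam * (t - τ) ^ 2 ≤ supConv α β lam V t s := by
  have hcont : Continuous fun τ => V τ s - lam * (t - τ) ^ 2 := by fun_prop
  exact le_csSup (isCompact_Icc.image hcont).bddAbove ⟨τ, hτ, rfl⟩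

theorem self_le_supConv (hV : Continuous (uncurry V)) {t : ℝ} (ht : t ∈ Icc α β) (s : ℝ) :
    V t s ≤ supConv α β lam V t s := by
  simpa using le_supConv (lam := lam) hV t s ht

theorem exists_supConv_eq (hV : Continuous (uncurry V)) (hαβ : α ≤ β) (t s : ℝ) :
    ∃ τ ∈ Icc α β, supConv α β lam V t s = V τ s - lam * (t - τ) ^ 2 := by
  have hcont : Continuous fun τ => V τ s - lam * (t - τ) ^ 2 := by fun_prop
  exact isCompact_Icc.exists_sSup_image_eq (nonempty_Icc.2 hαβ) hcont.continuousOn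

theorem exists_forall_abs_sub_le_of_abs_sub_le (hV : Continuous (uncurry V)) (α β c d : ℝ) {ε : ℝ}
    (hε : 0 < ε) : ∃ δ > 0, ∀ t ∈ Icc α β, ∀ τ ∈ Icc α β, ∀ s ∈ Icc c d,
      |t - τ| ≤ δ → |V t s - V τ s| ≤ ε := by
  have hunif := (isCompact_Icc.prod isCompact_Icc : IsCompact (Icc α β ×ˢ Icc c d))
    |>.uniformContinuousOn_of_continuous hV.continuousOn
  obtain ⟨δ, hδ, hmod⟩ := Metric.uniformContinuousOn_iff_le.1 hunif ε hε
  refine ⟨δ, hδ, fun t ht τ hτ s hs hd => ?_⟩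
  simpa [Real.dist_eq] using hmod (t, s) ⟨ht, hs⟩ (τ, s) ⟨hτ, hs⟩
    (by simpa [Prod.dist_eq, Real.dist_eq] using hd)

theorem exists_forall_abs_le (hV : Continuous (uncurry V)) (α β c d : ℝ) :
    ∃ M, ∀ t ∈ Icc α β, ∀ s ∈ Icc c d, |V t s| ≤ M := by
  obtain ⟨M, hM⟩ := (isCompact_Icc.prod isCompact_Icc :
    IsCompact (Icc α β ×ˢ Icc c d)).exists_bound_of_continuousOn hV.continuousOn
  exact ⟨M, fun t ht s hs => hM (t, s) ⟨ht, hs⟩⟩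

theorem exists_supConv_approx (hV : Continuous (uncurry V)) {t₁ t₂ c d ε : ℝ} (h₁ : α < t₁)
    (h₂ : t₂ < β) (hαβ : α ≤ β) (hε : 0 < ε) :
    ∃ lam, ∀ t ∈ Icc t₁ t₂, ∀ s ∈ Icc c d, supConv α β lam V t s ≤ V t s + ε ∧
      ∀ τ ∈ Icc α β, supConv α β lam V t s = V τ s - lam * (t - τ) ^ 2 → τ ∈ Ioo α β := by
  obtain ⟨M, hM⟩ := exists_forall_abs_le hV α β c d
  obtain ⟨δ, hδ, hmod⟩ := exists_forall_abs_sub_le_of_abs_sub_le hV α β c d hε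
  obtain ⟨m, hm, hmδ⟩ : ∃ m > 0, m ≤ min δ (min (t₁ - α) (β - t₂)) :=
    ⟨_, lt_min hδ (lt_min (sub_pos.2 h₁) (sub_pos.2 h₂)), le_rfl⟩
  simp only [le_min_iff] at hmδ
  set lam := (2 * |M| + 1) / m ^ 2
  have hlam₀ : 0 < lam := by positivity
  have hnear : ∀ t ∈ Icc t₁ t₂, ∀ s ∈ Icc c d, ∀ τ ∈ Icc α β,
      supConv α β lam V t s = V τ s - lam * (t - τ) ^ 2 → |t - τ| < m := by
    intro t ht s hs τ hτ heq
    have ht' : t ∈ Icc α β := ⟨h₁.le.trans ht.1, ht.2.trans h₂.le⟩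
    have hself := self_le_supConv (lam := lam) hV ht' s
    have hlm : lam * m ^ 2 = 2 * |M| + 1 := div_mul_cancel₀ _ (by positivity)
    have hbt := (abs_le.1 ((hM t ht' s hs).trans (le_abs_self M))).1
    have hbτ := (abs_le.1 ((hM τ hτ s hs).trans (le_abs_self M))).2
    exact abs_lt_of_sq_lt_sq (lt_of_mul_lt_mul_left (by linarith) hlam₀.le) hm.le
  refine ⟨lam, fun t ht s hs => ⟨?_, fun τ hτ heq => ?_⟩⟩
  · obtain ⟨τ, hτ, heq⟩ := exists_supConv_eq (lam := lam) hV hαβ t s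
    have hclose := hmod t ⟨h₁.le.trans ht.1, ht.2.trans h₂.le⟩ τ hτ s hs
      ((hnear t ht s hs τ hτ heq).le.trans hmδ.1)
    rw [heq]
    linarith [(abs_le.1 hclose).1, mul_nonneg hlam₀.le (sq_nonneg (t - τ))]
  · have hlt := abs_lt.1 (hnear t ht s hs τ hτ heq)
    exact ⟨by linarith [ht.1], by linarith [ht.2]⟩

-- The maximising time `τ` of the supremum at `(t, s)` gives `v_t(τ, s) = 2 lam (τ - t)`, and the
-- same `τ` competes in the supremum at `(t - h, s)`.
theorem IsHeatSolOn.touchedBelow_supConv {ρ : ℝ → ℝ} {J : Set ℝ} (hJ : IsOpen J)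
    (hV : Continuous (uncurry V)) (hsol : IsHeatSolOn ρ V (Ioo α β) J) {t τ s h : ℝ}
    (hs : s ∈ J) (hτ : τ ∈ Ioo α β) (heq : supConv α β lam V t s = V τ s - lam * (t - τ) ^ 2)
    (hρ : 0 ≤ ρ s) (hh : 0 < h) :
    TouchedBelow (supConv α β lam V t) (h⁻¹ * ((ρ s * supConv α β lam V t s -
      ρ s * supConv α β lam V (t - h) s) - lam * h ^ 2 * ρ s)) s := by
  obtain ⟨vt, vs, hsol⟩ := hsol
  obtain ⟨htime, -, hsecond⟩ := hsol τ hτ s hs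
  have hcrit : vt τ s = 2 * lam * (τ - t) := by
    have hmax : IsLocalMax (fun r => V r s - lam * (t - r) ^ 2) τ := by
      filter_upwards [Ioo_mem_nhds hτ.1 hτ.2] with r hr
      exact heq ▸ le_supConv hV t s (Ioo_subset_Icc_self hr)
    have hpar := (((hasDerivAt_id τ).const_sub t).pow 2).const_mul lam
    have hzero := hmax.hasDerivAt_eq_zero (htime.sub hpar)
    simp only [id, Nat.cast_ofNat, Nat.add_one_sub_one, pow_one] at hzero
    linarith
  refine ⟨fun z => V τ z - lam * (t - τ) ^ 2, vs τ, ρ s * vt τ s, ?_, hsecond, heq.symm, ?_, ?_⟩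
  · filter_upwards [hJ.mem_nhds hs] with z hz using (hsol τ hτ z hz).2.1.sub_const _
  · exact .of_forall fun z => le_supConv hV t z (Ioo_subset_Icc_self hτ)
  · have hcomp := le_supConv (lam := lam) hV (t - h) s (Ioo_subset_Icc_self hτ)
    rw [inv_mul_le_iff₀ hh, hcrit, heq]
    nlinarith

theorem IsHeatSolOn.integral_chordDefect_supConv_le {ρ : ℝ → ℝ} {c d t₁ t₂ s : ℝ} (hcd : c < d)
    (hV : Continuous (uncurry V)) (hρ : Continuous ρ) (hρ₀ : ∀ s, 0 ≤ ρ s)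
    (hsol : IsHeatSolOn ρ V (Ioo α β) (Ioo c d)) (hαβ : α ≤ β) (ht : t₁ ≤ t₂)
    (hmax : ∀ t ∈ Icc t₁ t₂, ∀ s ∈ Icc c d, ∀ τ ∈ Icc α β,
      supConv α β lam V t s = V τ s - lam * (t - τ) ^ 2 → τ ∈ Ioo α β) (hs : s ∈ Icc c d) :
    ∫ t in t₁..t₂, chordDefect c d (supConv α β lam V t) s ≤
      chordDefect c d (secondPrimitive c fun z => ρ z * supConv α β lam V t₂ z) s -
        chordDefect c d (secondPrimitive c fun z => ρ z * supConv α β lam V t₁ z) s := by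
  have hconv := continuous_supConv (α := α) (β := β) (lam := lam) hV
  set p := supConv α β lam V
  have hρp : ∀ t, Continuous fun z => ρ z * p t z := fun t => by fun_prop
  refine integral_le_sub_of_le_backward_slope
    (H := fun t => chordDefect c d (secondPrimitive c fun z => ρ z * p t z) s)
    (K := -(lam * chordDefect c d (secondPrimitive c ρ) s)) ht ?_ ?_ fun t ht h hh => ?_
  · unfold chordDefect
    fun_prop
  · have hpot := fun s => continuous_secondPrimitive_param (c := c) (g := fun t z => ρ z * p t z)
      (by fun_prop) s
    exact (hpot s).sub (((hpot c).const_mul _).add ((hpot d).const_mul _))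
  · have hg : Continuous fun z =>
        h⁻¹ * ((ρ z * p t z - ρ z * p (t - h) z) - lam * h ^ 2 * ρ z) := by fun_prop
    have hle := chordDefect_le_of_touchedBelow hcd (q := p t) (by fun_prop)
      (hasDerivAt_secondPrimitive (c := c) hg) (hasDerivAt_primitive hg) (fun z hz => ?_) hs
    · have hdiff : Continuous fun z => ρ z * p t z - ρ z * p (t - h) z := by fun_prop
      refine hle.trans_eq ?_
      simp only [chordDefect, secondPrimitive_const_mul,
        secondPrimitive_sub hdiff (hρ.const_mul (lam * h ^ 2)),
        secondPrimitive_sub (hρp t) (hρp (t - h))]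
      field_simp
      ring
    · obtain ⟨τ, hτ, heq⟩ := exists_supConv_eq (lam := lam) hV hαβ t z
      exact hsol.touchedBelow_supConv isOpen_Ioo hV hz
        (hmax t ht z (Ioo_subset_Icc_self hz) τ hτ heq) heq (hρ₀ z) hh

theorem abs_chordDefect_secondPrimitive_sub_le {g h : ℝ → ℝ} {c d B s : ℝ} (hg : Continuous g)
    (hh : Continuous h) (hB : ∀ z ∈ Icc c d, |g z - h z| ≤ B) (hs : s ∈ Icc c d) :
    |chordDefect c d (secondPrimitive c g) s - chordDefect c d (secondPrimitive c h) s| ≤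
      2 * (B * (d - c) * (d - c)) := by
  rw [← chordDefect_sub, ← funext (secondPrimitive_sub hg hh)]
  exact abs_chordDefect_le (fun z hz => abs_secondPrimitive_le hB hz) hs

theorem IsHeatSolOn.integral_chordDefect_le {ρ : ℝ → ℝ} {c d t₁ t₂ s : ℝ} (hcd : c < d)
    (h₁ : α < t₁) (ht : t₁ ≤ t₂) (h₂ : t₂ < β) (hV : Continuous (uncurry V)) (hρ : Continuous ρ)
    (hρ₀ : ∀ s, 0 ≤ ρ s) (hsol : IsHeatSolOn ρ V (Ioo α β) (Ioo c d)) (hs : s ∈ Icc c d) :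
    ∫ t in t₁..t₂, chordDefect c d (V t) s ≤
      chordDefect c d (secondPrimitive c fun z => ρ z * V t₂ z) s -
        chordDefect c d (secondPrimitive c fun z => ρ z * V t₁ z) s := by
  have hαβ : α ≤ β := by linarith
  obtain ⟨N, hN⟩ := isCompact_Icc.exists_bound_of_continuousOn (s := Icc c d) hρ.continuousOn
  refine le_of_forall_pos_le_add_mul
    (K := 2 * (t₂ - t₁) + 2 * (2 * (N * (d - c) * (d - c)))) fun ε hε => ?_
  obtain ⟨lam, happrox⟩ := exists_supConv_approx (c := c) (d := d) hV h₁ h₂ hαβ hε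
  have hmain := hsol.integral_chordDefect_supConv_le hcd hV hρ hρ₀ hαβ ht
    (fun t ht s hs => (happrox t ht s hs).2) hs
  have hclose : ∀ t ∈ Icc t₁ t₂, ∀ z ∈ Icc c d, |supConv α β lam V t z - V t z| ≤ ε := by
    intro t ht z hz
    have hself := self_le_supConv (lam := lam) hV ⟨h₁.le.trans ht.1, ht.2.trans h₂.le⟩ z
    rw [abs_of_nonneg (sub_nonneg.2 hself)]
    linarith [(happrox t ht z hz).1]
  have hconv := continuous_supConv (α := α) (β := β) (lam := lam) hV
  set p := supConv α β lam V
  have hleft : ∫ t in t₁..t₂, chordDefect c d (V t) s ≤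
      ∫ t in t₁..t₂, (chordDefect c d (p t) s + 2 * ε) := by
    refine intervalIntegral.integral_mono_on ht ?_ ?_ fun t ht => ?_
    · exact Continuous.intervalIntegrable (by unfold chordDefect; fun_prop) _ _
    · exact Continuous.intervalIntegrable (by unfold chordDefect; fun_prop) _ _
    · have habs := abs_le.1 (abs_chordDefect_le (hclose t ht) hs)
      rw [chordDefect_sub] at habs
      linarith [habs.1]
  rw [intervalIntegral.integral_add (Continuous.intervalIntegrable
    (by unfold chordDefect; fun_prop) _ _) (by simp), intervalIntegral.integral_const,
    smul_eq_mul] at hleft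
  have hright : ∀ t ∈ Icc t₁ t₂, |chordDefect c d (secondPrimitive c fun z => ρ z * p t z) s -
      chordDefect c d (secondPrimitive c fun z => ρ z * V t z) s| ≤
      2 * (N * ε * (d - c) * (d - c)) := by
    intro t ht
    refine abs_chordDefect_secondPrimitive_sub_le (by fun_prop) (by fun_prop) (fun z hz => ?_) hs
    rw [← mul_sub, abs_mul]
    exact mul_le_mul (hN z hz) (hclose t ht z hz) (abs_nonneg _) ((norm_nonneg _).trans (hN z hz))
  have h₁' := abs_le.1 (hright t₁ (left_mem_Icc.2 ht))
  have h₂' := abs_le.1 (hright t₂ (right_mem_Icc.2 ht))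
  linarith [h₁'.1, h₂'.2]

end SupConv

section IntegratedEquation

variable {ρ : ℝ → ℝ} {V : ℝ → ℝ → ℝ} {α β c d t₁ t₂ : ℝ}

theorem chordDefect_integral (hV : Continuous (uncurry V)) (t₁ t₂ s : ℝ) :
    chordDefect c d (fun z => ∫ t in t₁..t₂, V t z) s =
      ∫ t in t₁..t₂, chordDefect c d (V t) s := by
  have hint : ∀ z, IntervalIntegrable (fun t => V t z) volume t₁ t₂ :=
    fun z => Continuous.intervalIntegrable (by fun_prop) _ _
  simp only [chordDefect]
  rw [intervalIntegral.integral_sub (hint s) (((hint c).const_mul _).add ((hint d).const_mul _)),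
    intervalIntegral.integral_add ((hint c).const_mul _) ((hint d).const_mul _),
    intervalIntegral.integral_const_mul, intervalIntegral.integral_const_mul]

theorem chordDefect_neg (q : ℝ → ℝ) (s : ℝ) :
    chordDefect c d (fun s => -q s) s = -chordDefect c d q s := by
  simp only [chordDefect]
  ring

theorem IsHeatSolOn.chordDefect_integral_eq (hcd : c < d) (h₁ : α < t₁) (ht : t₁ ≤ t₂)
    (h₂ : t₂ < β) (hV : Continuous (uncurry V)) (hρ : Continuous ρ) (hρ₀ : ∀ s, 0 ≤ ρ s)
    (hsol : IsHeatSolOn ρ V (Ioo α β) (Ioo c d)) {s : ℝ} (hs : s ∈ Icc c d) :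
    chordDefect c d (fun z => ∫ t in t₁..t₂, V t z) s =
      chordDefect c d (secondPrimitive c fun z => ρ z * (V t₂ z - V t₁ z)) s := by
  have hneg := hsol.neg.integral_chordDefect_le hcd h₁ ht h₂ (by fun_prop) hρ hρ₀ hs
  have hpot : ∀ t, secondPrimitive c (fun z => ρ z * -V t z) =
      fun s => -secondPrimitive c (fun z => ρ z * V t z) s := by
    intro t
    ext s
    simp only [secondPrimitive, mul_neg, intervalIntegral.integral_neg]
  simp only [hpot, chordDefect_neg, intervalIntegral.integral_neg] at hneg
  have hsub : (secondPrimitive c fun z => ρ z * (V t₂ z - V t₁ z)) = fun s =>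
      secondPrimitive c (fun z => ρ z * V t₂ z) s -
        secondPrimitive c (fun z => ρ z * V t₁ z) s := by
    ext s
    simp only [mul_sub]
    exact secondPrimitive_sub (by fun_prop) (by fun_prop) s
  rw [hsub, chordDefect_sub, chordDefect_integral hV]
  refine le_antisymm (hsol.integral_chordDefect_le hcd h₁ ht h₂ hV hρ hρ₀ hs) ?_
  linarith

-- Two functions with the same chord defect differ by an affine function.
theorem IsHeatSolOn.exists_hasDerivAt_integral_of_continuous (hcd : c < d) (h₁ : α < t₁)
    (ht : t₁ ≤ t₂) (h₂ : t₂ < β) (hV : Continuous (uncurry V)) (hρ : Continuous ρ)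
    (hρ₀ : ∀ s, 0 ≤ ρ s) (hsol : IsHeatSolOn ρ V (Ioo α β) (Ioo c d)) :
    ∃ U' : ℝ → ℝ, ∀ s ∈ Ioo c d, HasDerivAt (fun z => ∫ t in t₁..t₂, V t z) (U' s) s ∧
      HasDerivAt U' (ρ s * (V t₂ s - V t₁ s)) s := by
  have hg : Continuous fun z => ρ z * (V t₂ z - V t₁ z) := by fun_prop
  set U : ℝ → ℝ := fun z => ∫ t in t₁..t₂, V t z
  set G := secondPrimitive c fun z => ρ z * (V t₂ z - V t₁ z)
  set m := (U d - G d - (U c - G c)) / (d - c) with hm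
  have haff : ∀ z ∈ Icc c d, U z = G z + (U c - G c + (z - c) * m) := by
    intro z hz
    have heq := hsol.chordDefect_integral_eq hcd h₁ ht h₂ hV hρ hρ₀ hz
    simp only [chordDefect] at heq
    rw [hm]
    linear_combination heq
  refine ⟨fun z => (∫ y in c..z, ρ y * (V t₂ y - V t₁ y)) + m, fun s hs =>
    ⟨?_, (hasDerivAt_primitive hg s).add_const m⟩⟩
  have hlin := (((hasDerivAt_id s).sub_const c).mul_const m).const_add (U c - G c)
  rw [one_mul] at hlin
  refine ((hasDerivAt_secondPrimitive hg s).add hlin).congr_of_eventuallyEq ?_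
  filter_upwards [Icc_mem_nhds hs.1 hs.2] with z hz using haff z hz

theorem exists_continuous_eq_on_Icc_prod {v : ℝ → ℝ → ℝ} (hαβ : α ≤ β) (hcd : c ≤ d)
    (hv : ContinuousOn (uncurry v) (Icc α β ×ˢ Icc c d)) :
    ∃ V : ℝ → ℝ → ℝ, Continuous (uncurry V) ∧ ∀ t ∈ Icc α β, ∀ s ∈ Icc c d, V t s = v t s := by
  refine ⟨fun t s => v (projIcc α β hαβ t) (projIcc c d hcd s), ?_, fun t ht s hs => ?_⟩
  · exact hv.comp_continuous
      (f := fun p : ℝ × ℝ => ((projIcc α β hαβ p.1 : ℝ), (projIcc c d hcd p.2 : ℝ)))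
      (by fun_prop) fun p => ⟨Subtype.coe_prop _, Subtype.coe_prop _⟩
  · simp only [projIcc_of_mem hαβ ht, projIcc_of_mem hcd hs]

theorem IsHeatSolOn.exists_hasDerivAt_integral {v : ℝ → ℝ → ℝ} (h₁ : α < t₁) (ht : t₁ ≤ t₂)
    (h₂ : t₂ < β) (hv : ContinuousOn (uncurry v) (Ioo α β ×ˢ Ioo c d)) (hρ : Continuous ρ)
    (hρ₀ : ∀ s, 0 ≤ ρ s) (hsol : IsHeatSolOn ρ v (Ioo α β) (Ioo c d)) :
    ∃ U' : ℝ → ℝ, ∀ s ∈ Ioo c d, HasDerivAt (fun z => ∫ t in t₁..t₂, v t z) (U' s) s ∧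
      HasDerivAt U' (ρ s * (v t₂ s - v t₁ s)) s := by
  set U : ℝ → ℝ := fun z => ∫ t in t₁..t₂, v t z
  suffices hlocal : ∀ s ∈ Ioo c d, ∃ U' : ℝ → ℝ, (∀ᶠ z in 𝓝 s, HasDerivAt U (U' z) z) ∧
      HasDerivAt U' (ρ s * (v t₂ s - v t₁ s)) s by
    refine ⟨deriv U, fun s hs => ?_⟩
    obtain ⟨U', hU, hU'⟩ := hlocal s hs
    refine ⟨hU.self_of_nhds.differentiableAt.hasDerivAt, hU'.congr_of_eventuallyEq ?_⟩
    filter_upwards [hU] with z hz using hz.deriv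
  intro s hs
  obtain ⟨c', hc, hc'⟩ := exists_between hs.1
  obtain ⟨d', hd', hd⟩ := exists_between hs.2
  obtain ⟨α', hα, hα'⟩ := exists_between h₁
  obtain ⟨β', hβ', hβ⟩ := exists_between h₂
  have hI : Icc α' β' ⊆ Ioo α β := Icc_subset_Ioo hα hβ
  have hJ : Icc c' d' ⊆ Ioo c d := Icc_subset_Ioo hc hd
  obtain ⟨V, hV, heq⟩ := exists_continuous_eq_on_Icc_prod (by linarith) (by linarith)
    (hv.mono (prod_mono hI hJ))
  have hsol' : IsHeatSolOn ρ V (Ioo α' β') (Ioo c' d') :=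
    (hsol.mono (Ioo_subset_Icc_self.trans hI) (Ioo_subset_Icc_self.trans hJ)).congr isOpen_Ioo
      isOpen_Ioo fun t ht s hs => heq t (Ioo_subset_Icc_self ht) s (Ioo_subset_Icc_self hs)
  obtain ⟨U', hU'⟩ := hsol'.exists_hasDerivAt_integral_of_continuous (hc'.trans hd') hα' ht hβ' hV
    hρ hρ₀
  have hint : ∀ z ∈ Ioo c' d', U z = ∫ t in t₁..t₂, V t z := by
    intro z hz
    refine intervalIntegral.integral_congr fun t hmem => ?_
    rw [uIcc_of_le ht] at hmem
    exact (heq t (Icc_subset_Icc hα'.le hβ'.le hmem) z (Ioo_subset_Icc_self hz)).symm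
  refine ⟨U', ?_, ?_⟩
  · filter_upwards [Ioo_mem_nhds hc' hd'] with z hz
    refine (hU' z hz).1.congr_of_eventuallyEq ?_
    filter_upwards [Ioo_mem_nhds hz.1 hz.2] with y hy using hint y hy
  · rw [← heq t₂ ⟨by linarith, hβ'.le⟩ s ⟨hc'.le, hd'.le⟩,
      ← heq t₁ ⟨hα'.le, by linarith⟩ s ⟨hc'.le, hd'.le⟩]
    exact (hU' s ⟨hc', hd'⟩).2

end IntegratedEquation

/-! ### Steklov averages -/

/-- The Steklov average of `G` over the time window `[t, t + h]`. -/
noncomputable def steklovAverage (h : ℝ) (G : ℝ → ℝ → ℝ) (t n : ℝ) : ℝ :=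
  h⁻¹ * ∫ τ in t..t + h, G τ n

theorem hasDerivAt_integral_window {f : ℝ → ℝ} {I : Set ℝ} {t h : ℝ} (hI : IsOpen I)
    (hord : OrdConnected I) (hf : ContinuousOn f I) (ht : t ∈ I) (hth : t + h ∈ I) :
    HasDerivAt (fun s => ∫ τ in s..s + h, f τ) (f (t + h) - f t) t := by
  have hint : ∀ {a b}, a ∈ I → b ∈ I → IntervalIntegrable f volume a b := fun ha hb =>
    (hf.mono (hord.uIcc_subset ha hb)).intervalIntegrable
  have hprim : ∀ s ∈ I, HasDerivAt (fun r => ∫ τ in t..r, f τ) (f s) s := fun s hs =>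
    intervalIntegral.integral_hasDerivAt_right (hint ht hs)
      (hf.stronglyMeasurableAtFilter hI s hs) (hf.continuousAt (hI.mem_nhds hs))
  refine (((hprim (t + h) hth).comp_add_const t h).sub (hprim t ht)).congr_of_eventuallyEq ?_
  have hshift : ∀ᶠ s in 𝓝 t, s + h ∈ I :=
    (show ContinuousAt (fun s => s + h) t by fun_prop).eventually (hI.mem_nhds hth)
  filter_upwards [hI.mem_nhds ht, hshift] with s hs hsh
  exact (intervalIntegral.integral_interval_sub_left (hint ht hsh) (hint ht hs)).symm

theorem hasDerivAt_integral_of_hasDerivAt {G Gt : ℝ → ℝ → ℝ} (hG : ∀ t, Continuous (G t))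
    (hGt : Continuous (uncurry Gt)) (hderiv : ∀ t z, HasDerivAt (fun τ => G τ z) (Gt t z) t)
    (a b t : ℝ) : HasDerivAt (fun τ => ∫ z in a..b, G τ z) (∫ z in a..b, Gt t z) t := by
  obtain ⟨M, hM⟩ := exists_forall_abs_le hGt (t - 1) (t + 1) (min a b) (max a b)
  refine (intervalIntegral.hasDerivAt_integral_of_dominated_loc_of_deriv_le
    (bound := fun _ => M) (s := Icc (t - 1) (t + 1))
    (Icc_mem_nhds (by linarith) (by linarith)) ?_ ?_ ?_ ?_ (by simp) ?_).2
  · exact Eventually.of_forall fun τ => (hG τ).aestronglyMeasurable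
  · exact (hG t).intervalIntegrable _ _
  · exact Continuous.aestronglyMeasurable (by fun_prop)
  · exact Eventually.of_forall fun z hz τ hτ => hM τ hτ z ⟨hz.1.le, hz.2⟩
  · exact Eventually.of_forall fun z _ τ _ => hderiv τ z

section Steklov

variable {G : ℝ → ℝ → ℝ} {h t n k : ℝ}

theorem steklovAverage_const_add (G : ℝ → ℝ → ℝ) (h t n : ℝ) :
    steklovAverage h G t n = h⁻¹ * ∫ τ in (0 : ℝ)..h, G (t + τ) n := by
  rw [steklovAverage, intervalIntegral.integral_comp_add_left (fun τ => G τ n), add_zero]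

theorem steklovAverage_le (hh : 0 < h) (hG : ContinuousOn (fun τ => G τ n) (Icc t (t + h)))
    (hk : ∀ τ ∈ Icc t (t + h), G τ n ≤ k) : steklovAverage h G t n ≤ k := by
  have hle : t ≤ t + h := by linarith
  rw [steklovAverage, inv_mul_le_iff₀ hh]
  calc ∫ τ in t..t + h, G τ n ≤ ∫ _ in t..t + h, k :=
        intervalIntegral.integral_mono_on hle (hG.intervalIntegrable_of_Icc hle) (by simp) hk
    _ = h * k := by simp

theorem steklovAverage_neg (h : ℝ) (G : ℝ → ℝ → ℝ) (t n : ℝ) :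
    steklovAverage h (fun t n => -G t n) t n = -steklovAverage h G t n := by
  simp only [steklovAverage, intervalIntegral.integral_neg, mul_neg]

theorem le_steklovAverage (hh : 0 < h) (hG : ContinuousOn (fun τ => G τ n) (Icc t (t + h)))
    (hk : ∀ τ ∈ Icc t (t + h), k ≤ G τ n) : k ≤ steklovAverage h G t n := by
  have := steklovAverage_le (G := fun t n => -G t n) (k := -k) hh hG.neg
    fun τ hτ => neg_le_neg (hk τ hτ)
  rwa [steklovAverage_neg, neg_le_neg_iff] at this

theorem steklovAverage_lt (hh : 0 < h) (hG : ContinuousOn (fun τ => G τ n) (Icc t (t + h)))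
    (hk : ∀ τ ∈ Icc t (t + h), G τ n < k) : steklovAverage h G t n < k := by
  obtain ⟨τ, hτ, hmax⟩ := isCompact_Icc.exists_isMaxOn
    (nonempty_Icc.2 (show t ≤ t + h by linarith)) hG
  exact (steklovAverage_le hh hG fun σ hσ => hmax hσ).trans_lt (hk τ hτ)

theorem abs_steklovAverage_sub_le (hh : 0 < h) (hG : ContinuousOn (fun τ => G τ n) (Icc t (t + h)))
    {x : ℝ} (hk : ∀ τ ∈ Icc t (t + h), |G τ n - x| ≤ k) : |steklovAverage h G t n - x| ≤ k := by
  have hle := steklovAverage_le (k := x + k) hh hG fun τ hτ => by linarith [abs_le.1 (hk τ hτ)]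
  have hge := le_steklovAverage (k := x - k) hh hG fun τ hτ => by linarith [abs_le.1 (hk τ hτ)]
  exact abs_le.2 ⟨by linarith, by linarith⟩

theorem continuous_steklovAverage (hG : Continuous (uncurry G)) (h : ℝ) :
    Continuous (uncurry (steklovAverage h G)) := by
  have hint : Continuous fun p : ℝ × ℝ => ∫ τ in (0 : ℝ)..h, G (p.1 + τ) p.2 :=
    intervalIntegral.continuous_parametric_intervalIntegral_of_continuous'
      (f := fun (p : ℝ × ℝ) τ => G (p.1 + τ) p.2) (by fun_prop) 0 h
  exact (continuous_const.mul hint).congr fun p => (steklovAverage_const_add G h p.1 p.2).symm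

theorem hasDerivAt_steklovAverage {I : Set ℝ} (hI : IsOpen I) (hord : OrdConnected I)
    (hG : ContinuousOn (fun τ => G τ n) I) (ht : t ∈ I) (hth : t + h ∈ I) :
    HasDerivAt (fun τ => steklovAverage h G τ n) (h⁻¹ * (G (t + h) n - G t n)) t :=
  (hasDerivAt_integral_window hI hord hG ht hth).const_mul h⁻¹

end Steklov

/-! ### A maximum principle for masses of subintervals -/

/-- Every subinterval of `[c, d]` carries `ρ f`-mass at most `m`. -/
def SubintervalMassLE (ρ f : ℝ → ℝ) (c d m : ℝ) : Prop :=
  ∀ s₁ s₂, c ≤ s₁ → s₁ ≤ s₂ → s₂ ≤ d → ∫ z in s₁..s₂, ρ z * f z ≤ m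

section SubintervalMass

variable {ρ f g : ℝ → ℝ} {c d m : ℝ}

theorem SubintervalMassLE.of_sub_le {η : ℝ} (hf : SubintervalMassLE ρ f c d m)
    (hρ : Continuous ρ) (hρ₀ : ∀ s, 0 ≤ ρ s) (hfc : ContinuousOn f (Icc c d))
    (hgc : ContinuousOn g (Icc c d)) (hη : 0 ≤ η) (hgf : ∀ s ∈ Icc c d, g s - f s ≤ η) :
    SubintervalMassLE ρ g c d (m + η * ∫ z in c..d, ρ z) := by
  intro s₁ s₂ h₁ h₁₂ h₂
  have hsub : Icc s₁ s₂ ⊆ Icc c d := Icc_subset_Icc h₁ h₂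
  have hint : ∀ {q : ℝ → ℝ}, ContinuousOn q (Icc c d) →
      IntervalIntegrable (fun z => ρ z * q z) volume s₁ s₂ := fun hq =>
    (hρ.continuousOn.mul (hq.mono hsub)).intervalIntegrable_of_Icc h₁₂
  have hdiff : ∫ z in s₁..s₂, ρ z * (g z - f z) ≤ η * ∫ z in c..d, ρ z :=
    calc ∫ z in s₁..s₂, ρ z * (g z - f z) ≤ ∫ z in s₁..s₂, η * ρ z := by
          refine intervalIntegral.integral_mono_on h₁₂ (hint (hgc.sub hfc))
            ((hρ.const_mul η).intervalIntegrable _ _) fun z hz => ?_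
          rw [mul_comm η]
          exact mul_le_mul_of_nonneg_left (hgf z (hsub hz)) (hρ₀ z)
      _ = η * ∫ z in s₁..s₂, ρ z := intervalIntegral.integral_const_mul _ _
      _ ≤ η * ∫ z in c..d, ρ z := mul_le_mul_of_nonneg_left
          (intervalIntegral.integral_mono_interval h₁ h₁₂ h₂ (Eventually.of_forall hρ₀)
            (hρ.intervalIntegrable _ _)) hη
  have hsplit : ∫ z in s₁..s₂, ρ z * (g z - f z) =
      (∫ z in s₁..s₂, ρ z * g z) - ∫ z in s₁..s₂, ρ z * f z := by
    rw [← intervalIntegral.integral_sub (hint hgc) (hint hfc)]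
    simp only [mul_sub]
  linarith [hf s₁ s₂ h₁ h₁₂ h₂]

theorem SubintervalMassLE.nonpos (hf : SubintervalMassLE ρ f c d 0) (hρ : Continuous ρ)
    (hρ₀ : ∀ s, 0 < ρ s) (hfc : ContinuousOn f (Icc c d)) {s : ℝ} (hs : s ∈ Ioo c d) :
    f s ≤ 0 := by
  have hcont : ContinuousOn (fun z => ρ z * f z) (Icc c d) := hρ.continuousOn.mul hfc
  have hderiv : HasDerivAt (fun r => ∫ z in s..r, ρ z * f z) (ρ s * f s) s :=
    intervalIntegral.integral_hasDerivAt_right (by simp)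
      ((hcont.mono Ioo_subset_Icc_self).stronglyMeasurableAtFilter isOpen_Ioo s hs)
      (hcont.continuousAt (Icc_mem_nhds hs.1 hs.2))
  have hle : ρ s * f s ≤ 0 := by
    refine nonpos_of_hasDerivAt_of_eventually_right_le hderiv ?_
    filter_upwards [Ioo_mem_nhdsGT hs.2] with r hr
    rw [intervalIntegral.integral_same]
    exact hf s r hs.1.le hr.1.le hr.2.le
  exact nonpos_of_mul_nonpos_right hle (hρ₀ s)

theorem deriv_nonpos_of_isMaxOn_Icc {w : ℝ → ℝ} {a s k : ℝ}
    (hg : ∀ z, HasDerivAt g (ρ z * w z) z) (hρ₀ : ∀ z, 0 < ρ z) (hs : s ∈ Ioc a d)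
    (hmax : IsMaxOn g (Icc a d) s) (hd : w d < 0) (hw : HasDerivAt w k s) : k ≤ 0 := by
  have hsd : s < d := by
    refine hs.2.lt_of_ne fun heq => ?_
    have hnonneg : 0 ≤ ρ s * w s := by
      refine nonneg_of_hasDerivAt_of_eventually_left_le (hg s) ?_
      filter_upwards [Ioo_mem_nhdsLT hs.1] with z hz using hmax ⟨hz.1.le, hz.2.le.trans hs.2⟩
    rw [heq] at hnonneg
    exact (mul_neg_of_pos_of_neg (hρ₀ d) hd).not_ge hnonneg
  have hloc : IsLocalMax g s := hmax.isLocalMax (Icc_mem_nhds hs.1 hsd)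
  have hzero : w s = 0 :=
    (mul_eq_zero.1 (hloc.hasDerivAt_eq_zero (hg s))).resolve_left (hρ₀ s).ne'
  exact second_deriv_nonpos_of_eventually_right_le (Eventually.of_forall hg)
    (Eventually.of_forall hρ₀) hzero hw (nhdsWithin_le_nhds hloc)

theorem deriv_nonneg_of_isMinOn_Icc {w : ℝ → ℝ} {b s k : ℝ}
    (hg : ∀ z, HasDerivAt g (ρ z * w z) z) (hρ₀ : ∀ z, 0 < ρ z) (hs : s ∈ Ico c b)
    (hmin : IsMinOn g (Icc c b) s) (hc : w c < 0) (hw : HasDerivAt w k s) : 0 ≤ k := by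
  have hneg : ∀ z, HasDerivAt (fun x => -g (-x)) (ρ (-z) * w (-z)) z := fun z =>
    (((hg (-z)).comp z (hasDerivAt_neg z)).neg).congr_deriv (by ring)
  have hw' : HasDerivAt (fun x => w (-x)) (-k) (-s) := by
    have hws : HasDerivAt w k (-(-s)) := by rwa [neg_neg]
    exact (hws.comp (-s) (hasDerivAt_neg (-s))).congr_deriv (by ring)
  have := deriv_nonpos_of_isMaxOn_Icc (a := -b) (d := -c) hneg (fun z => hρ₀ (-z))
    ⟨neg_lt_neg hs.2, neg_le_neg hs.1⟩
    (fun x hx => by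
      have : g s ≤ g (-x) := hmin ⟨le_neg_of_le_neg hx.2, neg_le.1 hx.1⟩
      simpa using this)
    (by simpa using hc) hw'
  linarith

theorem isCompact_setOf_subinterval (r t₁ c d : ℝ) :
    IsCompact {p : ℝ × ℝ × ℝ | p.1 ∈ Icc r t₁ ∧ c ≤ p.2.1 ∧ p.2.1 ≤ p.2.2 ∧ p.2.2 ≤ d} := by
  have hbox : IsCompact (Icc r t₁ ×ˢ Icc c d ×ˢ Icc c d) :=
    isCompact_Icc.prod (isCompact_Icc.prod isCompact_Icc)
  have hord : IsClosed {p : ℝ × ℝ × ℝ | p.2.1 ≤ p.2.2} := isClosed_le (by fun_prop) (by fun_prop)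
  convert hbox.inter_right hord using 1
  ext p
  simp only [mem_ofPred_eq, mem_inter_iff, mem_prod, mem_Icc]
  grind

theorem flux_of_mass_maximal {w : ℝ → ℝ} {s₁ s₂ k₁ k₂ : ℝ} (hρ : Continuous ρ)
    (hρ₀ : ∀ s, 0 < ρ s) (hw : Continuous w) (hc : w c < 0) (hd : w d < 0)
    (h₁ : c ≤ s₁) (h₁₂ : s₁ < s₂) (h₂ : s₂ ≤ d)
    (hmax : ∀ z₁ z₂, c ≤ z₁ → z₁ ≤ z₂ → z₂ ≤ d →
      ∫ z in z₁..z₂, ρ z * w z ≤ ∫ z in s₁..s₂, ρ z * w z)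
    (hw₁ : HasDerivAt w k₁ s₁) (hw₂ : HasDerivAt w k₂ s₂) : k₂ ≤ 0 ∧ 0 ≤ k₁ := by
  have hcont : Continuous fun z => ρ z * w z := hρ.mul hw
  constructor
  · exact deriv_nonpos_of_isMaxOn_Icc (fun z => hasDerivAt_primitive (c := s₁) hcont z) hρ₀
      ⟨h₁₂, h₂⟩ (fun z hz => hmax s₁ z h₁ hz.1 hz.2) hd hw₂
  · refine deriv_nonneg_of_isMinOn_Icc (fun z => hasDerivAt_primitive (c := s₂) hcont z) hρ₀
      ⟨h₁, h₁₂⟩ (fun z hz => ?_) hc hw₁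
    have := hmax z s₂ hz.1 hz.2 h₂
    rw [intervalIntegral.integral_symm s₂ z, intervalIntegral.integral_symm s₂ s₁] at this
    exact neg_le_neg_iff.1 this

theorem continuous_integral_between {q : ℝ → ℝ → ℝ} (hq : Continuous (uncurry q)) :
    Continuous fun p : ℝ × ℝ × ℝ => ∫ z in p.2.1..p.2.2, q p.1 z := by
  have hprim : Continuous fun p : ℝ × ℝ => ∫ z in (0 : ℝ)..p.2, q p.1 z :=
    intervalIntegral.continuous_parametric_intervalIntegral_of_continuous
      (f := fun (p : ℝ × ℝ) z => q p.1 z) (by fun_prop) (by fun_prop)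
  have hdiff : Continuous fun p : ℝ × ℝ × ℝ =>
      (∫ z in (0 : ℝ)..p.2.2, q p.1 z) - ∫ z in (0 : ℝ)..p.2.1, q p.1 z :=
    (hprim.comp (g := fun p : ℝ × ℝ => ∫ z in (0 : ℝ)..p.2, q p.1 z)
      (f := fun p : ℝ × ℝ × ℝ => (p.1, p.2.2)) (by fun_prop)).sub
    (hprim.comp (f := fun p : ℝ × ℝ × ℝ => (p.1, p.2.1)) (by fun_prop))
  refine hdiff.congr fun p => intervalIntegral.integral_interval_sub_left ?_ ?_ <;>
  exact Continuous.intervalIntegrable (by fun_prop) _ _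

-- At a maximum of `(t, s₁, s₂) ↦ ∫ ρ w - ε (t - r)` the fluxes at both ends are outward, which is
-- incompatible with the mass increasing at rate `ε`.
theorem SubintervalMassLE.of_flux {w ws : ℝ → ℝ → ℝ} {r t₁ : ℝ} (hρ : Continuous ρ)
    (hρ₀ : ∀ s, 0 < ρ s) (hw : Continuous (uncurry w)) (hrt : r ≤ t₁)
    (hws : ∀ t ∈ Ioc r t₁, ∀ s ∈ Icc c d, HasDerivAt (w t) (ws t s) s)
    (hflux : ∀ t ∈ Ioc r t₁, ∀ s₁ ∈ Icc c d, ∀ s₂ ∈ Icc c d,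
      HasDerivAt (fun τ => ∫ z in s₁..s₂, ρ z * w τ z) (ws t s₂ - ws t s₁) t)
    (hc : ∀ t ∈ Ioc r t₁, w t c < 0) (hd : ∀ t ∈ Ioc r t₁, w t d < 0) (hm : 0 ≤ m)
    (hinit : SubintervalMassLE ρ (w r) c d m) : SubintervalMassLE ρ (w t₁) c d m := by
  intro x₁ x₂ hx₁ hx hx₂
  refine le_of_forall_pos_le_add_mul (K := t₁ - r) fun ε hε => ?_
  set Φ : ℝ × ℝ × ℝ → ℝ := fun p => (∫ z in p.2.1..p.2.2, ρ z * w p.1 z) - ε * (p.1 - r) with hΦ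
  have hΦc : Continuous Φ :=
    (continuous_integral_between (q := fun t z => ρ z * w t z) (by fun_prop)).sub (by fun_prop)
  obtain ⟨⟨t, s₁, s₂⟩, ⟨ht, h₁, h₁₂, h₂⟩, hmax⟩ :=
    (isCompact_setOf_subinterval r t₁ c d).exists_isMaxOn
      ⟨(t₁, x₁, x₂), ⟨hrt, le_rfl⟩, hx₁, hx, hx₂⟩ hΦc.continuousOn
  have hle : Φ (t₁, x₁, x₂) ≤ Φ (t, s₁, s₂) := hmax ⟨⟨hrt, le_rfl⟩, hx₁, hx, hx₂⟩
  suffices hfin : Φ (t, s₁, s₂) ≤ m by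
    simp only [hΦ] at hle hfin
    linarith
  simp only at ht h₁ h₁₂ h₂
  rcases ht.1.eq_or_lt with rfl | hrt'
  · simpa [hΦ] using hinit s₁ s₂ h₁ h₁₂ h₂
  rcases h₁₂.eq_or_lt with rfl | h₁₂
  · have : 0 ≤ ε * (t - r) := mul_nonneg hε.le (by linarith)
    simp only [hΦ, intervalIntegral.integral_same]
    linarith
  have htmem : t ∈ Ioc r t₁ := ⟨hrt', ht.2⟩
  have hmem₁ : s₁ ∈ Icc c d := ⟨h₁, h₁₂.le.trans h₂⟩
  have hmem₂ : s₂ ∈ Icc c d := ⟨h₁.trans h₁₂.le, h₂⟩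
  obtain ⟨hright, hleft⟩ := flux_of_mass_maximal hρ hρ₀ (by fun_prop) (hc t htmem) (hd t htmem)
    h₁ h₁₂ h₂ (fun z₁ z₂ hz₁ hz hz₂ => by
      have : Φ (t, z₁, z₂) ≤ Φ (t, s₁, s₂) := hmax ⟨ht, hz₁, hz, hz₂⟩
      simpa only [hΦ, sub_le_sub_iff_right] using this)
    (hws t htmem s₁ hmem₁) (hws t htmem s₂ hmem₂)
  have htime : 0 ≤ ws t s₂ - ws t s₁ - ε * 1 := by
    refine nonneg_of_hasDerivAt_of_eventually_left_le ((hflux t htmem s₁ hmem₁ s₂ hmem₂).sub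
      (((hasDerivAt_id t).sub_const r).const_mul ε)) ?_
    filter_upwards [Ioo_mem_nhdsLT hrt'] with τ hτ
    exact hmax (a := (τ, s₁, s₂)) ⟨⟨hτ.1.le, hτ.2.le.trans ht.2⟩, h₁, h₁₂.le, h₂⟩
  linarith

end SubintervalMass

section Propagation

variable {ρ : ℝ → ℝ} {c d c' d' k m : ℝ}

theorem IsHeatSolOn.subintervalMassLE_steklovAverage {V : ℝ → ℝ → ℝ} {α β r t₁ h : ℝ}
    (hρ : Continuous ρ) (hρ₀ : ∀ s, 0 < ρ s) (hV : Continuous (uncurry V))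
    (hsol : IsHeatSolOn ρ V (Ioo α β) (Ioo c d)) (hc : c < c') (hd : d' < d)
    (hr : α < r) (hrt : r ≤ t₁) (hh : 0 < h) (hth : t₁ + h < β)
    (hleft : ∀ t ∈ Ico r β, V t c' < k) (hright : ∀ t ∈ Ico r β, V t d' < k) (hm : 0 ≤ m)
    (hinit : SubintervalMassLE ρ (fun z => steklovAverage h V r z - k) c' d' m) :
    SubintervalMassLE ρ (fun z => steklovAverage h V t₁ z - k) c' d' m := by
  have hwc : Continuous (uncurry (steklovAverage h V)) := continuous_steklovAverage hV h
  have hex : ∀ t ∈ Ioc r t₁, ∃ U' : ℝ → ℝ, ∀ s ∈ Ioo c d,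
      HasDerivAt (fun z => ∫ τ in t..t + h, V τ z) (U' s) s ∧
        HasDerivAt U' (ρ s * (V (t + h) s - V t s)) s := fun t ht =>
    hsol.exists_hasDerivAt_integral (hr.trans ht.1) (by linarith) (by linarith [ht.2])
      hV.continuousOn hρ fun s => (hρ₀ s).le
  choose! U' hU' using hex
  have hsub : Icc c' d' ⊆ Ioo c d := Icc_subset_Ioo hc hd
  have hneg : ∀ {s}, (∀ t ∈ Ico r β, V t s < k) → ∀ t ∈ Ioc r t₁, steklovAverage h V t s - k < 0 :=
    fun hs t ht => sub_neg.2 <| steklovAverage_lt hh (by fun_prop) fun τ hτ =>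
      hs τ ⟨ht.1.le.trans hτ.1, by linarith [hτ.2, ht.2]⟩
  refine SubintervalMassLE.of_flux (w := fun t s => steklovAverage h V t s - k)
    (ws := fun t s => h⁻¹ * U' t s) hρ hρ₀ (by fun_prop) hrt
    (fun t ht s hs => (((hU' t ht s (hsub hs)).1.const_mul h⁻¹).sub_const k))
    (fun t ht s₁ hs₁ s₂ hs₂ => ?_) (hneg hleft) (hneg hright) hm hinit
  refine (hasDerivAt_integral_of_hasDerivAt
    (Gt := fun t z => ρ z * (h⁻¹ * (V (t + h) z - V t z))) (by fun_prop) (by fun_prop)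
    (fun t z => ((hasDerivAt_steklovAverage isOpen_univ ordConnected_univ (by fun_prop) trivial
      trivial).sub_const k).const_mul (ρ z)) s₁ s₂ t).congr_deriv ?_
  have hcont : Continuous fun z => ρ z * (V (t + h) z - V t z) := by fun_prop
  rw [← mul_sub, ← intervalIntegral.integral_eq_sub_of_hasDerivAt
    (fun z hz => (hU' t ht z (hsub (ordConnected_Icc.uIcc_subset hs₁ hs₂ hz))).2)
    (hcont.intervalIntegrable _ _), ← intervalIntegral.integral_const_mul]
  simp only [mul_left_comm]

theorem IsHeatSolOn.subintervalMassLE_of_continuous {V : ℝ → ℝ → ℝ} {α β r t₁ : ℝ}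
    (hρ : Continuous ρ) (hρ₀ : ∀ s, 0 < ρ s) (hV : Continuous (uncurry V))
    (hsol : IsHeatSolOn ρ V (Ioo α β) (Ioo c d)) (hc : c < c') (hd : d' < d)
    (hr : α < r) (hrt : r ≤ t₁) (ht₁ : t₁ < β)
    (hleft : ∀ t ∈ Ico r β, V t c' < k) (hright : ∀ t ∈ Ico r β, V t d' < k) (hm : 0 ≤ m)
    (hinit : SubintervalMassLE ρ (fun z => V r z - k) c' d' m) :
    SubintervalMassLE ρ (fun z => V t₁ z - k) c' d' m := by
  intro s₁ s₂ h₁ h₁₂ h₂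
  have hρ₀' : ∀ s, 0 ≤ ρ s := fun s => (hρ₀ s).le
  set D := ∫ z in c'..d', ρ z
  have hD : 0 ≤ D := intervalIntegral.integral_nonneg (h₁.trans (h₁₂.trans h₂)) fun z _ => hρ₀' z
  refine le_of_forall_pos_le_add_mul (K := 2 * D) fun η hη => ?_
  obtain ⟨δ, hδ, hunif⟩ := exists_forall_abs_sub_le_of_abs_sub_le hV r β c' d' hη
  obtain ⟨h, hh, hlt⟩ := exists_between (lt_min hδ (sub_pos.2 ht₁))
  obtain ⟨hhδ, hhβ⟩ := lt_min_iff.1 hlt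
  have hwc : Continuous (uncurry (steklovAverage h V)) := continuous_steklovAverage hV h
  have hclose : ∀ t ∈ Icc r t₁, ∀ z ∈ Icc c' d', |steklovAverage h V t z - V t z| ≤ η := by
    refine fun t ht z hz => abs_steklovAverage_sub_le hh (by fun_prop) fun τ hτ =>
      hunif τ ⟨ht.1.trans hτ.1, by linarith [hτ.2, ht.2]⟩ t ⟨ht.1, by linarith [ht.2]⟩ z hz ?_
    rw [abs_of_nonneg (sub_nonneg.2 hτ.1)]
    linarith [hτ.2]
  have hinit' : SubintervalMassLE ρ (fun z => steklovAverage h V r z - k) c' d' (m + η * D) :=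
    hinit.of_sub_le hρ hρ₀' (by fun_prop) (by fun_prop) hη.le fun z hz => by
      linarith [(abs_le.1 (hclose r ⟨le_rfl, hrt⟩ z hz)).2]
  have hstep := hsol.subintervalMassLE_steklovAverage hρ hρ₀ hV hc hd hr hrt hh (by linarith)
    hleft hright (by positivity) hinit'
  have hfinal := hstep.of_sub_le (g := fun z => V t₁ z - k) hρ hρ₀' (by fun_prop) (by fun_prop)
    hη.le fun z hz => by linarith [(abs_le.1 (hclose t₁ ⟨hrt, le_rfl⟩ z hz)).1]
  linarith [hfinal s₁ s₂ h₁ h₁₂ h₂]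

theorem SubintervalMassLE.congr {f g : ℝ → ℝ} (hf : SubintervalMassLE ρ f c d m)
    (heq : EqOn f g (Icc c d)) : SubintervalMassLE ρ g c d m := by
  intro s₁ s₂ h₁ h₁₂ h₂
  refine (intervalIntegral.integral_congr fun z hz => ?_).trans_le (hf s₁ s₂ h₁ h₁₂ h₂)
  rw [uIcc_of_le h₁₂] at hz
  simp only [heq (Icc_subset_Icc h₁ h₂ hz)]

theorem IsHeatSolOn.continuousOn_slice {v : ℝ → ℝ → ℝ} {I J : Set ℝ}
    (hsol : IsHeatSolOn ρ v I J) {t : ℝ} (ht : t ∈ I) : ContinuousOn (v t) J := by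
  obtain ⟨vt, vs, h⟩ := hsol
  exact fun s hs => (h t ht s hs).2.1.continuousAt.continuousWithinAt

theorem IsHeatSolOn.subintervalMassLE {v : ℝ → ℝ → ℝ} {α β r t₁ : ℝ} (hρ : Continuous ρ)
    (hρ₀ : ∀ s, 0 < ρ s) (hv : ContinuousOn (uncurry v) (Ioo α β ×ˢ Ioo c d))
    (hsol : IsHeatSolOn ρ v (Ioo α β) (Ioo c d)) (hc : c < c') (hd : d' < d)
    (hr : α < r) (hrt : r ≤ t₁) (ht₁ : t₁ < β)
    (hleft : ∀ t ∈ Ioo α β, v t c' < k) (hright : ∀ t ∈ Ioo α β, v t d' < k) (hm : 0 ≤ m)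
    (hinit : SubintervalMassLE ρ (fun z => v r z - k) c' d' m) :
    SubintervalMassLE ρ (fun z => v t₁ z - k) c' d' m := by
  rcases lt_or_ge d' c' with hlt | hcd
  · exact fun s₁ s₂ h₁ h₁₂ h₂ => absurd (h₁.trans (h₁₂.trans h₂)) hlt.not_ge
  obtain ⟨α', hα, hα'⟩ := exists_between hr
  obtain ⟨β', hβ', hβ⟩ := exists_between ht₁
  obtain ⟨c'', hc₁, hc₂⟩ := exists_between hc
  obtain ⟨d'', hd₁, hd₂⟩ := exists_between hd
  have hI : Icc α' β' ⊆ Ioo α β := Icc_subset_Ioo hα hβ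
  have hJ : Icc c'' d'' ⊆ Ioo c d := Icc_subset_Ioo hc₁ hd₂
  obtain ⟨V, hV, heq⟩ := exists_continuous_eq_on_Icc_prod (by linarith) (by linarith)
    (hv.mono (prod_mono hI hJ))
  have hsol' : IsHeatSolOn ρ V (Ioo α' β') (Ioo c'' d'') :=
    (hsol.mono (Ioo_subset_Icc_self.trans hI) (Ioo_subset_Icc_self.trans hJ)).congr isOpen_Ioo
      isOpen_Ioo fun t ht s hs => heq t (Ioo_subset_Icc_self ht) s (Ioo_subset_Icc_self hs)
  have heq' : ∀ θ ∈ Icc α' β', EqOn (fun z => V θ z - k) (fun z => v θ z - k) (Icc c' d') :=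
    fun θ hθ z hz => by simp only [heq θ hθ z (Icc_subset_Icc hc₂.le hd₁.le hz)]
  have hlat : ∀ s ∈ Icc c' d', (∀ t ∈ Ioo α β, v t s < k) → ∀ θ ∈ Ico r β', V θ s < k := by
    intro s hs hlt θ hθ
    have hθ' : θ ∈ Icc α' β' := ⟨hα'.le.trans hθ.1, hθ.2.le⟩
    rw [heq θ hθ' s (Icc_subset_Icc hc₂.le hd₁.le hs)]
    exact hlt θ (hI hθ')
  exact (hsol'.subintervalMassLE_of_continuous hρ hρ₀ hV hc₂ hd₁ hα' hrt hβ'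
    (hlat c' (left_mem_Icc.2 hcd) hleft) (hlat d' (right_mem_Icc.2 hcd) hright) hm
    (hinit.congr (heq' r ⟨hα'.le, hrt.trans hβ'.le⟩).symm)).congr
      (heq' t₁ ⟨hα'.le.trans hrt, hβ'.le⟩)

theorem IsHeatSolOn.le_of_subintervalMassLE {v : ℝ → ℝ → ℝ} {α β : ℝ}
    (hρ : Continuous ρ) (hρ₀ : ∀ s, 0 < ρ s)
    (hv : ContinuousOn (uncurry v) (Ioo α β ×ˢ Ioo c d))
    (hsol : IsHeatSolOn ρ v (Ioo α β) (Ioo c d)) (hc : c < c') (hd : d' < d)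
    (hleft : ∀ t ∈ Ioo α β, v t c' < k) (hright : ∀ t ∈ Ioo α β, v t d' < k)
    (hinit : ∀ η > 0, ∀ᶠ r in 𝓝[>] α, SubintervalMassLE ρ (fun z => v r z - k) c' d' η) :
    ∀ t ∈ Ioo α β, ∀ s ∈ Icc c' d', v t s ≤ k := by
  intro t ht s hs
  rcases hs.1.eq_or_lt with rfl | hs₁
  · exact (hleft t ht).le
  rcases hs.2.eq_or_lt with rfl | hs₂
  · exact (hright t ht).le
  have hmass : ∀ η > 0, SubintervalMassLE ρ (fun z => v t z - k) c' d' η := by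
    intro η hη
    obtain ⟨r, hr, hαr, hrt⟩ := ((hinit η hη).and (Ioo_mem_nhdsGT ht.1)).exists
    exact hsol.subintervalMassLE hρ hρ₀ hv hc hd hαr hrt.le ht.2 hleft hright hη.le hr
  have hzero : SubintervalMassLE ρ (fun z => v t z - k) c' d' 0 := fun s₁ s₂ h₁ h₁₂ h₂ =>
    le_of_forall_pos_le_add fun η hη => by simpa using hmass η hη s₁ s₂ h₁ h₁₂ h₂
  exact sub_nonpos.1 (hzero.nonpos hρ hρ₀ (((hsol.continuousOn_slice ht).mono
    (Icc_subset_Ioo hc hd)).sub continuousOn_const) ⟨hs₁, hs₂⟩)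

end Propagation

/-- Continuity of `t ↦ v t`, `t > 0`, in `L¹([c, d], ρ ds)`. -/
def IsL1ContinuousInTime (ρ : ℝ → ℝ) (v : ℝ → ℝ → ℝ) (c d : ℝ) : Prop :=
  ∀ t₀ > 0, Tendsto (fun t => ∫ z in c..d, ρ z * |v t z - v t₀ z|) (𝓝 t₀) (𝓝 0)

theorem IsL1ContinuousInTime.neg {ρ : ℝ → ℝ} {v : ℝ → ℝ → ℝ} {c d : ℝ}
    (hv : IsL1ContinuousInTime ρ v c d) : IsL1ContinuousInTime ρ (fun t s => -v t s) c d := by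
  intro t₀ ht₀
  simpa only [neg_sub_neg, abs_sub_comm] using hv t₀ ht₀

section GapPropagation

variable {ρ : ℝ → ℝ} {v : ℝ → ℝ → ℝ} {τ β c d c' d' k : ℝ}

theorem IsHeatSolOn.le_of_le_at_left (hρ : Continuous ρ) (hρ₀ : ∀ s, 0 < ρ s)
    (hsol : IsHeatSolOn ρ v (Ioi 0) (Icc c d)) (hL : IsL1ContinuousInTime ρ v c d) (hτ : 0 < τ)
    (hv : ContinuousOn (uncurry v) (Ioo τ β ×ˢ Ioo c d)) (hc : c < c') (hd : d' < d)
    (hleft : ∀ t ∈ Ioo τ β, v t c' < k) (hright : ∀ t ∈ Ioo τ β, v t d' < k)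
    (hinit : ∀ s ∈ Icc c' d', v τ s ≤ k) : ∀ t ∈ Ioo τ β, ∀ s ∈ Icc c' d', v t s ≤ k := by
  have hsol' : IsHeatSolOn ρ v (Ioo τ β) (Ioo c d) :=
    hsol.mono (fun t ht => hτ.trans ht.1) Ioo_subset_Icc_self
  refine hsol'.le_of_subintervalMassLE hρ hρ₀ hv hc hd hleft hright fun η hη => ?_
  filter_upwards [nhdsWithin_le_nhds ((hL τ hτ).eventually (ge_mem_nhds hη)), self_mem_nhdsWithin]
    with r hr (hτr : τ < r) s₁ s₂ h₁ h₁₂ h₂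
  have hsub : Icc s₁ s₂ ⊆ Icc c d := Icc_subset_Icc (hc.le.trans h₁) (h₂.trans hd.le)
  have hvr := hsol.continuousOn_slice (hτ.trans hτr)
  have hdist : ContinuousOn (fun z => ρ z * |v r z - v τ z|) (Icc c d) :=
    hρ.continuousOn.mul (hvr.sub (hsol.continuousOn_slice hτ)).abs
  calc ∫ z in s₁..s₂, ρ z * (v r z - k) ≤ ∫ z in s₁..s₂, ρ z * |v r z - v τ z| := by
        refine intervalIntegral.integral_mono_on h₁₂ ?_
          ((hdist.mono hsub).intervalIntegrable_of_Icc h₁₂)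
          fun z hz => mul_le_mul_of_nonneg_left ?_ (hρ₀ z).le
        · exact (hρ.continuousOn.mul
            ((hvr.mono hsub).sub continuousOn_const)).intervalIntegrable_of_Icc h₁₂
        · linarith [hinit z (Icc_subset_Icc h₁ h₂ hz), le_abs_self (v r z - v τ z)]
    _ ≤ ∫ z in c..d, ρ z * |v r z - v τ z| :=
        intervalIntegral.integral_mono_interval (hc.le.trans h₁) h₁₂ (h₂.trans hd.le)
          (Eventually.of_forall fun z => mul_nonneg (hρ₀ z).le (abs_nonneg _))
          (hdist.intervalIntegrable_of_Icc (by linarith))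
    _ ≤ η := hr

theorem IsHeatSolOn.abs_sub_le_of_abs_sub_le_at_left {A : ℝ} (hρ : Continuous ρ)
    (hρ₀ : ∀ s, 0 < ρ s) (hsol : IsHeatSolOn ρ v (Ioi 0) (Icc c d))
    (hL : IsL1ContinuousInTime ρ v c d) (hτ : 0 < τ)
    (hv : ContinuousOn (uncurry v) (Ioo τ β ×ˢ Ioo c d)) (hc : c < c') (hd : d' < d)
    (hleft : ∀ t ∈ Ioo τ β, |v t c' - A| < k) (hright : ∀ t ∈ Ioo τ β, |v t d' - A| < k)
    (hinit : ∀ s ∈ Icc c' d', |v τ s - A| ≤ k) :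
    ∀ t ∈ Ioo τ β, ∀ s ∈ Icc c' d', |v t s - A| ≤ k := by
  have hupper := hsol.le_of_le_at_left (k := A + k) hρ hρ₀ hL hτ hv hc hd
    (fun t ht => by linarith [abs_lt.1 (hleft t ht)])
    (fun t ht => by linarith [abs_lt.1 (hright t ht)])
    (fun s hs => by linarith [abs_le.1 (hinit s hs)])
  have hlower := hsol.neg.le_of_le_at_left (k := -A + k) hρ hρ₀ hL.neg hτ hv.neg hc hd
    (fun t ht => by linarith [abs_lt.1 (hleft t ht)])
    (fun t ht => by linarith [abs_lt.1 (hright t ht)])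
    (fun s hs => by linarith [abs_le.1 (hinit s hs)])
  exact fun t ht s hs => abs_le.2 ⟨by linarith [hlower t ht s hs], by linarith [hupper t ht s hs]⟩

end GapPropagation

/-! ### Joint continuity of separately differentiable solutions, by Baire category -/

section LeftLimit

variable {ρ : ℝ → ℝ} {v : ℝ → ℝ → ℝ} {c d s₀ t₀ l : ℝ}

theorem IsHeatSolOn.isDriftDiffusionSolOn {I J : Set ℝ} {Ω : Set (ℝ × ℝ)}
    (hsol : IsHeatSolOn ρ v I J) (hρ₀ : ∀ s, ρ s ≠ 0) (hΩ : Ω ⊆ I ×ˢ J) :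
    IsDriftDiffusionSolOn (fun s => (ρ s)⁻¹) 0 v Ω := by
  obtain ⟨vt, vs, hsol⟩ := hsol
  refine ⟨vs, fun t s => ρ s * vt t s, fun t s hts => ?_⟩
  obtain ⟨htime, hspace, hsecond⟩ := hsol t (hΩ hts).1 s (hΩ hts).2
  exact ⟨htime.congr_deriv (by simp [hρ₀ s]), hspace, hsecond⟩

theorem IsHeatSolOn.sub_le_of_abs_le {N w k δ t x y : ℝ} (hρ₀ : ∀ s, 0 < ρ s)
    (hsol : IsHeatSolOn ρ v (Ioo l t₀) (Ioo c d))
    (hv : ContinuousOn (uncurry v) (Ioo l t₀ ×ˢ Ioo c d))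
    (hsub : ∀ s, |s - s₀| ≤ w → s ∈ Ioo c d) (hN : ∀ s, |s - s₀| ≤ w → ρ s ≤ N)
    (hk : ∀ t ∈ Ioo l t₀, ∀ s, |s - s₀| ≤ w → |v t s| ≤ k)
    (hw : 0 < w) (hδ : 0 < δ) (ht : t ∈ Ioo (l + δ) t₀) (hyx : y ≤ x) (hx : |x - s₀| ≤ w)
    (hy : |y - s₀| ≤ w) :
    v t x - v t y ≤ 4 * w * (2 * (2 * k / w ^ 2) + 2 * k / δ / (2 * N⁻¹)) * (x - y) +
      2 * k / w ^ 2 * ((x - s₀) ^ 2 + (y - s₀) ^ 2) := by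
  have hmem : ∀ p ∈ driftCylinder 0 t δ s₀ w, p.1 ∈ Ioo l t₀ ∧ |p.2 - s₀| ≤ w := by
    rintro ⟨r, s⟩ ⟨hr, hs⟩
    simp only [zero_mul, add_zero] at hs
    exact ⟨⟨by linarith [hr.1, ht.1], hr.2.trans_lt ht.2⟩, hs⟩
  have hint : driftCylinderInterior 0 t δ s₀ w ⊆ driftCylinder 0 t δ s₀ w := fun p hp =>
    ⟨Ioc_subset_Icc_self hp.1, hp.2.le⟩
  have hrect : driftCylinder 0 t δ s₀ w ⊆ Ioo l t₀ ×ˢ Ioo c d := fun p hp =>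
    ⟨(hmem p hp).1, hsub _ (hmem p hp).2⟩
  have hN₀ : 0 < N := (hρ₀ x).trans_le (hN x hx)
  have hk₀ : 0 ≤ k :=
    (abs_nonneg _).trans (hk t ⟨by linarith [ht.1], ht.2⟩ x hx)
  refine kruzhkov_estimate
    (hsol.isDriftDiffusionSolOn (fun s => (hρ₀ s).ne') (hint.trans hrect)) (hv.mono hrect)
    (fun r s hrs => inv_anti₀ (hρ₀ s) (hN s (hmem _ (hint hrs)).2)) (fun r s s' hs hs' => ?_)
    (inv_pos.2 hN₀) hδ hw (by positivity) hyx hx hy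
  have h₁ := abs_le.1 (hk r (hmem _ hs).1 s (hmem _ hs).2)
  have h₂ := abs_le.1 (hk r (hmem _ hs').1 s' (hmem _ hs').2)
  linarith

theorem IsHeatSolOn.exists_modulus_of_abs_le {w k δ : ℝ} (hρ : Continuous ρ)
    (hρ₀ : ∀ s, 0 < ρ s) (hsol : IsHeatSolOn ρ v (Ioo l t₀) (Ioo c d))
    (hv : ContinuousOn (uncurry v) (Ioo l t₀ ×ˢ Ioo c d))
    (hsub : ∀ s, |s - s₀| ≤ w → s ∈ Ioo c d)
    (hk : ∀ t ∈ Ioo l t₀, ∀ s, |s - s₀| ≤ w → |v t s| ≤ k) (hw : 0 < w) (hδ : 0 < δ) :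
    ∃ K K' : ℝ, ∀ t ∈ Ioo (l + δ) t₀, ∀ x, |x - s₀| ≤ w →
      |v t x - v t s₀| ≤ K * |x - s₀| + K' * (x - s₀) ^ 2 := by
  obtain ⟨N, hN⟩ := (isCompact_closedBall s₀ w).exists_bound_of_continuousOn hρ.continuousOn
  have hN' : ∀ s, |s - s₀| ≤ w → ρ s ≤ N := fun s hs => (le_abs_self _).trans (hN s hs)
  set K : ℝ := 4 * w * (2 * (2 * k / w ^ 2) + 2 * k / δ / (2 * N⁻¹))
  have hlip : ∀ t ∈ Ioo (l + δ) t₀, ∀ x y, y ≤ x → |x - s₀| ≤ w → |y - s₀| ≤ w →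
      |v t x - v t y| ≤ K * (x - y) + 2 * k / w ^ 2 * ((x - s₀) ^ 2 + (y - s₀) ^ 2) := by
    intro t ht x y hyx hx hy
    refine abs_sub_le_iff.2 ⟨hsol.sub_le_of_abs_le hρ₀ hv hsub hN' hk hw hδ ht hyx hx hy, ?_⟩
    have hneg := hsol.neg.sub_le_of_abs_le hρ₀ hv.neg hsub hN'
      (fun t ht s hs => (abs_neg _).trans_le (hk t ht s hs)) hw hδ ht hyx hx hy
    linarith
  have hs₀ : |s₀ - s₀| ≤ w := by simpa using hw.le
  refine ⟨K, 2 * k / w ^ 2, fun t ht x hx => ?_⟩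
  rcases le_total s₀ x with h | h
  · simpa [abs_of_nonneg (sub_nonneg.2 h)] using hlip t ht x s₀ h hx hs₀
  · rw [abs_sub_comm (v t x), abs_sub_comm x]
    simpa [abs_of_nonneg (sub_nonneg.2 h)] using hlip t ht s₀ x h hs₀ hx

variable (hρ : Continuous ρ) (hρ₀ : ∀ s, 0 < ρ s) (hsol : IsHeatSolOn ρ v (Ioi 0) (Icc c d))

theorem IsHeatSolOn.continuousAt_time {t s : ℝ} {I J : Set ℝ} (hsol : IsHeatSolOn ρ v I J)
    (ht : t ∈ I) (hs : s ∈ J) : ContinuousAt (fun τ => v τ s) t := by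
  obtain ⟨vt, vs, hsol⟩ := hsol
  exact (hsol t ht s hs).1.continuousAt

include hρ hρ₀ hsol

theorem IsHeatSolOn.exists_abs_le_left (hL : IsL1ContinuousInTime ρ v c d) (hl : 0 < l)
    (hlt : l < t₀) (hv : ContinuousOn (uncurry v) (Ioo l t₀ ×ˢ Ioo c d)) {c' d' : ℝ}
    (hc : c < c') (hcd : c' ≤ d') (hd : d' < d) :
    ∃ τ ∈ Ico l t₀, ∃ k, ∀ t ∈ Ioo τ t₀, ∀ s ∈ Icc c' d', |v t s| ≤ k := by
  have hsub : Icc c' d' ⊆ Icc c d := Icc_subset_Icc hc.le hd.le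
  have hend : ∀ s ∈ Icc c' d', ∀ᶠ t in 𝓝[<] t₀, |v t s| < |v t₀ s| + 1 := fun s hs =>
    nhdsWithin_le_nhds ((hsol.continuousAt_time (hl.trans hlt) (hsub hs)).abs.eventually
      (gt_mem_nhds (lt_add_one _)))
  obtain ⟨τ, hτ, hends⟩ := (mem_nhdsLT_iff_exists_mem_Ico_Ioo_subset hlt).1
    ((hend c' (left_mem_Icc.2 hcd)).and (hend d' (right_mem_Icc.2 hcd)))
  have hτ₀ : 0 < τ := hl.trans_le hτ.1
  obtain ⟨k, hk⟩ := isCompact_Icc.exists_bound_of_continuousOn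
    ((hsol.continuousOn_slice (t := τ) hτ₀).mono hsub)
  obtain ⟨B, hkB, hcB, hdB⟩ : ∃ B, k ≤ B ∧ |v t₀ c'| + 1 ≤ B ∧ |v t₀ d'| + 1 ≤ B :=
    ⟨max k (max (|v t₀ c'| + 1) (|v t₀ d'| + 1)), by simp⟩
  refine ⟨τ, hτ, B, fun t ht s hs => ?_⟩
  have := hsol.abs_sub_le_of_abs_sub_le_at_left (A := 0) (k := B) hρ hρ₀ hL hτ₀
    (hv.mono (prod_mono_left (Ioo_subset_Ioo_left hτ.1))) hc hd
    (fun r hr => by simpa using (hends hr).1.trans_le hcB)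
    (fun r hr => by simpa using (hends hr).2.trans_le hdB)
    (fun z hz => by simpa using (hk z hz).trans hkB) t ht s hs
  simpa using this

theorem IsHeatSolOn.tendsto_left_of_continuousOn (hL : IsL1ContinuousInTime ρ v c d)
    (hl : 0 < l) (hlt : l < t₀) (hs₀ : s₀ ∈ Ioo c d)
    (hv : ContinuousOn (uncurry v) (Ioo l t₀ ×ˢ Ioo c d)) :
    Tendsto (uncurry v) (𝓝[<] t₀ ×ˢ 𝓝 s₀) (𝓝 (v t₀ s₀)) := by
  obtain ⟨w, hw, hball⟩ := Metric.nhds_basis_closedBall.mem_iff.1 (Ioo_mem_nhds hs₀.1 hs₀.2)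
  have hsub : ∀ s, |s - s₀| ≤ w → s ∈ Ioo c d := fun s hs => hball hs
  obtain ⟨τ, hτ, k, hk⟩ := hsol.exists_abs_le_left hρ hρ₀ hL hl hlt hv (c' := s₀ - w)
    (d' := s₀ + w) (hsub _ (by simp [abs_of_pos hw])).1 (by linarith)
    (hsub _ (by simp [abs_of_pos hw])).2
  have hτt : Ioo τ t₀ ⊆ Ioo l t₀ := Ioo_subset_Ioo_left hτ.1
  obtain ⟨K, K', hK⟩ := IsHeatSolOn.exists_modulus_of_abs_le (δ := (t₀ - τ) / 2) hρ hρ₀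
    (hsol.mono (fun t ht => hl.trans (hτt ht).1) Ioo_subset_Icc_self)
    (hv.mono (prod_mono_left hτt)) hsub
    (fun t ht s hs => hk t ht s (by constructor <;> linarith [abs_le.1 hs])) hw
    (half_pos (sub_pos.2 hτ.2))
  have hmodulus : Tendsto (fun p : ℝ × ℝ => K * |p.2 - s₀| + K' * (p.2 - s₀) ^ 2)
      (𝓝[<] t₀ ×ˢ 𝓝 s₀) (𝓝 0) := by
    have : Tendsto (fun x => K * |x - s₀| + K' * (x - s₀) ^ 2) (𝓝 s₀) (𝓝 0) :=
      Continuous.tendsto' (by fun_prop) _ _ (by simp)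
    exact this.comp tendsto_snd
  have hspace : Tendsto (fun p : ℝ × ℝ => v p.1 p.2 - v p.1 s₀) (𝓝[<] t₀ ×ˢ 𝓝 s₀) (𝓝 0) := by
    refine squeeze_zero_norm' ?_ hmodulus
    filter_upwards [prod_mem_prod (Ioo_mem_nhdsLT (show τ + (t₀ - τ) / 2 < t₀ by linarith [hτ.2]))
      (Metric.closedBall_mem_nhds s₀ hw)] with p hp using hK p.1 hp.1 p.2 hp.2
  have htime : Tendsto (fun p : ℝ × ℝ => v p.1 s₀) (𝓝[<] t₀ ×ˢ 𝓝 s₀) (𝓝 (v t₀ s₀)) :=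
    ((hsol.continuousAt_time (hl.trans hlt) (Ioo_subset_Icc_self hs₀)).tendsto.mono_left
      nhdsWithin_le_nhds).comp tendsto_fst
  simpa [uncurry_def] using hspace.add htime

end LeftLimit

theorem exists_last_mem_of_notMem {Z : Set ℝ} {z t u : ℝ}
    (hZ : ∀ r ∈ Icc z t, r ∉ Z → ∀ᶠ r' in 𝓝 r, r' ∉ Z) (hz : z ∈ Z) (ht : t ∉ Z) (hzt : z ≤ t)
    (htu : t < u) :
    ∃ τ ∈ Z, τ ∈ Ico z t ∧ ∃ β ∈ Ioc t u, ∀ r ∈ Ioo τ β, r ∉ Z := by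
  have hclosed : IsClosed (Z ∩ Icc z t) := by
    rw [← isOpen_compl_iff, isOpen_iff_eventually]
    intro r hr
    by_cases hrI : r ∈ Icc z t
    · exact (hZ r hrI fun h => hr ⟨h, hrI⟩).mono fun r' hr' h => hr' h.1
    · exact mem_of_superset (isClosed_Icc.isOpen_compl.mem_nhds hrI) fun r' hr' h => hr' h.2
  have hcompact : IsCompact (Z ∩ Icc z t) :=
    isCompact_Icc.of_isClosed_subset hclosed inter_subset_right
  obtain ⟨τ, ⟨hτZ, hτ⟩, hmax⟩ := hcompact.exists_isGreatest ⟨z, hz, le_rfl, hzt⟩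
  have hτt : τ < t := hτ.2.lt_of_ne fun h => ht (h ▸ hτZ)
  obtain ⟨l, β, htβ, hgap⟩ := mem_nhds_iff_exists_Ioo_subset.1 (hZ t ⟨hzt, le_rfl⟩ ht)
  refine ⟨τ, hτZ, ⟨hτ.1, hτt⟩, min β u, ⟨lt_min htβ.2 htu, min_le_right _ _⟩, fun r hr hrZ => ?_⟩
  rcases le_or_gt r t with hrt | hrt
  · exact (hmax ⟨hrZ, hτ.1.trans hr.1.le, hrt⟩).not_gt hr.1
  · exact hgap ⟨htβ.1.trans hrt, hr.2.trans_le (min_le_left _ _)⟩ hrZ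

section Portion

variable {ρ : ℝ → ℝ} {v : ℝ → ℝ → ℝ} {c d c' d' s₀ t₀ l u A k n : ℝ} {Z : Set ℝ}

theorem IsHeatSolOn.abs_sub_le_of_mem_before {z t : ℝ} (hρ : Continuous ρ) (hρ₀ : ∀ s, 0 < ρ s)
    (hsol : IsHeatSolOn ρ v (Ioi 0) (Icc c d)) (hL : IsL1ContinuousInTime ρ v c d) (hl : 0 ≤ l)
    (hZ : ∀ r ∈ Ioo l u, r ∉ Z → ∀ᶠ r' in 𝓝 r, r' ∉ Z)
    (hcont : ∀ r ∈ Ioo l u, r ∉ Z → ∀ s ∈ Ioo c d, ContinuousAt (uncurry v) (r, s))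
    (hc : c < c') (hd : d' < d) (hleft : ∀ r ∈ Ioo l u, |v r c' - A| < k)
    (hright : ∀ r ∈ Ioo l u, |v r d' - A| < k)
    (hbad : ∀ r ∈ Ioo l u, r ∈ Z → ∀ s ∈ Icc c' d', |v r s - A| ≤ k)
    (hlz : l < z) (hz : z ∈ Z) (hzt : z ≤ t) (htu : t < u) :
    ∀ s ∈ Icc c' d', |v t s - A| ≤ k := by
  by_cases ht : t ∈ Z
  · exact hbad t ⟨hlz.trans_le hzt, htu⟩ ht
  obtain ⟨τ, hτZ, hτ, β, hβ, hgap⟩ := exists_last_mem_of_notMem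
    (fun r hr => hZ r ⟨hlz.trans_le hr.1, hr.2.trans_lt htu⟩) hz ht hzt htu
  have hlτ : l < τ := hlz.trans_le hτ.1
  have hsub : Ioo τ β ⊆ Ioo l u := Ioo_subset_Ioo hlτ.le hβ.2
  refine hsol.abs_sub_le_of_abs_sub_le_at_left hρ hρ₀ hL (hl.trans_lt hlτ) ?_ hc hd
    (fun r hr => hleft r (hsub hr)) (fun r hr => hright r (hsub hr))
    (hbad τ ⟨hlτ, hτ.2.trans htu⟩ hτZ) t ⟨hτ.2, hβ.1⟩
  exact fun p hp => (hcont p.1 (hsub hp.1) (hgap p.1 hp.1) p.2 hp.2).continuousWithinAt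

theorem IsHeatSolOn.exists_window {a b : ℝ} (hsol : IsHeatSolOn ρ v (Ioi 0) (Icc c d))
    (ha : 0 < a) (hn : 0 ≤ n)
    (hlip : ∀ t ∈ Ioo a b, t ∈ Z → ∀ s ∈ Icc c d, ∀ s' ∈ Icc c d, |v t s - v t s'| ≤ n * |s - s'|)
    (ht₀ : t₀ ∈ Ioo a b) (ht₀Z : t₀ ∈ Z) (hs₀ : s₀ ∈ Ioo c d) (hk : 0 < k) :
    ∃ l u c' d', t₀ ∈ Ioo l u ∧ Ioo l u ⊆ Ioo a b ∧ c < c' ∧ d' < d ∧ s₀ ∈ Ioo c' d' ∧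
      (∀ r ∈ Ioo l u, |v r c' - v t₀ s₀| < k) ∧ (∀ r ∈ Ioo l u, |v r d' - v t₀ s₀| < k) ∧
      ∀ r ∈ Ioo l u, r ∈ Z → ∀ s ∈ Icc c' d', |v r s - v t₀ s₀| ≤ k := by
  obtain ⟨w, hw, hball⟩ := Metric.nhds_basis_closedBall.mem_iff.1
    (inter_mem (Ioo_mem_nhds hs₀.1 hs₀.2) (Metric.closedBall_mem_nhds s₀
      (show 0 < k / 2 / (n + 1) by positivity)))
  have hmem : ∀ s ∈ Icc (s₀ - w) (s₀ + w), s ∈ Ioo c d ∧ n * |s - s₀| ≤ k / 2 := by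
    intro s hs
    rw [← Real.closedBall_eq_Icc] at hs
    refine ⟨(hball hs).1, ?_⟩
    have : |s - s₀| * (n + 1) ≤ k / 2 := (le_div_iff₀ (by positivity)).1 (hball hs).2
    linarith [abs_nonneg (s - s₀)]
  have hclose : ∀ r ∈ Ioo a b, r ∈ Z → ∀ s ∈ Icc (s₀ - w) (s₀ + w), |v r s - v r s₀| ≤ k / 2 :=
    fun r hr hrZ s hs => (hlip r hr hrZ s (Ioo_subset_Icc_self (hmem s hs).1) s₀
      (Ioo_subset_Icc_self hs₀)).trans (hmem s hs).2
  have hcenter : s₀ ∈ Icc (s₀ - w) (s₀ + w) := ⟨by linarith, by linarith⟩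
  have hleft : s₀ - w ∈ Icc (s₀ - w) (s₀ + w) := ⟨le_rfl, by linarith⟩
  have hright : s₀ + w ∈ Icc (s₀ - w) (s₀ + w) := ⟨by linarith, le_rfl⟩
  have hnear : ∀ s ∈ Icc (s₀ - w) (s₀ + w), ∀ᶠ r in 𝓝 t₀, |v r s - v t₀ s| < k / 2 := fun s hs =>
    Metric.tendsto_nhds.1 (hsol.continuousAt_time (ha.trans ht₀.1)
      (Ioo_subset_Icc_self (hmem s hs).1)) (k / 2) (half_pos hk)
  obtain ⟨l, u, ht₀u, hlu⟩ := mem_nhds_iff_exists_Ioo_subset.1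
    (inter_mem (Ioo_mem_nhds ht₀.1 ht₀.2)
      ((hnear _ hcenter).and ((hnear _ hleft).and (hnear _ hright))))
  refine ⟨l, u, s₀ - w, s₀ + w, ht₀u, fun r hr => (hlu hr).1, (hmem _ hleft).1.1,
    (hmem _ hright).1.2, ⟨by linarith, by linarith⟩, fun r hr => ?_, fun r hr => ?_,
    fun r hr hrZ s hs => ?_⟩
  · linarith [abs_sub_le (v r (s₀ - w)) (v t₀ (s₀ - w)) (v t₀ s₀), hclose t₀ ht₀ ht₀Z _ hleft,
      (hlu hr).2.2.1]
  · linarith [abs_sub_le (v r (s₀ + w)) (v t₀ (s₀ + w)) (v t₀ s₀), hclose t₀ ht₀ ht₀Z _ hright,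
      (hlu hr).2.2.2]
  · linarith [abs_sub_le (v r s) (v r s₀) (v t₀ s₀), hclose r (hlu hr).1 hrZ s hs, (hlu hr).2.1]

theorem IsHeatSolOn.continuousAt_of_lipschitz_on_bad_times {a b : ℝ} (hρ : Continuous ρ)
    (hρ₀ : ∀ s, 0 < ρ s) (hsol : IsHeatSolOn ρ v (Ioi 0) (Icc c d))
    (hL : IsL1ContinuousInTime ρ v c d) (ha : 0 < a) (hn : 0 ≤ n)
    (hZ : ∀ t ∈ Ioo a b, t ∉ Z → ∀ᶠ t' in 𝓝 t, t' ∉ Z)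
    (hcont : ∀ t ∈ Ioo a b, t ∉ Z → ∀ s ∈ Ioo c d, ContinuousAt (uncurry v) (t, s))
    (hlip : ∀ t ∈ Ioo a b, t ∈ Z → ∀ s ∈ Icc c d, ∀ s' ∈ Icc c d, |v t s - v t s'| ≤ n * |s - s'|)
    (ht₀ : t₀ ∈ Ioo a b) (ht₀Z : t₀ ∈ Z) (hs₀ : s₀ ∈ Ioo c d) :
    ContinuousAt (uncurry v) (t₀, s₀) := by
  suffices h : ∀ k > 0, ∀ᶠ p in 𝓝 (t₀, s₀), |v p.1 p.2 - v t₀ s₀| ≤ k by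
    refine Metric.tendsto_nhds.2 fun ε hε => (h (ε / 2) (half_pos hε)).mono fun p hp => ?_
    exact hp.trans_lt (half_lt_self hε)
  intro k hk
  obtain ⟨l, u, c', d', ht₀u, hlu, hc, hd, hs₀', hleft, hright, hbad⟩ :=
    hsol.exists_window ha hn hlip ht₀ ht₀Z hs₀ hk
  have hal : a ≤ l := ((Ioo_subset_Ioo_iff (ht₀u.1.trans ht₀u.2)).1 hlu).1
  have hafter : ∀ z ∈ Z, l < z → ∀ t, z ≤ t → t < u → ∀ s ∈ Icc c' d', |v t s - v t₀ s₀| ≤ k :=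
    fun z hz hlz t => hsol.abs_sub_le_of_mem_before hρ hρ₀ hL (ha.le.trans hal)
      (fun r hr => hZ r (hlu hr)) (fun r hr => hcont r (hlu hr)) hc hd hleft hright hbad hlz hz
  have hspace : Icc c' d' ∈ 𝓝 s₀ := Icc_mem_nhds hs₀'.1 hs₀'.2
  by_cases hbefore : ∃ z ∈ Z, z ∈ Ioo l t₀
  · obtain ⟨z, hzZ, hz⟩ := hbefore
    filter_upwards [prod_mem_nhds (Ioo_mem_nhds hz.2 ht₀u.2) hspace] with p hp
    exact hafter z hzZ hz.1 p.1 hp.1.1.le hp.1.2 p.2 hp.2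
  push Not at hbefore
  have htendsto := hsol.tendsto_left_of_continuousOn hρ hρ₀ hL (ha.trans_le hal) ht₀u.1 hs₀
    fun p hp => (hcont p.1 (hlu ⟨hp.1.1, hp.1.2.trans ht₀u.2⟩)
      (fun h => hbefore p.1 h hp.1) p.2 hp.2).continuousWithinAt
  have hlt : ∀ᶠ p in 𝓝[<] t₀ ×ˢ 𝓝 s₀, |v p.1 p.2 - v t₀ s₀| ≤ k :=
    htendsto.eventually (Metric.closedBall_mem_nhds _ hk)
  have hge : ∀ᶠ p in 𝓝[≥] t₀ ×ˢ 𝓝 s₀, |v p.1 p.2 - v t₀ s₀| ≤ k := by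
    filter_upwards [prod_mem_prod (Ico_mem_nhdsGE ht₀u.2) hspace] with p hp
    exact hafter t₀ ht₀Z ht₀u.1 p.1 hp.1.1 hp.1.2 p.2 hp.2
  rw [nhds_prod_eq, ← nhdsLT_sup_nhdsGE, Filter.sup_prod]
  exact eventually_sup.2 ⟨hlt, hge⟩

end Portion

section Baire

variable {ρ : ℝ → ℝ} {v : ℝ → ℝ → ℝ} {c d : ℝ}

theorem IsHeatSolOn.exists_lipschitz {I : Set ℝ} {t : ℝ} (hsol : IsHeatSolOn ρ v I (Icc c d))
    (ht : t ∈ I) :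
    ∃ n : ℕ, ∀ s ∈ Icc c d, ∀ s' ∈ Icc c d, |v t s - v t s'| ≤ n * |s - s'| := by
  obtain ⟨vt, vs, hsol⟩ := hsol
  obtain ⟨M, hM⟩ := isCompact_Icc.exists_bound_of_continuousOn (f := vs t)
    fun s hs => (hsol t ht s hs).2.2.continuousAt.continuousWithinAt
  obtain ⟨n, hn⟩ := exists_nat_ge M
  exact ⟨n, fun s hs s' hs' => (convex_Icc c d).norm_image_sub_le_of_norm_hasDerivWithin_le
    (fun x hx => (hsol t ht x hx).2.1.hasDerivWithinAt) (fun x hx => (hM x hx).trans hn) hs' hs⟩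

theorem IsHeatSolOn.exists_interval_lipschitz {Z : Set ℝ}
    (hsol : IsHeatSolOn ρ v (Ioi 0) (Icc c d)) (hZ : IsLocallyClosed Z) (hZ₀ : Z ⊆ Ioi 0)
    (hne : Z.Nonempty) :
    ∃ z ∈ Z, ∃ a b, 0 < a ∧ z ∈ Ioo a b ∧ ∃ n : ℕ, ∀ t ∈ Ioo a b, t ∈ Z →
      ∀ s ∈ Icc c d, ∀ s' ∈ Icc c d, |v t s - v t s'| ≤ n * |s - s'| := by
  have : LocallyCompactSpace Z := hZ.locallyCompactSpace
  have : Nonempty Z := hne.to_subtype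
  let C : ℕ → Set Z := fun n =>
    {t | ∀ s ∈ Icc c d, ∀ s' ∈ Icc c d, |v t s - v t s'| ≤ n * |s - s'|}
  have hcont : ∀ s ∈ Icc c d, Continuous fun t : Z => v t s := fun s hs =>
    continuous_iff_continuousAt.2 fun t => (hsol.continuousAt_time (hZ₀ t.2) hs).comp
      (f := ((↑) : Z → ℝ)) continuous_subtype_val.continuousAt
  have hclosed : ∀ n, IsClosed (C n) := fun n => by
    simp only [C, ofPred_forall]
    exact isClosed_biInter fun s hs => isClosed_biInter fun s' hs' =>
      isClosed_le ((hcont s hs).sub (hcont s' hs')).abs continuous_const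
  have hcover : ⋃ n, C n = univ :=
    eq_univ_of_forall fun t => mem_iUnion.2 (hsol.exists_lipschitz (hZ₀ t.2))
  obtain ⟨n, z, hz⟩ := nonempty_interior_of_iUnion_of_closed hclosed hcover
  rw [mem_interior_iff_mem_nhds, nhds_subtype, mem_comap] at hz
  obtain ⟨S, hS, hSC⟩ := hz
  obtain ⟨a, b, hab, hsub⟩ := mem_nhds_iff_exists_Ioo_subset.1 hS
  have hz₀ : (0 : ℝ) < z := hZ₀ z.2
  refine ⟨z, z.2, max a (z / 2), b, lt_max_of_lt_right (half_pos hz₀),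
    ⟨max_lt hab.1 (half_lt_self hz₀), hab.2⟩, n, fun t ht htZ => ?_⟩
  exact hSC (a := ⟨t, htZ⟩) (hsub ⟨(le_max_left _ _).trans_lt ht.1, ht.2⟩)

theorem IsHeatSolOn.continuousAt (hρ : Continuous ρ) (hρ₀ : ∀ s, 0 < ρ s)
    (hsol : IsHeatSolOn ρ v (Ioi 0) (Icc c d)) (hL : IsL1ContinuousInTime ρ v c d) {t s : ℝ}
    (ht : 0 < t) (hs : s ∈ Ioo c d) : ContinuousAt (uncurry v) (t, s) := by
  set P : ℝ → Prop := fun t => ∀ s ∈ Ioo c d, ContinuousAt (uncurry v) (t, s)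
  set G : Set ℝ := {t | ∀ᶠ t' in 𝓝 t, P t'}
  have hG : IsOpen G := isOpen_iff_eventually.2 fun t ht => eventually_eventually_nhds.2 ht
  have hGP : ∀ t ∈ G, P t := fun t ht => Eventually.self_of_nhds ht
  by_contra hts
  obtain ⟨z, hz, a, b, ha, hzab, n, hlip⟩ := hsol.exists_interval_lipschitz (Z := Ioi 0 ∩ Gᶜ)
    (isOpen_Ioi.isLocallyClosed.inter hG.isClosed_compl.isLocallyClosed) inter_subset_left
    ⟨t, ht, fun h => hts (hGP t h s hs)⟩
  have hgood : ∀ t ∈ Ioo a b, t ∉ Ioi 0 ∩ Gᶜ → t ∈ G := fun t ht hZ =>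
    by_contra fun h => hZ ⟨ha.trans ht.1, h⟩
  refine hz.2 (mem_of_superset (Ioo_mem_nhds hzab.1 hzab.2) fun t ht => ?_)
  by_cases htZ : t ∈ Ioi 0 ∩ Gᶜ
  · exact fun s hs => hsol.continuousAt_of_lipschitz_on_bad_times hρ hρ₀ hL ha n.cast_nonneg
      (fun r hr hrZ => mem_of_superset (hG.mem_nhds (hgood r hr hrZ)) fun r' hr' h => h.2 hr')
      (fun r hr hrZ => hGP r (hgood r hr hrZ)) hlip ht htZ hs
  · exact hGP t (hgood t ht htZ)

end Baire

/-! ### Scheffé's lemma and the Liouville transform -/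

theorem tendsto_integral_abs_sub_zero {α ι : Type*} [MeasurableSpace α] {m : Measure α}
    {l : Filter ι} [l.IsCountablyGenerated] {F : ι → α → ℝ} {f : α → ℝ}
    (hF : ∀ᶠ i in l, Integrable (F i) m) (hf : Integrable f m) (hF₀ : ∀ᶠ i in l, ∀ x, 0 ≤ F i x)
    (hf₀ : ∀ x, 0 ≤ f x) (hlim : ∀ x, Tendsto (fun i => F i x) l (𝓝 (f x)))
    (hint : Tendsto (fun i => ∫ x, F i x ∂m) l (𝓝 (∫ x, f x ∂m))) :
    Tendsto (fun i => ∫ x, |F i x - f x| ∂m) l (𝓝 0) := by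
  have hdeficit : Tendsto (fun i => ∫ x, max (f x - F i x) 0 ∂m) l (𝓝 (∫ _, (0 : ℝ) ∂m)) := by
    refine tendsto_integral_filter_of_dominated_convergence f ?_ ?_ hf
      (Eventually.of_forall fun x => ?_)
    · exact hF.mono fun i hi => ((hf.sub hi).sup (integrable_zero _ _ _)).aestronglyMeasurable
    · filter_upwards [hF₀] with i hi
      refine Eventually.of_forall fun x => ?_
      rw [Real.norm_of_nonneg (le_max_right _ _)]
      exact max_le (sub_le_self _ (hi x)) (hf₀ x)
    · simpa using ((tendsto_const_nhds (x := f x)).sub (hlim x)).max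
        (tendsto_const_nhds (x := (0 : ℝ)))
  have hsum : Tendsto (fun i => ∫ x, F i x ∂m - ∫ x, f x ∂m + 2 * ∫ x, max (f x - F i x) 0 ∂m) l
      (𝓝 0) := by
    simpa using (hint.sub_const (∫ x, f x ∂m)).add (hdeficit.const_mul 2)
  refine hsum.congr' ?_
  filter_upwards [hF] with i hi
  have hdiff : Integrable (fun x => F i x - f x) m := hi.sub hf
  have hpart : Integrable (fun x => 2 * max (f x - F i x) 0) m :=
    ((hf.sub hi).sup (integrable_zero _ _ _)).const_mul 2
  rw [← integral_sub hi hf, ← integral_const_mul, ← integral_add hdiff hpart]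
  congr 1 with x
  rcases le_total (F i x) (f x) with h | h
  · rw [abs_of_nonpos (sub_nonpos.2 h), max_eq_left (sub_nonneg.2 h)]
    ring
  · rw [abs_of_nonneg (sub_nonneg.2 h), max_eq_right (sub_nonpos.2 h)]
    ring

/-- `S` is a change of variable of the line with derivative `g`, and `X` is its inverse. -/
structure IsCoordinateChange (g S X : ℝ → ℝ) : Prop where
  hasDerivAt : ∀ x, HasDerivAt S (g x) x
  hasDerivAt_symm : ∀ s, HasDerivAt X (g (X s))⁻¹ s
  leftInverse : LeftInverse X S
  strictMono : StrictMono S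
  strictMono_symm : StrictMono X

namespace IsCoordinateChange

variable {g S X : ℝ → ℝ}

theorem continuous (h : IsCoordinateChange g S X) : Continuous S :=
  continuous_iff_continuousAt.2 fun x => (h.hasDerivAt x).continuousAt

theorem continuous_symm (h : IsCoordinateChange g S X) : Continuous X :=
  continuous_iff_continuousAt.2 fun s => (h.hasDerivAt_symm s).continuousAt

theorem mapsTo_symm (h : IsCoordinateChange g S X) (c d : ℝ) :
    MapsTo X (Icc (S c) (S d)) (Icc c d) := fun s hs => by
  rw [← h.leftInverse c, ← h.leftInverse d]
  exact ⟨h.strictMono_symm.monotone hs.1, h.strictMono_symm.monotone hs.2⟩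

end IsCoordinateChange

theorem exists_isCoordinateChange {g : ℝ → ℝ} {κ : ℝ} (hg : Continuous g) (hκ : 0 < κ)
    (hgκ : ∀ x, κ ≤ g x) : ∃ S X, IsCoordinateChange g S X := by
  set S : ℝ → ℝ := fun x => ∫ t in (0 : ℝ)..x, g t
  have hderiv : ∀ x, HasDerivAt S (g x) x := hasDerivAt_primitive hg
  have hmono : StrictMono S := strictMono_of_hasDerivAt_pos hderiv fun x => hκ.trans_le (hgκ x)
  have hS₀ : S 0 = 0 := intervalIntegral.integral_same
  have hlin : Monotone fun x => S x - κ * x :=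
    monotone_of_hasDerivAt_nonneg (fun x => (hderiv x).sub ((hasDerivAt_id x).const_mul κ))
      fun x => by simpa using hgκ x
  have htop : Tendsto S atTop atTop := by
    refine tendsto_atTop_mono' _ ?_ (tendsto_id.const_mul_atTop hκ)
    filter_upwards [eventually_ge_atTop 0] with x hx
    simpa [hS₀] using hlin hx
  have hbot : Tendsto S atBot atBot := by
    refine tendsto_atBot_mono' _ ?_ (tendsto_id.const_mul_atBot hκ)
    filter_upwards [eventually_le_atBot 0] with x hx
    simpa [hS₀] using hlin hx
  have hcont : Continuous S := continuous_iff_continuousAt.2 fun x => (hderiv x).continuousAt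
  let e := hmono.orderIsoOfSurjective S (hcont.surjective htop hbot)
  refine ⟨S, e.symm, hderiv, fun s => ?_, e.symm_apply_apply, hmono, e.symm.strictMono⟩
  exact (hderiv _).of_local_left_inverse e.symm.continuous.continuousAt
    (hκ.trans_le (hgκ _)).ne' (Eventually.of_forall e.apply_symm_apply)

/-- The integrating factor `m`, `m' = m W / (ν a)`, which absorbs the drift of the canonical
equation: `(ν a u_x)_x - W u_x = m (ν a u_x / m)_x`. -/
noncomputable def integratingFactor (ν a : ℝ → ℝ) (W x : ℝ) : ℝ :=
  Real.exp (∫ y in (0 : ℝ)..x, W / (ν y * a y))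

/-- The density `m / (ν a)` of the coordinate in which the canonical equation becomes
`v_ss = ρ v_t`. -/
noncomputable def liouvilleDensity (ν a : ℝ → ℝ) (W x : ℝ) : ℝ :=
  integratingFactor ν a W x / (ν x * a x)

/-- The coefficient `ρ = ν² a / m²` of the transformed equation `v_ss = ρ v_t`, as a function of
the original variable. -/
noncomputable def liouvilleWeight (ν a : ℝ → ℝ) (W x : ℝ) : ℝ :=
  ν x ^ 2 * a x / integratingFactor ν a W x ^ 2

section Liouville

variable {ν a : ℝ → ℝ} {W : ℝ}

theorem integratingFactor_pos (x : ℝ) : 0 < integratingFactor ν a W x := Real.exp_pos _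

theorem liouvilleDensity_pos (hν₀ : ∀ x, 0 < ν x) (ha₀ : ∀ x, 0 < a x) (x : ℝ) :
    0 < liouvilleDensity ν a W x :=
  div_pos (integratingFactor_pos x) (mul_pos (hν₀ x) (ha₀ x))

theorem liouvilleWeight_pos (hν₀ : ∀ x, 0 < ν x) (ha₀ : ∀ x, 0 < a x) (x : ℝ) :
    0 < liouvilleWeight ν a W x :=
  div_pos (mul_pos (pow_pos (hν₀ x) 2) (ha₀ x)) (pow_pos (integratingFactor_pos x) 2)

variable (hν : Continuous ν) (ha : Continuous a) (hν₀ : ∀ x, 0 < ν x) (ha₀ : ∀ x, 0 < a x)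

include hν₀ ha₀

theorem liouvilleWeight_mul_liouvilleDensity (x : ℝ) :
    liouvilleWeight ν a W x * liouvilleDensity ν a W x =
      (integratingFactor ν a W x)⁻¹ * ν x := by
  have := (integratingFactor_pos (ν := ν) (a := a) (W := W) x).ne'
  have := (hν₀ x).ne'
  have := (ha₀ x).ne'
  unfold liouvilleWeight liouvilleDensity
  field_simp

include hν ha

theorem hasDerivAt_integratingFactor (x : ℝ) :
    HasDerivAt (integratingFactor ν a W) (integratingFactor ν a W x * (W / (ν x * a x))) x :=
  (hasDerivAt_primitive (continuous_const.div (hν.mul ha)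
    fun x => (mul_pos (hν₀ x) (ha₀ x)).ne') x).exp

theorem continuous_integratingFactor : Continuous (integratingFactor ν a W) :=
  continuous_iff_continuousAt.2 fun x =>
    (hasDerivAt_integratingFactor hν ha hν₀ ha₀ x).continuousAt

theorem continuous_liouvilleDensity : Continuous (liouvilleDensity ν a W) :=
  (continuous_integratingFactor hν ha hν₀ ha₀).div (hν.mul ha)
    fun x => (mul_pos (hν₀ x) (ha₀ x)).ne'

theorem continuous_liouvilleWeight : Continuous (liouvilleWeight ν a W) :=
  ((hν.pow 2).mul ha).div ((continuous_integratingFactor hν ha hν₀ ha₀).pow 2)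
    fun x => (pow_pos (integratingFactor_pos x) 2).ne'

theorem exists_liouville_coordinate {c d : ℝ} (hcd : c ≤ d) :
    ∃ g S X, Continuous g ∧ IsCoordinateChange g S X ∧
      EqOn g (liouvilleDensity ν a W) (Icc c d) := by
  have hcont := continuous_liouvilleDensity (W := W) hν ha hν₀ ha₀
  obtain ⟨x₀, -, hmin⟩ := isCompact_Icc.exists_isMinOn (nonempty_Icc.2 hcd) hcont.continuousOn
  set g := IccExtend hcd ((Icc c d).domRestrict (liouvilleDensity ν a W))
  have hg : Continuous g := hcont.continuousOn.domRestrict.Icc_extend'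
  obtain ⟨S, X, hS⟩ := exists_isCoordinateChange hg (liouvilleDensity_pos hν₀ ha₀ x₀)
    fun x => hmin (projIcc c d hcd x).2
  exact ⟨g, S, X, hg, hS, fun x hx => IccExtend_of_mem hcd _ hx⟩

variable {g S X : ℝ → ℝ} {c d : ℝ} {u : ℝ → ℝ → ℝ}

theorem IsCoordinateChange.isHeatSolOn {I : Set ℝ} (hS : IsCoordinateChange g S X)
    (hgm : EqOn g (liouvilleDensity ν a W) (Icc c d)) (hsol : IsCanonicalSolOn ν a W u I) :
    IsHeatSolOn (fun s => liouvilleWeight ν a W (X s)) (fun t s => u t (X s)) I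
      (Icc (S c) (S d)) := by
  obtain ⟨ut, ux, q, hsol⟩ := hsol
  refine ⟨fun t s => ut t (X s), fun t s => ν (X s) * a (X s) * ux t (X s) /
    integratingFactor ν a W (X s), fun t ht s hs => ?_⟩
  obtain ⟨htime, hspace, hflux, heq⟩ := hsol t ht (X s)
  have hX := hS.hasDerivAt_symm s
  rw [hgm (hS.mapsTo_symm c d hs)] at hX
  have hm := (integratingFactor_pos (ν := ν) (a := a) (W := W) (X s)).ne'
  have hνX := (hν₀ (X s)).ne'
  have haX := (ha₀ (X s)).ne'
  refine ⟨htime, (hspace.comp s hX).congr_deriv ?_, ((hflux.div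
    (hasDerivAt_integratingFactor hν ha hν₀ ha₀ (X s)) hm).comp s hX).congr_deriv ?_⟩
  · unfold liouvilleDensity
    field_simp
  · rw [show q t (X s) = ν (X s) * ut t (X s) + W * ux t (X s) by linarith]
    unfold liouvilleDensity liouvilleWeight
    field_simp
    ring

theorem IsCoordinateChange.integral_weight_mul (hS : IsCoordinateChange g S X)
    (hg : Continuous g) (hcd : c ≤ d) (hgm : EqOn g (liouvilleDensity ν a W) (Icc c d))
    {f : ℝ → ℝ} (hf : Continuous f) :
    ∫ s in S c..S d, liouvilleWeight ν a W (X s) * f (X s) =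
      ∫ x in c..d, (integratingFactor ν a W x)⁻¹ * (ν x * f x) := by
  rw [← intervalIntegral.integral_comp_mul_deriv (f := S)
    (g := fun s => liouvilleWeight ν a W (X s) * f (X s)) (fun x _ => hS.hasDerivAt x)
    hg.continuousOn (((continuous_liouvilleWeight hν ha hν₀ ha₀).mul hf).comp hS.continuous_symm)]
  refine intervalIntegral.integral_congr fun x hx => ?_
  rw [uIcc_of_le hcd] at hx
  simp only [comp_apply, hS.leftInverse x, hgm hx]
  linear_combination f x * liouvilleWeight_mul_liouvilleDensity hν₀ ha₀ (W := W) x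

variable (hsol : IsCanonicalSolOn ν a W u (Ioi 0)) (hu₀ : ∀ t > 0, ∀ x, 0 ≤ u t x)
  (hmass : ∀ t > 0, ∫ x, ν x * u t x = 1)

omit hν ha hν₀ ha₀ in
theorem _root_.IsCanonicalSolOn.continuous_slice {I : Set ℝ} {t : ℝ}
    (hsol : IsCanonicalSolOn ν a W u I) (ht : t ∈ I) : Continuous (u t) := by
  obtain ⟨ut, ux, q, hsol⟩ := hsol
  exact continuous_iff_continuousAt.2 fun x => (hsol t ht x).2.1.continuousAt

omit hν ha hν₀ ha₀ in
theorem _root_.IsCanonicalSolOn.continuousAt_time {I : Set ℝ} {t : ℝ}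
    (hsol : IsCanonicalSolOn ν a W u I) (ht : t ∈ I) (x : ℝ) :
    ContinuousAt (fun τ => u τ x) t := by
  obtain ⟨ut, ux, q, hsol⟩ := hsol
  exact (hsol t ht x).1.continuousAt

include hsol hu₀ hmass

omit hν ha ha₀ in
theorem tendsto_integral_mul_abs_sub {t₀ : ℝ} (ht₀ : 0 < t₀) :
    Tendsto (fun t => ∫ x, ν x * |u t x - u t₀ x|) (𝓝 t₀) (𝓝 0) := by
  have hint : ∀ t > 0, Integrable fun x => ν x * u t x := fun t ht =>
    integrable_of_integral_eq_one (hmass t ht)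
  have hnonneg : ∀ t > 0, ∀ x, 0 ≤ ν x * u t x := fun t ht x =>
    mul_nonneg (hν₀ x).le (hu₀ t ht x)
  have hpos : ∀ᶠ t in 𝓝 t₀, 0 < t := lt_mem_nhds ht₀
  have hmass' : Tendsto (fun t => ∫ x, ν x * u t x) (𝓝 t₀) (𝓝 (∫ x, ν x * u t₀ x)) := by
    rw [hmass t₀ ht₀]
    exact tendsto_const_nhds.congr' (hpos.mono fun t ht => (hmass t ht).symm)
  have hscheffe := tendsto_integral_abs_sub_zero (hpos.mono hint) (hint t₀ ht₀)
    (hpos.mono hnonneg) (hnonneg t₀ ht₀)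
    (fun x => (hsol.continuousAt_time ht₀ x).tendsto.const_mul (ν x)) hmass'
  simpa only [← mul_sub, abs_mul, abs_of_pos (hν₀ _)] using hscheffe

theorem IsCoordinateChange.isL1ContinuousInTime (hS : IsCoordinateChange g S X)
    (hg : Continuous g) (hcd : c ≤ d) (hgm : EqOn g (liouvilleDensity ν a W) (Icc c d)) :
    IsL1ContinuousInTime (fun s => liouvilleWeight ν a W (X s)) (fun t s => u t (X s))
      (S c) (S d) := by
  have hm : Continuous fun x => (integratingFactor ν a W x)⁻¹ :=
    (continuous_integratingFactor hν ha hν₀ ha₀).inv₀ fun x => (integratingFactor_pos x).ne'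
  obtain ⟨K, hK⟩ := isCompact_Icc.exists_bound_of_continuousOn (s := Icc c d) hm.continuousOn
  intro t₀ ht₀
  have hlim := (tendsto_integral_mul_abs_sub hν₀ hsol hu₀ hmass ht₀).const_mul K
  rw [mul_zero] at hlim
  refine squeeze_zero' (Eventually.of_forall fun t => ?_) ?_ hlim
  · exact intervalIntegral.integral_nonneg (hS.strictMono.monotone hcd) fun s _ =>
      mul_nonneg (liouvilleWeight_pos hν₀ ha₀ _).le (abs_nonneg _)
  filter_upwards [lt_mem_nhds ht₀] with t ht
  have hcont : Continuous fun x => |u t x - u t₀ x| :=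
    ((hsol.continuous_slice ht).sub (hsol.continuous_slice ht₀)).abs
  have hint : Integrable fun x => ν x * |u t x - u t₀ x| := by
    have := ((integrable_of_integral_eq_one (hmass t ht)).sub
      (integrable_of_integral_eq_one (hmass t₀ ht₀))).abs
    simpa only [Pi.sub_apply, ← mul_sub, abs_mul, abs_of_pos (hν₀ _)] using this
  have hnonneg : ∀ x, 0 ≤ ν x * |u t x - u t₀ x| := fun x =>
    mul_nonneg (hν₀ x).le (abs_nonneg _)
  rw [hS.integral_weight_mul hν ha hν₀ ha₀ hg hcd hgm hcont]
  have hK₀ : 0 ≤ K := (norm_nonneg _).trans (hK c ⟨le_rfl, hcd⟩)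
  calc ∫ x in c..d, (integratingFactor ν a W x)⁻¹ * (ν x * |u t x - u t₀ x|)
      ≤ ∫ x in c..d, K * (ν x * |u t x - u t₀ x|) :=
        intervalIntegral.integral_mono_on hcd
          ((hm.mul (hν.mul hcont)).intervalIntegrable _ _)
          ((continuous_const.mul (hν.mul hcont)).intervalIntegrable _ _)
          fun x hx => mul_le_mul_of_nonneg_right ((le_abs_self _).trans (hK x hx)) (hnonneg x)
    _ = K * ∫ x in Ioc c d, ν x * |u t x - u t₀ x| := by
        rw [intervalIntegral.integral_const_mul, intervalIntegral.integral_of_le hcd]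
    _ ≤ K * ∫ x, ν x * |u t x - u t₀ x| :=
        mul_le_mul_of_nonneg_left
          (setIntegral_le_integral hint (Eventually.of_forall hnonneg)) hK₀

theorem continuousAt_uncurry_canonicalSol {t : ℝ} (ht : 0 < t) (x : ℝ) :
    ContinuousAt (uncurry u) (t, x) := by
  have hcd : x - 1 ≤ x + 1 := by linarith
  obtain ⟨g, S, X, hg, hS, hgm⟩ := exists_liouville_coordinate (W := W) hν ha hν₀ ha₀ hcd
  have hv := (hS.isHeatSolOn hν ha hν₀ ha₀ hgm hsol).continuousAt
    ((continuous_liouvilleWeight hν ha hν₀ ha₀).comp hS.continuous_symm)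
    (fun s => liouvilleWeight_pos hν₀ ha₀ _)
    (hS.isL1ContinuousInTime hν ha hν₀ ha₀ hsol hu₀ hmass hg hcd hgm) ht
    (s := S x) ⟨hS.strictMono (by linarith), hS.strictMono (by linarith)⟩
  have hmap : ContinuousAt (fun p : ℝ × ℝ => (p.1, S p.2)) (t, x) :=
    (continuous_fst.prodMk (hS.continuous.comp continuous_snd)).continuousAt
  refine (hv.comp (f := fun p : ℝ × ℝ => (p.1, S p.2)) hmap).congr
    (Eventually.of_forall fun p => ?_)
  simp [uncurry_def, hS.leftInverse p.2]

theorem eventually_hasDerivAt_integral_time_canonicalSol {t₁ t₂ : ℝ} (ht₁ : 0 < t₁)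
    (ht : t₁ ≤ t₂) (x₀ : ℝ) :
    ∃ Ux : ℝ → ℝ, ∀ᶠ x in 𝓝 x₀, HasDerivAt (fun ξ => ∫ t in t₁..t₂, u t ξ) (Ux x) x ∧
      HasDerivAt (fun ξ => ν ξ * a ξ * Ux ξ) (W * Ux x + ν x * (u t₂ x - u t₁ x)) x := by
  have hcd : x₀ - 1 ≤ x₀ + 1 := by linarith
  obtain ⟨g, S, X, -, hS, hgm⟩ := exists_liouville_coordinate (W := W) hν ha hν₀ ha₀ hcd
  have hheat := hS.isHeatSolOn hν ha hν₀ ha₀ hgm hsol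
  have hcont : ContinuousOn (uncurry fun t s => u t (X s)) (Ioi 0 ×ˢ univ) := fun p hp =>
    ((continuousAt_uncurry_canonicalSol hν ha hν₀ ha₀ hsol hu₀ hmass hp.1 (X p.2)).comp
      (f := fun p : ℝ × ℝ => (p.1, X p.2))
      (continuous_fst.prodMk (hS.continuous_symm.comp
        continuous_snd)).continuousAt).continuousWithinAt
  have hI : Ioo (t₁ / 2) (t₂ + 1) ⊆ Ioi 0 := fun t ht => (half_pos ht₁).trans ht.1
  obtain ⟨U', hU⟩ := (hheat.mono hI Ioo_subset_Icc_self).exists_hasDerivAt_integral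
    (half_lt_self ht₁) ht (lt_add_one t₂) (hcont.mono (prod_mono hI (subset_univ _)))
    ((continuous_liouvilleWeight hν ha hν₀ ha₀).comp hS.continuous_symm)
    fun s => (liouvilleWeight_pos hν₀ ha₀ _).le
  refine ⟨fun x => U' (S x) * g x, ?_⟩
  have hnear : ∀ᶠ ξ in 𝓝 x₀, ξ ∈ Ioo (x₀ - 1) (x₀ + 1) := Ioo_mem_nhds (by linarith) (by linarith)
  filter_upwards [hnear] with ξ hξ
  obtain ⟨hfirst, hsecond⟩ := hU (S ξ) ⟨hS.strictMono hξ.1, hS.strictMono hξ.2⟩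
  refine ⟨?_, ?_⟩
  · simpa only [comp_def, hS.leftInverse _] using hfirst.comp ξ (hS.hasDerivAt ξ)
  have hprod := (hasDerivAt_integratingFactor (W := W) hν ha hν₀ ha₀ ξ).mul
    (hsecond.comp ξ (hS.hasDerivAt ξ))
  refine (hprod.congr_of_eventuallyEq ?_).congr_deriv ?_
  · filter_upwards [Icc_mem_nhds hξ.1 hξ.2] with z hz
    have := (hν₀ z).ne'
    have := (ha₀ z).ne'
    simp only [hgm hz, liouvilleDensity, Pi.mul_apply, comp_apply]
    field_simp
  · have := (hν₀ ξ).ne'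
    have := (ha₀ ξ).ne'
    have := (integratingFactor_pos (ν := ν) (a := a) (W := W) ξ).ne'
    simp only [hgm (Ioo_subset_Icc_self hξ), liouvilleDensity, liouvilleWeight, comp_apply,
      hS.leftInverse ξ]
    field_simp

theorem hasDerivAt_integral_time_canonicalSol {t₁ t₂ : ℝ} (ht₁ : 0 < t₁) (ht : t₁ ≤ t₂) :
    ∃ Ux : ℝ → ℝ, ∀ x, HasDerivAt (fun ξ => ∫ t in t₁..t₂, u t ξ) (Ux x) x ∧
      HasDerivAt (fun ξ => ν ξ * a ξ * Ux ξ) (W * Ux x + ν x * (u t₂ x - u t₁ x)) x := by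
  refine ⟨deriv fun ξ => ∫ t in t₁..t₂, u t ξ, fun x => ?_⟩
  obtain ⟨Ux, hUx⟩ :=
    eventually_hasDerivAt_integral_time_canonicalSol hν ha hν₀ ha₀ hsol hu₀ hmass ht₁ ht x
  have hderiv : deriv (fun ξ => ∫ t in t₁..t₂, u t ξ) =ᶠ[𝓝 x] Ux :=
    hUx.mono fun ξ hξ => hξ.1.deriv
  rw [hderiv.eq_of_nhds]
  exact ⟨hUx.self_of_nhds.1, hUx.self_of_nhds.2.congr_of_eventuallyEq
    (hderiv.mono fun ξ hξ => congrArg (ν ξ * a ξ * ·) hξ)⟩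

end Liouville

/-! ### Exponential decay of averaged solutions -/

section Steklov

variable {G : ℝ → ℝ → ℝ} {h t n : ℝ}

theorem continuousOn_steklovAverage (hG : ContinuousOn (uncurry G) (Ioi 0 ×ˢ univ)) (hh : 0 ≤ h) :
    ContinuousOn (uncurry (steklovAverage h G)) (Ioi 0 ×ˢ univ) := by
  rintro ⟨t, n⟩ ⟨ht, -⟩
  have ht₂ : 0 < t / 2 := half_pos ht
  have hclamp : Continuous (uncurry fun τ x => G (max τ (t / 2)) x) :=
    hG.comp_continuous (f := fun p : ℝ × ℝ => (max p.1 (t / 2), p.2)) (by fun_prop)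
      fun p => ⟨lt_max_of_lt_right ht₂, mem_univ _⟩
  refine ((continuous_steklovAverage hclamp h).continuousAt.congr ?_).continuousWithinAt
  have hnear : ∀ᶠ p : ℝ × ℝ in 𝓝 (t, n), t / 2 < p.1 :=
    continuousAt_fst.eventually (lt_mem_nhds (half_lt_self ht))
  filter_upwards [hnear] with p hp
  simp only [uncurry, steklovAverage]
  congr 1
  refine intervalIntegral.integral_congr fun τ hτ => ?_
  rw [uIcc_of_le (le_add_of_nonneg_right hh)] at hτ
  simp only [max_eq_left (hp.le.trans hτ.1)]

theorem tendsto_steklovAverage {I : Set ℝ} (hG : ContinuousOn (fun τ => G τ n) I)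
    (hI : I ∈ 𝓝 t) : Tendsto (fun h => steklovAverage h G t n) (𝓝[>] 0) (𝓝 (G t n)) := by
  rw [Metric.tendsto_nhds]
  intro ε hε
  have hclose : ∀ᶠ τ in 𝓝 t, |G τ n - G t n| ≤ ε / 2 := by
    filter_upwards [Metric.tendsto_nhds.1 (hG.continuousAt hI) _ (half_pos hε)] with τ hτ
    exact hτ.le
  obtain ⟨δ, hδ, hball⟩ := Metric.mem_nhds_iff.1 (inter_mem hI hclose)
  filter_upwards [Ioo_mem_nhdsGT hδ] with h hh
  have hwindow : Icc t (t + h) ⊆ Metric.ball t δ := fun τ hτ => by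
    rw [Metric.mem_ball, Real.dist_eq, abs_of_nonneg (sub_nonneg.2 hτ.1)]
    linarith [hτ.2, hh.2]
  exact (abs_steklovAverage_sub_le hh.1 (hG.mono fun τ hτ => (hball (hwindow hτ)).1)
    fun τ hτ => (hball (hwindow hτ)).2).trans_lt (half_lt_self hε)

end Steklov

/-- Continuous functions on positive times, with values in `[0, 1]`, whose Steklov averages in
time solve `g_t = A g_nn - W g_n`. Averaging supplies the derivatives that the distribution
function of a fundamental solution is not known to possess. -/
structure IsAveragedSol (A : ℝ → ℝ) (W : ℝ) (G : ℝ → ℝ → ℝ) : Prop where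
  continuousOn : ContinuousOn (uncurry G) (Ioi 0 ×ˢ univ)
  nonneg : ∀ t > 0, ∀ n, 0 ≤ G t n
  le_one : ∀ t > 0, ∀ n, G t n ≤ 1
  steklov : ∀ h > 0, IsDriftDiffusionSolOn A W (steklovAverage h G) (Ioi 0 ×ˢ univ)

namespace IsAveragedSol

variable {A : ℝ → ℝ} {W : ℝ} {G : ℝ → ℝ → ℝ}

theorem continuousOn_time (hG : IsAveragedSol A W G) (n : ℝ) :
    ContinuousOn (fun τ => G τ n) (Ioi 0) :=
  hG.continuousOn.comp (f := fun τ => (τ, n)) (by fun_prop) fun _ hτ => ⟨hτ, mem_univ n⟩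

theorem tendsto_steklovAverage (hG : IsAveragedSol A W G) {t : ℝ} (ht : 0 < t) (n : ℝ) :
    Tendsto (fun h => steklovAverage h G t n) (𝓝[>] 0) (𝓝 (G t n)) :=
  GaussianBound.tendsto_steklovAverage (hG.continuousOn_time n) (Ioi_mem_nhds ht)

theorem steklovAverage_le (hG : IsAveragedSol A W G) {h t n k : ℝ} (hh : 0 < h) (ht : 0 < t)
    (hk : ∀ τ ∈ Icc t (t + h), G τ n ≤ k) : steklovAverage h G t n ≤ k :=
  GaussianBound.steklovAverage_le hh
    ((hG.continuousOn_time n).mono fun _ hτ => ht.trans_le hτ.1) hk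

theorem le_steklovAverage (hG : IsAveragedSol A W G) {h t n k : ℝ} (hh : 0 < h) (ht : 0 < t)
    (hk : ∀ τ ∈ Icc t (t + h), k ≤ G τ n) : k ≤ steklovAverage h G t n :=
  GaussianBound.le_steklovAverage hh
    ((hG.continuousOn_time n).mono fun _ hτ => ht.trans_le hτ.1) hk

theorem one_sub (hG : IsAveragedSol A W G) : IsAveragedSol A W (fun t n => 1 - G t n) where
  continuousOn := continuousOn_const.sub hG.continuousOn
  nonneg t ht n := sub_nonneg.2 (hG.le_one t ht n)
  le_one t ht n := sub_le_self 1 (hG.nonneg t ht n)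
  steklov h hh := by
    obtain ⟨gn, gnn, hg⟩ := hG.steklov h hh
    have havg : ∀ t > 0, ∀ n, steklovAverage h (fun t n => 1 - G t n) t n =
        1 - steklovAverage h G t n := fun t ht n => by
      have hint : IntervalIntegrable (fun τ => G τ n) volume t (t + h) :=
        ((hG.continuousOn_time n).mono fun _ hτ => ht.trans_le hτ.1).intervalIntegrable_of_Icc
          (by linarith)
      simp only [steklovAverage]
      rw [intervalIntegral.integral_sub (by simp) hint, intervalIntegral.integral_const,
        add_sub_cancel_left, smul_eq_mul, mul_one, mul_sub, inv_mul_cancel₀ hh.ne']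
    refine ⟨fun t n => -gn t n, fun t n => -gnn t n, fun t n ht => ?_⟩
    obtain ⟨htime, hfirst, hsecond⟩ := hg t n ht
    refine ⟨?_, ?_, hsecond.neg⟩
    · refine ((htime.const_sub 1).congr_of_eventuallyEq ?_).congr_deriv (by ring)
      filter_upwards [Ioi_mem_nhds ht.1] with τ hτ using havg τ hτ n
    · exact (hfirst.const_sub 1).congr_of_eventuallyEq (Eventually.of_forall (havg t ht.1))

theorem reflect (hG : IsAveragedSol A W G) :
    IsAveragedSol (fun n => A (-n)) (-W) (fun t n => G t (-n)) where
  continuousOn := hG.continuousOn.comp (f := fun p : ℝ × ℝ => (p.1, -p.2)) (by fun_prop)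
    fun _ hp => ⟨hp.1, mem_univ _⟩
  nonneg t ht n := hG.nonneg t ht (-n)
  le_one t ht n := hG.le_one t ht (-n)
  steklov h hh := by
    obtain ⟨gn, gnn, hg⟩ := hG.steklov h hh
    refine ⟨fun t n => -gn t (-n), fun t n => gnn t (-n), fun t n ht => ?_⟩
    obtain ⟨htime, hfirst, hsecond⟩ := hg t (-n) ⟨ht.1, mem_univ _⟩
    have hneg : HasDerivAt (fun x : ℝ => -x) (-1) n := hasDerivAt_neg n
    exact ⟨htime.congr_deriv (by ring), (hfirst.comp n hneg).congr_deriv (by ring),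
      (hsecond.comp n hneg).neg.congr_deriv (by ring)⟩

end IsAveragedSol

/-- The barrier `exp(-β ξ + Λ β² s) + κ (ξ² + 2 Λ s)`, where `s = t - t₁` and `ξ = n - m - W s`:
a solution of `b_t = Λ b_nn - W b_n`, convex in `n`, whose quadratic part dominates bounded
functions at spatial infinity. -/
noncomputable def tailBarrier (Λ W β κ t₁ m t n : ℝ) : ℝ :=
  Real.exp (-β * (n - m - W * (t - t₁)) + Λ * β ^ 2 * (t - t₁)) +
    κ * ((n - m - W * (t - t₁)) ^ 2 + 2 * Λ * (t - t₁))

section Tail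

variable {A : ℝ → ℝ} {W Λ β κ t₁ t₂ m t n ε : ℝ}

theorem hasDerivAt_tailBarrier (Λ W β κ t₁ m : ℝ) : ∃ bn bnn : ℝ → ℝ → ℝ, ∀ t n,
    HasDerivAt (fun τ => tailBarrier Λ W β κ t₁ m τ n) (Λ * bnn t n - W * bn t n) t ∧
    HasDerivAt (tailBarrier Λ W β κ t₁ m t) (bn t n) n ∧ HasDerivAt (bn t) (bnn t n) n ∧
    (0 ≤ κ → 0 ≤ bnn t n) := by
  set E : ℝ → ℝ → ℝ := fun t n =>
    Real.exp (-β * (n - m - W * (t - t₁)) + Λ * β ^ 2 * (t - t₁))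
  refine ⟨fun t n => -β * E t n + 2 * κ * (n - m - W * (t - t₁)),
    fun t n => β ^ 2 * E t n + 2 * κ, fun t n => ?_⟩
  have hs : HasDerivAt (fun τ : ℝ => τ - t₁) 1 t := (hasDerivAt_id t).sub_const t₁
  have hξt : HasDerivAt (fun τ => n - m - W * (τ - t₁)) (-W) t := by
    simpa using (hs.const_mul W).const_sub (n - m)
  have hξn : HasDerivAt (fun x => x - m - W * (t - t₁)) 1 n :=
    ((hasDerivAt_id n).sub_const m).sub_const (W * (t - t₁))
  have hEt : HasDerivAt (fun τ => E τ n) ((Λ * β ^ 2 + W * β) * E t n) t :=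
    ((hξt.const_mul (-β)).add (hs.const_mul (Λ * β ^ 2))).exp.congr_deriv
      (by simp only [E, Pi.add_apply]; ring)
  have hEn : HasDerivAt (E t) (-β * E t n) n :=
    ((hξn.const_mul (-β)).add_const (Λ * β ^ 2 * (t - t₁))).exp.congr_deriv
      (by simp only [E]; ring)
  refine ⟨?_, ?_, ?_, fun hκ => by positivity⟩
  · exact (hEt.add (((hξt.pow 2).add (hs.const_mul (2 * Λ))).const_mul κ)).congr_deriv
      (by simp; ring)
  · exact (hEn.add (((hξn.pow 2).add_const (2 * Λ * (t - t₁))).const_mul κ)).congr_deriv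
      (by simp; ring)
  · exact ((hEn.const_mul (-β)).add (hξn.const_mul (2 * κ))).congr_deriv (by ring)

theorem tailBarrier_nonneg (hκ : 0 ≤ κ) (hΛ : 0 ≤ Λ) (ht : t₁ ≤ t) :
    0 ≤ tailBarrier Λ W β κ t₁ m t n := by
  have := sub_nonneg.2 ht
  unfold tailBarrier
  positivity

theorem one_le_tailBarrier_left (hκ : 0 ≤ κ) (hβ : 0 ≤ β) (hn : n ≤ m) :
    1 ≤ tailBarrier Λ W β κ t₁ m t₁ n := by
  have hexp : 1 ≤ Real.exp (-β * (n - m)) :=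
    Real.one_le_exp (mul_nonneg_of_nonpos_of_nonpos (neg_nonpos.2 hβ) (sub_nonpos.2 hn))
  have hquad : 0 ≤ κ * (n - m) ^ 2 := by positivity
  simp only [tailBarrier, sub_self, mul_zero, sub_zero, add_zero]
  linarith

theorem one_le_tailBarrier (hκ : 0 < κ) (hΛ : 0 ≤ Λ) (ht : t ∈ Icc t₁ t₂)
    (hn : |W| * (t₂ - t₁) + (1 / κ + 1) ≤ |n - m|) : 1 ≤ tailBarrier Λ W β κ t₁ m t n := by
  have hs : 0 ≤ t - t₁ := sub_nonneg.2 ht.1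
  have hshift : |W * (t - t₁)| ≤ |W| * (t₂ - t₁) := by
    rw [abs_mul, abs_of_nonneg hs]
    exact mul_le_mul_of_nonneg_left (sub_le_sub_right ht.2 t₁) (abs_nonneg W)
  have hξ : 1 / κ + 1 ≤ |n - m - W * (t - t₁)| := by
    linarith [abs_sub_abs_le_abs_sub (n - m) (W * (t - t₁))]
  calc 1 ≤ 1 / κ + 2 + κ := by linarith [one_div_pos.2 hκ]
    _ = κ * (1 / κ + 1) ^ 2 := by field_simp; ring
    _ ≤ κ * (n - m - W * (t - t₁)) ^ 2 := by
        rw [← sq_abs (n - m - W * (t - t₁))]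
        gcongr
    _ ≤ κ * ((n - m - W * (t - t₁)) ^ 2 + 2 * Λ * (t - t₁)) := by
        gcongr
        exact le_add_of_nonneg_right (by positivity)
    _ ≤ tailBarrier Λ W β κ t₁ m t n := le_add_of_nonneg_left (Real.exp_pos _).le

section Comparison

variable {z : ℝ → ℝ → ℝ} (ht : t₁ ≤ t₂) (hcont : ContinuousOn (uncurry z) (Icc t₁ t₂ ×ˢ univ))
  (hsol : IsDriftDiffusionSolOn A W z (Icc t₁ t₂ ×ˢ univ)) (hA₀ : ∀ n, 0 ≤ A n)
  (hA : ∀ n, A n ≤ Λ) (hβ : 0 ≤ β) (hε : 0 ≤ ε) (hz₁ : ∀ t ∈ Icc t₁ t₂, ∀ n, z t n ≤ 1)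
  (hzε : ∀ n, m ≤ n → z t₁ n ≤ ε)

include ht hcont hsol hA₀ hA hβ hε hz₁ hzε

theorem le_add_tailBarrier (hκ : 0 < κ) (n : ℝ) :
    z t₂ n ≤ ε + tailBarrier Λ W β κ t₁ m t₂ n := by
  have hΛ : 0 ≤ Λ := (hA₀ 0).trans (hA 0)
  obtain ⟨zn, znn, hz⟩ := hsol
  obtain ⟨bn, bnn, hb⟩ := hasDerivAt_tailBarrier Λ W β κ t₁ m
  set L := |W| * (t₂ - t₁) + (1 / κ + 1) + |n - m|
  have hL : |n - m| ≤ L := le_add_of_nonneg_left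
    (add_nonneg (mul_nonneg (abs_nonneg W) (sub_nonneg.2 ht)) (by positivity))
  have hlateral : ∀ t ∈ Icc t₁ t₂, ∀ x, |x - m| = L →
      z t x - (ε + tailBarrier Λ W β κ t₁ m t x) ≤ 0 := fun t ht' x hx => by
    have hfar : |W| * (t₂ - t₁) + (1 / κ + 1) ≤ |x - m| :=
      (le_add_of_nonneg_right (abs_nonneg (n - m))).trans_eq hx.symm
    linarith [hz₁ t ht' x, one_le_tailBarrier (β := β) hκ hΛ ht' hfar]
  refine sub_nonpos.1 (weak_maximum_principle (c := m - L) (d := m + L)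
    (z := fun t n => z t n - (ε + tailBarrier Λ W β κ t₁ m t n)) (A := A) (W := W)
    (zt := fun t n => (A n * znn t n - W * zn t n) - (Λ * bnn t n - W * bn t n))
    (zx := fun t n => zn t n - bn t n) (zxx := fun t n => znn t n - bnn t n) ?_
    (fun t ht' x _ => ?_) (fun x _ => hA₀ x) (fun x _ => ?_)
    (fun t ht' => hlateral t ht' _ (by simpa using (abs_nonneg _).trans hL))
    (fun t ht' => hlateral t ht' _ (by simpa using (abs_nonneg _).trans hL)) ⟨ht, le_rfl⟩
    (x := n) ⟨by linarith [(abs_le.1 hL).1], by linarith [(abs_le.1 hL).2]⟩)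
  · refine (hcont.mono (prod_mono_right (subset_univ _))).sub (Continuous.continuousOn ?_)
    unfold tailBarrier
    fun_prop
  · obtain ⟨hzt, hzx, hzxx⟩ := hz t x ⟨Ioc_subset_Icc_self ht', mem_univ x⟩
    obtain ⟨hbt, hbx, hbxx, hconvex⟩ := hb t x
    refine ⟨hzt.sub (hbt.const_add ε), hzx.sub (hbx.const_add ε), hzxx.sub hbxx, ?_⟩
    linarith [mul_le_mul_of_nonneg_right (hA x) (hconvex hκ.le)]
  · rcases le_total m x with hx | hx
    · linarith [hzε x hx, tailBarrier_nonneg (W := W) (β := β) (m := m) (n := x) hκ.le hΛ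
        (le_refl t₁)]
    · linarith [hz₁ t₁ ⟨le_rfl, ht⟩ x,
        one_le_tailBarrier_left (Λ := Λ) (W := W) (t₁ := t₁) hκ.le hβ hx]

theorem le_add_exp_of_le_right (n : ℝ) :
    z t₂ n ≤ ε + Real.exp (-β * (n - m - W * (t₂ - t₁)) + Λ * β ^ 2 * (t₂ - t₁)) := by
  refine le_of_forall_pos_le_add_mul
    (K := (n - m - W * (t₂ - t₁)) ^ 2 + 2 * Λ * (t₂ - t₁)) fun κ hκ => ?_
  rw [add_assoc]
  exact le_add_tailBarrier ht hcont hsol hA₀ hA hβ hε hz₁ hzε hκ n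

end Comparison

theorem IsAveragedSol.le_add_exp {G : ℝ → ℝ → ℝ} {τ₀ : ℝ} (hG : IsAveragedSol A W G)
    (hA₀ : ∀ n, 0 ≤ A n) (hA : ∀ n, A n ≤ Λ) (hβ : 0 ≤ β) (hε : 0 ≤ ε)
    (hsmall : ∀ τ ∈ Ioo 0 τ₀, ∀ n, m ≤ n → G τ n ≤ ε) (ht₁ : 0 < t₁) (ht₁τ : t₁ < τ₀)
    (ht : t₁ ≤ t) (n : ℝ) :
    G t n ≤ ε + Real.exp (-β * (n - m - W * (t - t₁)) + Λ * β ^ 2 * (t - t₁)) := by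
  refine le_of_tendsto (hG.tendsto_steklovAverage (ht₁.trans_le ht) n) ?_
  filter_upwards [Ioo_mem_nhdsGT (sub_pos.2 ht₁τ)] with h hh
  have hpos : Icc t₁ t ×ˢ univ ⊆ Ioi (0 : ℝ) ×ˢ (univ : Set ℝ) :=
    prod_mono_left fun s hs => ht₁.trans_le hs.1
  obtain ⟨gn, gnn, hg⟩ := hG.steklov h hh.1
  refine le_add_exp_of_le_right ht ((continuousOn_steklovAverage hG.continuousOn hh.1.le).mono hpos)
    ⟨gn, gnn, fun s x hs => hg s x (hpos hs)⟩ hA₀ hA hβ hε (fun s hs x => ?_) (fun x hx => ?_) n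
  · have hs₀ : 0 < s := ht₁.trans_le hs.1
    exact hG.steklovAverage_le hh.1 hs₀ fun τ hτ => hG.le_one τ (hs₀.trans_le hτ.1) x
  · exact hG.steklovAverage_le hh.1 ht₁ fun τ hτ =>
      hsmall τ ⟨ht₁.trans_le hτ.1, by linarith [hτ.2, hh.2]⟩ x hx

theorem IsAveragedSol.le_exp {G : ℝ → ℝ → ℝ} (hG : IsAveragedSol A W G)
    (hA₀ : ∀ n, 0 ≤ A n) (hA : ∀ n, A n ≤ Λ) (hmono : ∀ t > 0, Antitone (G t))
    (hinit : ∀ κ > 0, Tendsto (fun t => G t (m + κ)) (𝓝[>] 0) (𝓝 0)) (hβ : 0 ≤ β) (ht : 0 < t)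
    (n : ℝ) : G t n ≤ Real.exp (-β * (n - m - W * t) + Λ * β ^ 2 * t) := by
  have hκ : ∀ κ > 0, G t n ≤ κ + Real.exp (-β * (n - (m + κ) - W * t) + Λ * β ^ 2 * t) := by
    intro κ hκ
    obtain ⟨τ₀, hτ₀, hsmall⟩ :=
      mem_nhdsGT_iff_exists_Ioo_subset.1 ((hinit κ hκ).eventually_le_const hκ)
    have hlim : Tendsto (fun t₁ => κ + Real.exp (-β * (n - (m + κ) - W * (t - t₁)) +
        Λ * β ^ 2 * (t - t₁))) (𝓝[>] 0)
        (𝓝 (κ + Real.exp (-β * (n - (m + κ) - W * (t - 0)) + Λ * β ^ 2 * (t - 0)))) :=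
      tendsto_nhdsWithin_of_tendsto_nhds (Continuous.tendsto (by fun_prop) 0)
    rw [sub_zero] at hlim
    refine ge_of_tendsto hlim ?_
    filter_upwards [Ioo_mem_nhdsGT hτ₀, Ioo_mem_nhdsGT ht] with t₁ hτ₁ ht₁
    exact hG.le_add_exp hA₀ hA hβ hκ.le
      (fun τ hτ x hx => (hmono τ hτ.1 hx).trans (hsmall hτ)) hτ₁.1 hτ₁.2 ht₁.2.le n
  have hlim : Tendsto (fun κ => κ + Real.exp (-β * (n - (m + κ) - W * t) + Λ * β ^ 2 * t))
      (𝓝[>] 0) (𝓝 (0 + Real.exp (-β * (n - (m + 0) - W * t) + Λ * β ^ 2 * t))) :=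
    tendsto_nhdsWithin_of_tendsto_nhds (Continuous.tendsto (by fun_prop) 0)
  rw [zero_add, add_zero] at hlim
  exact ge_of_tendsto hlim (eventually_mem_nhdsWithin.mono hκ)

end Tail

/-! ### The Gaussian gradient bound -/

theorem deriv_le_of_sub_le_add_sq {f : ℝ → ℝ} {f' x₀ c K : ℝ} (hf : HasDerivAt f f' x₀)
    (hbound : ∀ᶠ x in 𝓝[>] x₀, f x - f x₀ ≤ c * (x - x₀) + K * (x - x₀) ^ 2) : f' ≤ c := by
  have hid : HasDerivAt (fun x => x - x₀) 1 x₀ := (hasDerivAt_id x₀).sub_const x₀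
  have hdefect : HasDerivAt (fun x => f x - (c * (x - x₀) + K * (x - x₀) ^ 2)) (f' - c) x₀ :=
    (hf.sub ((hid.const_mul c).add ((hid.pow 2).const_mul K))).congr_deriv (by simp)
  refine sub_nonpos.1 (nonpos_of_hasDerivAt_of_eventually_right_le hdefect ?_)
  filter_upwards [hbound] with x hx
  simp only [sub_self, mul_zero, ne_eq, OfNat.ofNat_ne_zero, not_false_eq_true, zero_pow, add_zero,
    sub_zero]
  linarith

namespace IsAveragedSol

variable {A : ℝ → ℝ} {W lam Λ m t n₀ G' : ℝ} {G : ℝ → ℝ → ℝ}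

section Gradient

variable {k M δ η R : ℝ} (hG : IsAveragedSol A W G) (hlam : 0 < lam) (hA : ∀ n, lam ≤ A n)
  (hδ : 0 < δ) (hδt : δ < t) (hη : 0 < η) (hR : 0 < R)
  (hrange : ∀ τ ∈ Icc (t - δ) (t + η), ∀ x, |x - (n₀ + W * (τ - t))| ≤ R + η →
    k ≤ G τ x ∧ G τ x ≤ k + M)

include hG hδt hη hrange

theorem eventually_steklovAverage_mem : ∀ᶠ h in 𝓝[>] 0, ∀ s x, (s, x) ∈ driftCylinder W t δ n₀ R →
    k ≤ steklovAverage h G s x ∧ steklovAverage h G s x ≤ k + M := by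
  have hshift : ∀ᶠ h in 𝓝[>] (0 : ℝ), |W| * h < η :=
    (tendsto_nhdsWithin_of_tendsto_nhds (Continuous.tendsto' (by fun_prop) 0 0
      (by simp))).eventually_lt_const hη
  filter_upwards [Ioo_mem_nhdsGT hη, hshift] with h hh hWh s x hsx
  obtain ⟨hs, hx⟩ := hsx
  have hs₀ : 0 < s := by linarith [hs.1]
  have hwindow : ∀ τ ∈ Icc s (s + h), k ≤ G τ x ∧ G τ x ≤ k + M := fun τ hτ => by
    refine hrange τ ⟨hs.1.trans hτ.1, by linarith [hτ.2, hs.2, hh.2]⟩ x ?_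
    have hWτ : |W * (τ - s)| ≤ |W| * h := by
      rw [abs_mul, abs_of_nonneg (sub_nonneg.2 hτ.1)]
      exact mul_le_mul_of_nonneg_left (by linarith [hτ.2]) (abs_nonneg W)
    calc |x - (n₀ + W * (τ - t))| = |(x - (n₀ + W * (s - t))) - W * (τ - s)| := by ring_nf
      _ ≤ |x - (n₀ + W * (s - t))| + |W * (τ - s)| := abs_sub _ _
      _ ≤ R + η := add_le_add hx (hWτ.trans hWh.le)
  exact ⟨hG.le_steklovAverage hh.1 hs₀ fun τ hτ => (hwindow τ hτ).1,
    hG.steklovAverage_le hh.1 hs₀ fun τ hτ => (hwindow τ hτ).2⟩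

include hlam hA hδ hR

theorem sub_le_of_mem_cylinder {x : ℝ} (hx : n₀ ≤ x) (hxR : x ≤ n₀ + R) :
    G t x - G t n₀ ≤ 4 * R * (2 * (M / R ^ 2) + M / δ / (2 * lam)) * (x - n₀) +
      M / R ^ 2 * (x - n₀) ^ 2 := by
  have ht : 0 < t := hδ.trans hδt
  have hM : 0 ≤ M := by
    have := hrange t ⟨by linarith, by linarith⟩ n₀ (by simpa using (add_pos hR hη).le)
    linarith
  refine le_of_tendsto ((hG.tendsto_steklovAverage ht x).sub (hG.tendsto_steklovAverage ht n₀)) ?_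
  filter_upwards [hG.eventually_steklovAverage_mem hδt hη hrange, self_mem_nhdsWithin]
    with h hmem hh
  have hpos : driftCylinder W t δ n₀ R ⊆ Ioi 0 ×ˢ univ := fun p hp =>
    ⟨(sub_pos.2 hδt).trans_le hp.1.1, mem_univ _⟩
  obtain ⟨gn, gnn, hg⟩ := hG.steklov h hh
  have hestimate := kruzhkov_estimate (x := x) (y := n₀) (x₀ := n₀) (A := A) (R := R)
    ⟨gn, gnn, fun s y hs => hg s y ⟨(sub_pos.2 hδt).trans hs.1.1, mem_univ _⟩⟩
    ((continuousOn_steklovAverage hG.continuousOn (le_of_lt hh)).mono hpos) (fun _ y _ => hA y)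
    (fun s y y' hy hy' => by linarith [(hmem s y hy).2, (hmem s y' hy').1])
    hlam hδ hR hM hx (by rw [abs_of_nonneg] <;> linarith) (by simpa using hR.le)
  simpa using hestimate

theorem deriv_le (hderiv : HasDerivAt (G t) G' n₀) :
    G' ≤ 4 * R * (2 * (M / R ^ 2) + M / δ / (2 * lam)) := by
  refine deriv_le_of_sub_le_add_sq (K := M / R ^ 2) hderiv ?_
  filter_upwards [Ioo_mem_nhdsGT (lt_add_of_pos_right n₀ hR)] with x hx
  exact hG.sub_le_of_mem_cylinder hlam hA hδ hδt hη hR hrange hx.1.le hx.2.le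

end Gradient

section Gaussian

variable (hG : IsAveragedSol A W G) (hmono : ∀ t > 0, Monotone (G t))

section Tails

variable {β : ℝ} (hA₀ : ∀ n, 0 ≤ A n) (hA : ∀ n, A n ≤ Λ) (hβ : 0 ≤ β) (ht : 0 < t) (n : ℝ)

include hG hmono hA₀ hA hβ ht

theorem one_sub_exp_le (hright : ∀ κ > 0, Tendsto (fun t => G t (m + κ)) (𝓝[>] 0) (𝓝 1)) :
    1 - Real.exp (-β * (n - m - W * t) + Λ * β ^ 2 * t) ≤ G t n := by
  have := hG.one_sub.le_exp (m := m) hA₀ hA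
    (fun t ht x y hxy => sub_le_sub_left (hmono t ht hxy) 1)
    (fun κ hκ => by simpa using (hright κ hκ).const_sub 1) hβ ht n
  linarith

theorem le_exp_of_monotone (hleft : ∀ κ > 0, Tendsto (fun t => G t (m - κ)) (𝓝[>] 0) (𝓝 0)) :
    G t n ≤ Real.exp (β * (n - m - W * t) + Λ * β ^ 2 * t) := by
  have := hG.reflect.le_exp (m := -m) (fun n => hA₀ _) (fun n => hA _)
    (fun t ht x y hxy => hmono t ht (neg_le_neg hxy))
    (fun κ hκ => by simpa only [neg_add, neg_neg, ← sub_eq_add_neg] using hleft κ hκ) hβ ht (-n)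
  rw [neg_neg] at this
  convert this using 3
  ring

end Tails

variable (hlam : 0 < lam) (hA : ∀ n, lam ≤ A n) (hAΛ : ∀ n, A n ≤ Λ) (ht : 0 < t)
  (hright : ∀ κ > 0, Tendsto (fun t => G t (m + κ)) (𝓝[>] 0) (𝓝 1))
  (hleft : ∀ κ > 0, Tendsto (fun t => G t (m - κ)) (𝓝[>] 0) (𝓝 0))

include hG hmono hlam hA hAΛ ht hright hleft

theorem deriv_le_exp {β η : ℝ} (hβ : 0 ≤ β) (hη : 0 < η) (hderiv : HasDerivAt (G t) G' n₀) :
    G' ≤ 4 * (2 + 1 / lam) / √t *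
      Real.exp (-β * (|n₀ - m - W * t| - √t - η) + Λ * β ^ 2 * (t + η)) := by
  have hR : 0 < √t := Real.sqrt_pos.2 ht
  have hA₀ : ∀ n, 0 ≤ A n := fun n => hlam.le.trans (hA n)
  have hΛ : 0 ≤ Λ := (hA₀ 0).trans (hAΛ 0)
  set D := n₀ - m - W * t
  set M := Real.exp (-β * (|D| - √t - η) + Λ * β ^ 2 * (t + η))
  have hM : ∀ τ ≤ t + η, ∀ r, |D| - √t - η ≤ r → Real.exp (-β * r + Λ * β ^ 2 * τ) ≤ M :=
    fun τ hτ r hr => Real.exp_le_exp.2 <| add_le_add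
      (mul_le_mul_of_nonpos_left hr (neg_nonpos.2 hβ))
      (mul_le_mul_of_nonneg_left hτ (by positivity))
  obtain ⟨k, hk⟩ : ∃ k, ∀ τ ∈ Icc (t - t / 2) (t + η), ∀ x,
      |x - (n₀ + W * (τ - t))| ≤ √t + η → k ≤ G τ x ∧ G τ x ≤ k + M := by
    rcases le_total 0 D with hD₀ | hD₀
    · refine ⟨1 - M, fun τ hτ x hx => ?_⟩
      have hτ₀ : 0 < τ := by linarith [hτ.1]
      have htail := hG.one_sub_exp_le hmono hA₀ hAΛ hβ hτ₀ x hright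
      have hle := hM τ hτ.2 (x - m - W * τ) (by
        rw [abs_of_nonneg hD₀]
        linarith [(abs_le.1 hx).1])
      exact ⟨by linarith, by linarith [hG.le_one τ hτ₀ x]⟩
    · refine ⟨0, fun τ hτ x hx => ?_⟩
      have hτ₀ : 0 < τ := by linarith [hτ.1]
      have htail := hG.le_exp_of_monotone hmono hA₀ hAΛ hβ hτ₀ x hleft
      have hle := hM τ hτ.2 (-(x - m - W * τ)) (by
        rw [abs_of_nonpos hD₀]
        linarith [(abs_le.1 hx).2])
      rw [neg_mul_neg] at hle
      exact ⟨hG.nonneg τ hτ₀ x, by linarith⟩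
  refine (hG.deriv_le hlam hA (half_pos ht) (half_lt_self ht) hη hR hk hderiv).trans_eq ?_
  have hsq := Real.sq_sqrt ht.le
  rw [hsq]
  field_simp
  rw [hsq]
  ring

theorem deriv_le_gaussian (hderiv : HasDerivAt (G t) G' n₀) :
    G' ≤ 4 * (2 + 1 / lam) / √t *
      (Real.exp (1 / (2 * Λ)) * Real.exp (-(n₀ - m - W * t) ^ 2 / (8 * Λ * t))) := by
  have hΛ : 0 < Λ := hlam.trans_le ((hA 0).trans (hAΛ 0))
  set D := n₀ - m - W * t
  -- This slope minimises the exponent `-β |D| + Λ β² t`.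
  set β := |D| / (2 * Λ * t)
  have hβ : 0 ≤ β := by positivity
  have hlim : Tendsto (fun η => 4 * (2 + 1 / lam) / √t *
      Real.exp (-β * (|D| - √t - η) + Λ * β ^ 2 * (t + η))) (𝓝[>] 0)
      (𝓝 (4 * (2 + 1 / lam) / √t *
        Real.exp (-β * (|D| - √t - 0) + Λ * β ^ 2 * (t + 0)))) :=
    tendsto_nhdsWithin_of_tendsto_nhds (Continuous.tendsto (by fun_prop) 0)
  rw [sub_zero, add_zero] at hlim
  have hle := ge_of_tendsto hlim (eventually_mem_nhdsWithin.mono fun η hη =>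
    hG.deriv_le_exp hmono hlam hA hAΛ ht hright hleft hβ hη hderiv)
  have hexponent : 1 / (2 * Λ) + -D ^ 2 / (8 * Λ * t) - (-β * (|D| - √t) + Λ * β ^ 2 * t) =
      (|D| - 2 * √t) ^ 2 / (8 * Λ * t) := by
    rw [← sq_abs D, sub_sq, mul_pow, Real.sq_sqrt ht.le]
    simp only [β]
    field_simp
    ring
  rw [← Real.exp_add]
  refine hle.trans (mul_le_mul_of_nonneg_left (Real.exp_le_exp.2 (sub_nonneg.1 ?_)) (by positivity))
  rw [hexponent]
  positivity

end Gaussian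

end IsAveragedSol

/-! ### The cumulative mass and its flux -/

theorem tendsto_atTop_of_hasDerivAt_ge {f f' : ℝ → ℝ} {δ : ℝ} (hδ : 0 < δ)
    (hf : ∀ x, HasDerivAt f (f' x) x) (hf' : ∀ᶠ x in atTop, δ ≤ f' x) :
    Tendsto f atTop atTop := by
  obtain ⟨x₀, hx₀⟩ := eventually_atTop.1 hf'
  have hlin : Tendsto (fun x => f x₀ + δ * (x - x₀)) atTop atTop :=
    tendsto_atTop_add_const_left _ _
      ((tendsto_atTop_add_const_right _ (-x₀) tendsto_id).const_mul_atTop hδ)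
  refine tendsto_atTop_mono' _ ?_ hlin
  filter_upwards [eventually_ge_atTop x₀] with x hx
  have hmvt := Convex.mul_sub_le_image_sub_of_le_deriv (f := f) (convex_Ici x₀)
    (fun y _ => (hf y).continuousAt.continuousWithinAt)
    (fun y _ => (hf y).differentiableAt.differentiableWithinAt)
    (fun y hy => (hx₀ y (interior_subset hy)).trans_eq (hf y).deriv.symm)
    x₀ self_mem_Ici x hx hx
  linarith

theorem hasDerivAt_integral_Iic {w : ℝ → ℝ} (hw : Continuous w) (hint : Integrable w) (x : ℝ) :
    HasDerivAt (fun ξ => ∫ z in Iic ξ, w z) (w x) x := by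
  have hsplit : (fun ξ => ∫ z in Iic ξ, w z) =
      fun ξ => (∫ z in Iic (0 : ℝ), w z) + ∫ z in (0 : ℝ)..ξ, w z := by
    funext ξ
    rw [← intervalIntegral.integral_Iic_sub_Iic hint.integrableOn hint.integrableOn]
    ring
  rw [hsplit]
  exact (hasDerivAt_primitive hw x).const_add _

section FluxConstant

variable {c ν U Ux Ψ R : ℝ → ℝ} {W k K lam κ M : ℝ}
  (hν : ∀ x, κ ≤ ν x) (hc : ∀ x, lam ≤ c x) (hcK : ∀ x, c x ≤ K)
  (hκ : 0 < κ) (hlam : 0 < lam) (hU : ∀ x, HasDerivAt U (Ux x) x) (hU₀ : ∀ x, 0 ≤ U x)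
  (hΨ : ∀ x, HasDerivAt Ψ (ν x * U x) x) (hΨM : ∀ x, Ψ x ≤ M)
  (hR : Tendsto R atTop (𝓝 k)) (hflux : ∀ x, c x * Ux x - W * U x = R x)

include hν hc hκ hlam hU₀ in
theorem abs_drift_le (x : ℝ) : |W * U x| ≤ c x * (|W| / (lam * κ) * (ν x * U x)) := by
  have hcν : lam * κ ≤ c x * ν x := mul_le_mul (hc x) (hν x) hκ.le (hlam.le.trans (hc x))
  have hcν₁ : 1 ≤ c x * ν x / (lam * κ) := (one_le_div (by positivity)).2 hcν
  calc |W * U x| = |W| * U x := by rw [abs_mul, abs_of_nonneg (hU₀ x)]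
    _ ≤ |W| * U x * (c x * ν x / (lam * κ)) :=
      le_mul_of_one_le_right (mul_nonneg (abs_nonneg W) (hU₀ x)) hcν₁
    _ = c x * (|W| / (lam * κ) * (ν x * U x)) := by ring

include hν hc hcK hκ hlam hU hU₀ hΨ hΨM hR hflux

theorem flux_limit_nonneg : 0 ≤ k := by
  -- As `Ψ` is bounded above, a negative limit would force `U` to become negative.
  by_contra! hk
  have hK : 0 < K := hlam.trans_le ((hc 0).trans (hcK 0))
  have hL : 0 ≤ |W| / (lam * κ) := by positivity
  have hδ : 0 < -(k / 2) / K := div_pos (by linarith) hK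
  have hgrow : Tendsto (fun x => |W| / (lam * κ) * Ψ x - U x) atTop atTop := by
    refine tendsto_atTop_of_hasDerivAt_ge hδ (fun x => ((hΨ x).const_mul _).sub (hU x)) ?_
    filter_upwards [hR.eventually_lt_const (show k < k / 2 by linarith)] with x hx
    have hcx : 0 < c x := hlam.trans_le (hc x)
    have hdrift := (abs_le.1 (abs_drift_le (W := W) hν hc hκ hlam hU₀ x)).2
    refine (div_le_div_of_nonneg_left (by linarith) hcx (hcK x)).trans ((div_le_iff₀' hcx).2 ?_)
    linarith [hflux x]
  obtain ⟨x, hx⟩ := (hgrow.eventually_gt_atTop (|W| / (lam * κ) * M)).exists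
  linarith [hU₀ x, mul_le_mul_of_nonneg_left (hΨM x) hL]

theorem flux_limit_nonpos : k ≤ 0 := by
  by_contra! hk
  have hK : 0 < K := hlam.trans_le ((hc 0).trans (hcK 0))
  have hL : 0 ≤ |W| / (lam * κ) := by positivity
  have hδ : 0 < k / 2 / K := by positivity
  have hgrow : Tendsto (fun x => U x + |W| / (lam * κ) * Ψ x) atTop atTop := by
    refine tendsto_atTop_of_hasDerivAt_ge hδ (fun x => (hU x).add ((hΨ x).const_mul _)) ?_
    filter_upwards [hR.eventually_const_lt (show k / 2 < k by linarith)] with x hx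
    have hcx : 0 < c x := hlam.trans_le (hc x)
    have hdrift := (abs_le.1 (abs_drift_le (W := W) hν hc hκ hlam hU₀ x)).1
    refine (div_le_div_of_nonneg_left (by linarith) hcx (hcK x)).trans ((div_le_iff₀' hcx).2 ?_)
    linarith [hflux x]
  have hΨ_grow : Tendsto Ψ atTop atTop := by
    refine tendsto_atTop_of_hasDerivAt_ge hκ hΨ ?_
    filter_upwards [hgrow.eventually_ge_atTop (1 + |W| / (lam * κ) * M)] with x hx
    have hUx : 1 ≤ U x := by linarith [mul_le_mul_of_nonneg_left (hΨM x) hL]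
    simpa only [mul_one] using mul_le_mul (hν x) hUx zero_le_one (hκ.le.trans (hν x))
  obtain ⟨x, hx⟩ := (hΨ_grow.eventually_gt_atTop M).exists
  exact (hΨM x).not_gt hx

theorem flux_limit_eq_zero : k = 0 :=
  le_antisymm (flux_limit_nonpos hν hc hcK hκ hlam hU hU₀ hΨ hΨM hR hflux)
    (flux_limit_nonneg hν hc hcK hκ hlam hU hU₀ hΨ hΨM hR hflux)

end FluxConstant

theorem _root_.Elliptic.pos {μ : ℝ} {f : ℝ → ℝ} (hf : Elliptic μ f) (hμ : 0 < μ) (x : ℝ) :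
    0 < f x :=
  (one_div_pos.2 hμ).trans_le (hf x).1

/-- The mass `∫_{-∞}^x ν u(t)` carried by the half-line on the left of `x`. -/
noncomputable def cumulativeMass (ν : ℝ → ℝ) (u : ℝ → ℝ → ℝ) (t x : ℝ) : ℝ :=
  ∫ z in Iic x, ν z * u t z

section CumulativeMass

variable {ν a : ℝ → ℝ} {W : ℝ} {u : ℝ → ℝ → ℝ}

section Density

variable {t : ℝ} (hν₀ : ∀ x, 0 < ν x) (hu₀ : ∀ x, 0 ≤ u t x) (hmass : ∫ x, ν x * u t x = 1)

include hν₀ hu₀ in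
theorem cumulativeMass_nonneg (x : ℝ) : 0 ≤ cumulativeMass ν u t x :=
  setIntegral_nonneg measurableSet_Iic fun z _ => mul_nonneg (hν₀ z).le (hu₀ z)

include hν₀ hu₀ hmass in
theorem monotone_cumulativeMass : Monotone (cumulativeMass ν u t) := fun _ _ hxy =>
  setIntegral_mono_set (integrable_of_integral_eq_one hmass).integrableOn
    (Eventually.of_forall fun z => mul_nonneg (hν₀ z).le (hu₀ z))
    (Iic_subset_Iic.2 hxy).eventuallyLE

include hν₀ hu₀ hmass in
theorem cumulativeMass_le_one (x : ℝ) : cumulativeMass ν u t x ≤ 1 :=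
  (setIntegral_le_integral (integrable_of_integral_eq_one hmass)
    (Eventually.of_forall fun z => mul_nonneg (hν₀ z).le (hu₀ z))).trans_eq hmass

include hmass in
theorem tendsto_cumulativeMass_atTop : Tendsto (cumulativeMass ν u t) atTop (𝓝 1) := by
  rw [← hmass]
  exact (aecover_Iic tendsto_id).integral_tendsto_of_countably_generated
    (integrable_of_integral_eq_one hmass)

end Density

variable (hν : Continuous ν) (ha : Continuous a) (hν₀ : ∀ x, 0 < ν x) (ha₀ : ∀ x, 0 < a x)
  (hsol : IsCanonicalSolOn ν a W u (Ioi 0)) (hu₀ : ∀ t > 0, ∀ x, 0 ≤ u t x)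
  (hmass : ∀ t > 0, ∫ x, ν x * u t x = 1)

include hν hsol hmass in
theorem hasDerivAt_cumulativeMass {t : ℝ} (ht : 0 < t) (x : ℝ) :
    HasDerivAt (cumulativeMass ν u t) (ν x * u t x) x :=
  hasDerivAt_integral_Iic (hν.mul (hsol.continuous_slice ht))
    (integrable_of_integral_eq_one (hmass t ht)) x

include hν₀ hmass in
theorem abs_cumulativeMass_sub_le {t₀ t : ℝ} (ht₀ : 0 < t₀) (ht : 0 < t) (x : ℝ) :
    |cumulativeMass ν u t x - cumulativeMass ν u t₀ x| ≤ ∫ z, ν z * |u t z - u t₀ z| := by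
  have hint : ∀ t > 0, Integrable fun z => ν z * u t z := fun t ht =>
    integrable_of_integral_eq_one (hmass t ht)
  rw [cumulativeMass, cumulativeMass,
    ← integral_sub (hint t ht).integrableOn (hint t₀ ht₀).integrableOn]
  calc |∫ z in Iic x, (ν z * u t z - ν z * u t₀ z)|
      ≤ ∫ z in Iic x, |ν z * u t z - ν z * u t₀ z| := abs_integral_le_integral_abs
    _ ≤ ∫ z, |ν z * u t z - ν z * u t₀ z| :=
      setIntegral_le_integral ((hint t ht).sub (hint t₀ ht₀)).abs
        (Eventually.of_forall fun z => abs_nonneg _)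
    _ = ∫ z, ν z * |u t z - u t₀ z| := by
      congr 1 with z
      rw [← mul_sub, abs_mul, abs_of_pos (hν₀ z)]

include hν hν₀ hsol hu₀ hmass

theorem continuousOn_uncurry_cumulativeMass :
    ContinuousOn (uncurry (cumulativeMass ν u)) (Ioi 0 ×ˢ univ) := by
  rintro ⟨t₀, x₀⟩ ⟨ht₀, -⟩
  refine ContinuousAt.continuousWithinAt ?_
  have hfst : Tendsto Prod.fst (𝓝 (t₀, x₀)) (𝓝 t₀) := continuous_fst.tendsto _
  have htime : Tendsto (fun p : ℝ × ℝ => cumulativeMass ν u p.1 p.2 - cumulativeMass ν u t₀ p.2)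
      (𝓝 (t₀, x₀)) (𝓝 0) := by
    refine squeeze_zero_norm' ?_
      ((tendsto_integral_mul_abs_sub hν₀ hsol hu₀ hmass ht₀).comp hfst)
    filter_upwards [hfst.eventually (lt_mem_nhds ht₀)] with p hp
    exact abs_cumulativeMass_sub_le hν₀ hmass ht₀ hp p.2
  have hspace : Tendsto (fun p : ℝ × ℝ => cumulativeMass ν u t₀ p.2) (𝓝 (t₀, x₀))
      (𝓝 (cumulativeMass ν u t₀ x₀)) :=
    (hasDerivAt_cumulativeMass hν hsol hmass ht₀ x₀).continuousAt.tendsto.comp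
      (continuous_snd.tendsto _)
  have := htime.add hspace
  simp only [sub_add_cancel, zero_add] at this
  exact this

theorem continuousOn_cumulativeMass_time (x : ℝ) :
    ContinuousOn (fun t => cumulativeMass ν u t x) (Ioi 0) :=
  (continuousOn_uncurry_cumulativeMass hν hν₀ hsol hu₀ hmass).comp (f := fun t => (t, x))
    (by fun_prop) fun _ ht => ⟨ht, mem_univ x⟩

include ha ha₀

theorem hasDerivAt_steklovAverage_cumulativeMass {t h : ℝ} (ht : 0 < t) (hh : 0 < h) (x : ℝ) :
    HasDerivAt (steklovAverage h (cumulativeMass ν u) t) (ν x * steklovAverage h u t x) x := by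
  have hmax : ∀ τ, 0 < max τ t := fun τ => lt_max_of_lt_right ht
  have hclamp : ∀ f : ℝ → ℝ, ∫ τ in t..t + h, f (max τ t) = ∫ τ in t..t + h, f τ := fun f =>
    intervalIntegral.integral_congr fun τ hτ => by
      rw [uIcc_of_le (by linarith)] at hτ
      simp only [max_eq_left hτ.1]
  have hF : ∀ ξ, Continuous fun τ => cumulativeMass ν u (max τ t) ξ := fun ξ =>
    (continuousOn_cumulativeMass_time hν hν₀ hsol hu₀ hmass ξ).comp_continuous
      (by fun_prop) hmax
  have hu : Continuous (uncurry fun ξ τ => ν ξ * u (max τ t) ξ) :=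
    continuous_iff_continuousAt.2 fun p => (hν.continuousAt.comp continuousAt_fst).mul <|
      ContinuousAt.comp (f := fun p : ℝ × ℝ => (max p.2 t, p.1)) (g := uncurry u)
        (continuousAt_uncurry_canonicalSol hν ha hν₀ ha₀ hsol hu₀ hmass (hmax p.2) p.1)
        (by fun_prop)
  have hderiv := (hasDerivAt_integral_of_hasDerivAt hF hu
    (fun ξ τ => hasDerivAt_cumulativeMass hν hsol hmass (hmax τ) ξ) t (t + h) x).const_mul h⁻¹
  refine (hderiv.congr_deriv ?_).congr_of_eventuallyEq (Eventually.of_forall fun ξ => ?_)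
  · rw [hclamp fun τ => ν x * u τ x, intervalIntegral.integral_const_mul, steklovAverage]
    ring
  · exact congrArg (h⁻¹ * ·) (hclamp fun τ => cumulativeMass ν u τ ξ).symm

end CumulativeMass

section Averaged

variable {ν a X : ℝ → ℝ} {W μ : ℝ} {u : ℝ → ℝ → ℝ} (hν : Continuous ν) (ha : Continuous a)
  (hμ : 0 < μ) (hνμ : Elliptic μ ν) (haμ : Elliptic μ a)
  (hsol : IsCanonicalSolOn ν a W u (Ioi 0)) (hu₀ : ∀ t > 0, ∀ x, 0 ≤ u t x)
  (hmass : ∀ t > 0, ∫ x, ν x * u t x = 1)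

include hν ha hμ hνμ haμ hsol hu₀ hmass

theorem steklovAverage_flux_limit_eq_zero {Ux : ℝ → ℝ} {k t h : ℝ} (ht : 0 < t) (hh : 0 < h)
    (hU : ∀ x, HasDerivAt (steklovAverage h u t) (Ux x) x)
    (hR : Tendsto (fun x => ν x * a x * Ux x - W * steklovAverage h u t x) atTop (𝓝 k)) :
    k = 0 := by
  have hν₀ := hνμ.pos hμ
  have ha₀ := haμ.pos hμ
  have hpos : ∀ τ ∈ Icc t (t + h), 0 < τ := fun τ hτ => ht.trans_le hτ.1
  exact flux_limit_eq_zero (c := fun x => ν x * a x) (κ := 1 / μ) (lam := 1 / μ * (1 / μ))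
    (K := μ * μ) (M := 1) (fun x => (hνμ x).1)
    (fun x => mul_le_mul (hνμ x).1 (haμ x).1 (by positivity) (hν₀ x).le)
    (fun x => mul_le_mul (hνμ x).2 (haμ x).2 (ha₀ x).le hμ.le)
    (by positivity) (by positivity) hU
    (fun x => le_steklovAverage hh
      (fun τ hτ => (hsol.continuousAt_time (hpos τ hτ) x).continuousWithinAt)
      fun τ hτ => hu₀ τ (hpos τ hτ) x)
    (hasDerivAt_steklovAverage_cumulativeMass hν ha hν₀ ha₀ hsol hu₀ hmass ht hh)
    (fun x => steklovAverage_le hh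
      ((continuousOn_cumulativeMass_time hν hν₀ hsol hu₀ hmass x).mono hpos)
      fun τ hτ => cumulativeMass_le_one hν₀ (hu₀ τ (hpos τ hτ)) (hmass τ (hpos τ hτ)) x)
    hR fun _ => rfl

theorem exists_hasDerivAt_steklovAverage_flux {t h : ℝ} (ht : 0 < t) (hh : 0 < h) :
    ∃ Ux : ℝ → ℝ, ∀ x, HasDerivAt (steklovAverage h u t) (Ux x) x ∧
      ν x * a x * Ux x - W * steklovAverage h u t x =
        h⁻¹ * (cumulativeMass ν u (t + h) x - cumulativeMass ν u t x) := by
  have hth : 0 < t + h := by linarith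
  obtain ⟨Ix, hIx⟩ := hasDerivAt_integral_time_canonicalSol hν ha (hνμ.pos hμ) (haμ.pos hμ)
    hsol hu₀ hmass ht (le_add_of_nonneg_right hh.le)
  have hU : ∀ x, HasDerivAt (steklovAverage h u t) (h⁻¹ * Ix x) x := fun x =>
    (hIx x).1.const_mul h⁻¹
  set N := fun x => h⁻¹ * (cumulativeMass ν u (t + h) x - cumulativeMass ν u t x)
  set R := fun x => ν x * a x * (h⁻¹ * Ix x) - W * steklovAverage h u t x
  have hRN : ∀ x, HasDerivAt (fun x => R x - N x) 0 x := fun x => by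
    have hflux := (((hIx x).2.const_mul h⁻¹).sub ((hU x).const_mul W)).sub
      (((hasDerivAt_cumulativeMass hν hsol hmass hth x).sub
        (hasDerivAt_cumulativeMass hν hsol hmass ht x)).const_mul h⁻¹)
    refine (hflux.congr_deriv (by ring)).congr_of_eventuallyEq (Eventually.of_forall fun ξ => ?_)
    simp only [R, N, Pi.sub_apply]
    ring
  have hR : ∀ x, R x = N x + (R 0 - N 0) := fun x => by
    rw [← is_const_of_deriv_eq_zero (fun x => (hRN x).differentiableAt)
      (fun x => (hRN x).deriv) x 0, add_sub_cancel]
  have hN : Tendsto N atTop (𝓝 0) := by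
    simpa using ((tendsto_cumulativeMass_atTop (hmass _ hth)).sub
      (tendsto_cumulativeMass_atTop (hmass _ ht))).const_mul h⁻¹
  have hRlim : Tendsto R atTop (𝓝 (R 0 - N 0)) := by
    simpa only [← hR, zero_add] using hN.add_const (R 0 - N 0)
  have hconst : R 0 - N 0 = 0 :=
    steklovAverage_flux_limit_eq_zero hν ha hμ hνμ haμ hsol hu₀ hmass ht hh hU hRlim
  exact ⟨fun x => h⁻¹ * Ix x, fun x => ⟨hU x, (hR x).trans (by rw [hconst, add_zero])⟩⟩

theorem isAveragedSol_cumulativeMass (hX : ∀ s, HasDerivAt X (ν (X s))⁻¹ s) :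
    IsAveragedSol (fun n => a (X n) * ν (X n) ^ 2) W fun t n => cumulativeMass ν u t (X n) := by
  have hν₀ := hνμ.pos hμ
  have ha₀ := haμ.pos hμ
  have hXc : Continuous X := continuous_iff_continuousAt.2 fun s => (hX s).continuousAt
  refine ⟨(continuousOn_uncurry_cumulativeMass hν hν₀ hsol hu₀ hmass).comp
      (f := fun p : ℝ × ℝ => (p.1, X p.2)) (by fun_prop) fun p hp => ⟨hp.1, mem_univ _⟩,
    fun t ht n => cumulativeMass_nonneg hν₀ (hu₀ t ht) _,
    fun t ht n => cumulativeMass_le_one hν₀ (hu₀ t ht) (hmass t ht) _, fun h hh => ?_⟩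
  choose! Ux hUx using fun t ht =>
    exists_hasDerivAt_steklovAverage_flux hν ha hμ hνμ haμ hsol hu₀ hmass (t := t) ht hh
  refine ⟨fun t n => steklovAverage h u t (X n), fun t n => Ux t (X n) * (ν (X n))⁻¹, ?_⟩
  rintro t n ⟨ht : 0 < t, -⟩
  obtain ⟨hU, hflux⟩ := hUx t ht (X n)
  have hνX := (hν₀ (X n)).ne'
  refine ⟨?_, ?_, hU.comp n (hX n)⟩
  · refine (hasDerivAt_steklovAverage isOpen_Ioi ordConnected_Ioi
      (continuousOn_cumulativeMass_time hν hν₀ hsol hu₀ hmass (X n)) ht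
      (show 0 < t + h by positivity)).congr_deriv ?_
    rw [← hflux]
    field_simp
  · refine ((hasDerivAt_steklovAverage_cumulativeMass hν ha hν₀ ha₀ hsol hu₀ hmass ht hh
      (X n)).comp n (hX n)).congr_deriv ?_
    field_simp

end Averaged

/-! ### Solutions with a pole and the initial step function -/

/-- A nonnegative classical solution of the canonical equation, of total mass one for the weight
`ν`, which tends to the point mass at `y` as the time tends to zero: a section `P(·, ·, y)` of a
fundamental solution, without the semigroup property. -/
structure IsPoleSolution (ν a : ℝ → ℝ) (W y : ℝ) (u : ℝ → ℝ → ℝ) : Prop where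
  sol : IsCanonicalSolOn ν a W u (Ioi 0)
  nonneg : ∀ t > 0, ∀ x, 0 ≤ u t x
  mass : ∀ t > 0, ∫ x, ν x * u t x = 1
  tendsto : ∀ φ : ℝ → ℝ, Continuous φ → (∃ B, ∀ x, |φ x| ≤ B) →
    Tendsto (fun t => ∫ x, ν x * u t x * φ x) (𝓝[>] 0) (𝓝 (φ y))

theorem _root_.IsFundSol.isPoleSolution {ν a : ℝ → ℝ} {W : ℝ} {P : ℝ → ℝ → ℝ → ℝ}
    (hP : IsFundSol ν a W P) (y : ℝ) : IsPoleSolution ν a W y fun t x => P t x y :=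
  ⟨hP.1 y, hP.2.1 y, hP.2.2.1 y, hP.2.2.2.1 y⟩

/-- The continuous test function equal to `1` on the left of `b`, to `0` on the right of `c`, and
affine on `[b, c]`. -/
noncomputable def linearCutoff (b c x : ℝ) : ℝ := max 0 (min 1 ((c - x) / (c - b)))

section LinearCutoff

variable {b c x : ℝ}

theorem continuous_linearCutoff (b c : ℝ) : Continuous (linearCutoff b c) := by
  unfold linearCutoff
  fun_prop

theorem linearCutoff_nonneg (b c x : ℝ) : 0 ≤ linearCutoff b c x := le_max_left _ _

theorem linearCutoff_le_one (b c x : ℝ) : linearCutoff b c x ≤ 1 :=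
  max_le zero_le_one (min_le_left _ _)

theorem linearCutoff_eq_one (hbc : b < c) (hx : x ≤ b) : linearCutoff b c x = 1 := by
  have : 1 ≤ (c - x) / (c - b) := (one_le_div (sub_pos.2 hbc)).2 (by linarith)
  rw [linearCutoff, min_eq_left this, max_eq_right zero_le_one]

theorem linearCutoff_eq_zero (hbc : b < c) (hx : c ≤ x) : linearCutoff b c x = 0 :=
  max_eq_left ((min_le_right _ _).trans
    (div_nonpos_of_nonpos_of_nonneg (sub_nonpos.2 hx) (sub_pos.2 hbc).le))

theorem abs_linearCutoff_le (b c x : ℝ) : |linearCutoff b c x| ≤ 1 :=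
  (abs_of_nonneg (linearCutoff_nonneg b c x)).trans_le (linearCutoff_le_one b c x)

variable {w : ℝ → ℝ} (hw : Integrable w) (hw₀ : ∀ x, 0 ≤ w x)

include hw in
theorem integrable_mul_linearCutoff (b c : ℝ) : Integrable fun x => w x * linearCutoff b c x :=
  hw.mul_bdd (c := 1) (continuous_linearCutoff b c).aestronglyMeasurable
    (Eventually.of_forall (abs_linearCutoff_le b c))

include hw hw₀

theorem integral_Iic_le_integral_mul_linearCutoff (hbc : b < c) :
    ∫ x in Iic b, w x ≤ ∫ x, w x * linearCutoff b c x :=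
  calc ∫ x in Iic b, w x = ∫ x in Iic b, w x * linearCutoff b c x :=
        setIntegral_congr_fun measurableSet_Iic fun x hx => by
          simp only [linearCutoff_eq_one hbc hx, mul_one]
    _ ≤ ∫ x, w x * linearCutoff b c x :=
        setIntegral_le_integral (integrable_mul_linearCutoff hw b c)
          (Eventually.of_forall fun x => mul_nonneg (hw₀ x) (linearCutoff_nonneg b c x))

theorem integral_mul_linearCutoff_le_integral_Iic (hbc : b < c) :
    ∫ x, w x * linearCutoff b c x ≤ ∫ x in Iic c, w x := by
  rw [← setIntegral_eq_integral_of_forall_compl_eq_zero (s := Iic c) fun x hx => by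
    rw [linearCutoff_eq_zero hbc (not_le.1 hx).le, mul_zero]]
  exact setIntegral_mono (integrable_mul_linearCutoff hw b c).integrableOn hw.integrableOn
    fun x => mul_le_of_le_one_right (hw₀ x) (linearCutoff_le_one b c x)

end LinearCutoff

namespace IsPoleSolution

variable {ν a S X : ℝ → ℝ} {W y z : ℝ} {u : ℝ → ℝ → ℝ}

theorem tendsto_cumulativeMass_one (hu : IsPoleSolution ν a W y u) (hν₀ : ∀ x, 0 < ν x)
    (hz : y < z) : Tendsto (fun t => cumulativeMass ν u t z) (𝓝[>] 0) (𝓝 1) := by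
  have hlim := hu.tendsto _ (continuous_linearCutoff y z) ⟨1, abs_linearCutoff_le y z⟩
  rw [linearCutoff_eq_one hz le_rfl] at hlim
  refine tendsto_of_tendsto_of_tendsto_of_le_of_le' hlim tendsto_const_nhds ?_ ?_
  · filter_upwards [self_mem_nhdsWithin] with t ht
    exact integral_mul_linearCutoff_le_integral_Iic (integrable_of_integral_eq_one (hu.mass t ht))
      (fun x => mul_nonneg (hν₀ x).le (hu.nonneg t ht x)) hz
  · filter_upwards [self_mem_nhdsWithin] with t ht
    exact cumulativeMass_le_one hν₀ (hu.nonneg t ht) (hu.mass t ht) z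

theorem tendsto_cumulativeMass_zero (hu : IsPoleSolution ν a W y u) (hν₀ : ∀ x, 0 < ν x)
    (hz : z < y) : Tendsto (fun t => cumulativeMass ν u t z) (𝓝[>] 0) (𝓝 0) := by
  have hlim := hu.tendsto _ (continuous_linearCutoff z y) ⟨1, abs_linearCutoff_le z y⟩
  rw [linearCutoff_eq_zero hz le_rfl] at hlim
  refine tendsto_of_tendsto_of_tendsto_of_le_of_le' tendsto_const_nhds hlim ?_ ?_
  · filter_upwards [self_mem_nhdsWithin] with t ht
    exact cumulativeMass_nonneg hν₀ (hu.nonneg t ht) z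
  · filter_upwards [self_mem_nhdsWithin] with t ht
    exact integral_Iic_le_integral_mul_linearCutoff (integrable_of_integral_eq_one (hu.mass t ht))
      (fun x => mul_nonneg (hν₀ x).le (hu.nonneg t ht x)) hz

theorem le_gaussian_mass {μ t : ℝ} (hu : IsPoleSolution ν a W y u) (hν : Continuous ν)
    (ha : Continuous a) (hμ : 0 < μ) (hνμ : Elliptic μ ν) (haμ : Elliptic μ a)
    (hS : IsCoordinateChange ν S X) (ht : 0 < t) (x : ℝ) :
    u t x ≤ 4 * (2 + μ ^ 3) / √t * (Real.exp (1 / (2 * μ ^ 3)) *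
      Real.exp (-(S x - S y - W * t) ^ 2 / (8 * μ ^ 3 * t))) := by
  have hν₀ := hνμ.pos hμ
  have hderiv : HasDerivAt (fun n => cumulativeMass ν u t (X n)) (u t x) (S x) := by
    refine ((hasDerivAt_cumulativeMass hν hu.sol hu.mass ht _).comp _
      (hS.hasDerivAt_symm (S x))).congr_deriv ?_
    rw [hS.leftInverse x, mul_right_comm, mul_inv_cancel₀ (hν₀ x).ne', one_mul]
  have hinv : 0 ≤ 1 / μ := by positivity
  have hbound := (isAveragedSol_cumulativeMass hν ha hμ hνμ haμ hu.sol hu.nonneg hu.mass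
    hS.hasDerivAt_symm).deriv_le_gaussian (m := S y)
    (fun t ht => (monotone_cumulativeMass hν₀ (hu.nonneg t ht) (hu.mass t ht)).comp
      hS.strictMono_symm.monotone)
    (show 0 < 1 / μ * (1 / μ) ^ 2 by positivity)
    (fun n => mul_le_mul (haμ _).1 (pow_le_pow_left₀ hinv (hνμ _).1 2) (by positivity)
      (haμ.pos hμ _).le)
    (fun n => mul_le_mul (haμ _).2 (pow_le_pow_left₀ (hν₀ _).le (hνμ _).2 2) (by positivity) hμ.le)
    ht
    (fun κ hκ => hu.tendsto_cumulativeMass_one hν₀ <| by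
      simpa only [hS.leftInverse y] using hS.strictMono_symm (lt_add_of_pos_right (S y) hκ))
    (fun κ hκ => hu.tendsto_cumulativeMass_zero hν₀ <| by
      simpa only [hS.leftInverse y] using hS.strictMono_symm (sub_lt_self (S y) hκ)) hderiv
  have hcube : 1 / (1 / μ * (1 / μ) ^ 2) = μ ^ 3 := by field_simp
  rwa [hcube, show μ * μ ^ 2 = μ ^ 3 by ring] at hbound

end IsPoleSolution

/-! ### Comparison of the corrector with the mass coordinate -/

theorem abs_sub_le_abs_sub_of_hasDerivAt {f g f' g' : ℝ → ℝ} (hf : ∀ x, HasDerivAt f (f' x) x)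
    (hg : ∀ x, HasDerivAt g (g' x) x) (hfg : ∀ x, |f' x| ≤ g' x) (x y : ℝ) :
    |f x - f y| ≤ |g x - g y| := by
  have hsub : Monotone (g - f) := monotone_of_hasDerivAt_nonneg
    (fun x => (hg x).sub (hf x)) fun x => sub_nonneg.2 (le_of_abs_le (hfg x))
  have hadd : Monotone (g + f) := monotone_of_hasDerivAt_nonneg
    (fun x => (hg x).add (hf x)) fun x =>
      neg_le_iff_add_nonneg'.1 (neg_le_of_abs_le (hfg x))
  wlog hxy : y ≤ x generalizing x y
  · rw [abs_sub_comm (f x), abs_sub_comm (g x)]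
    exact this y x (le_of_not_ge hxy)
  have h₁ : g y - f y ≤ g x - f x := hsub hxy
  have h₂ : g y + f y ≤ g x + f x := hadd hxy
  exact (abs_le.2 ⟨by linarith, by linarith⟩).trans (le_abs_self _)

section Corrector

variable {ν a S T : ℝ → ℝ} {W μ : ℝ} (hμ : 0 < μ) (hT : IsCorrector μ ν a W T)
  (hνμ : Elliptic μ ν) (hS : ∀ x, HasDerivAt S (ν x) x)

include hμ hT hνμ hS

theorem _root_.IsCorrector.abs_sub_le_mul_mass (x y : ℝ) :
    |T x - T y| ≤ μ ^ 6 * |S x - S y| := by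
  obtain ⟨-, T', hT', -, hT'μ⟩ := hT
  suffices |T x - T y| ≤ |μ ^ 6 * S x - μ ^ 6 * S y| by
    rwa [← mul_sub, abs_mul, abs_of_nonneg (by positivity : 0 ≤ μ ^ 6)] at this
  refine abs_sub_le_abs_sub_of_hasDerivAt hT' (fun x => (hS x).const_mul (μ ^ 6))
    (fun x => ?_) x y
  have hT'₀ : 0 ≤ T' x := le_trans (by positivity) (hT'μ x).1
  calc |T' x| = T' x := abs_of_nonneg hT'₀
    _ ≤ μ ^ 5 := (hT'μ x).2
    _ = μ ^ 6 * (1 / μ) := by field_simp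
    _ ≤ μ ^ 6 * ν x := by gcongr; exact (hνμ x).1

theorem _root_.IsCorrector.abs_mul_abs_sub_mass_le (haμ : Elliptic μ a) (x y : ℝ) :
    |W| * |T x - T y - (S x - S y)| ≤ μ ^ 7 := by
  obtain ⟨-, T', hT', hflux, hT'μ⟩ := hT
  have hconst : ∀ x, HasDerivAt (fun x => a x * ν x * T' x - W * (T x - S x)) 0 x := fun x =>
    ((hflux x).sub (((hT' x).sub (hS x)).const_mul W)).congr_deriv (by ring)
  have heq := is_const_of_deriv_eq_zero (fun x => (hconst x).differentiableAt)
    (fun x => (hconst x).deriv) x y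
  have hmem : ∀ x, a x * ν x * T' x ∈ Icc 0 (μ ^ 7) := fun x => by
    have hν₀ := hνμ.pos hμ x
    have ha₀ := haμ.pos hμ x
    have hT'₀ : 0 ≤ T' x := le_trans (by positivity) (hT'μ x).1
    refine ⟨by positivity, ?_⟩
    calc a x * ν x * T' x ≤ μ * μ * μ ^ 5 := by
          gcongr
          exacts [(haμ x).2, (hνμ x).2, (hT'μ x).2]
      _ = μ ^ 7 := by ring
  calc |W| * |T x - T y - (S x - S y)| = |a x * ν x * T' x - a y * ν y * T' y| := by
        rw [← abs_mul]
        congr 1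
        linarith
    _ ≤ μ ^ 7 - 0 := abs_sub_le_of_le_of_le (hmem x).1 (hmem x).2 (hmem y).1 (hmem y).2
    _ = μ ^ 7 := sub_zero _

end Corrector

/-- Before the time `W⁻²` the drift is invisible at the scale `√t`, and after it the bound on
`E - D` is at most `√t`. -/
theorem abs_sub_drift_le {D E W m t : ℝ} (hm : 1 ≤ m) (ht : 0 ≤ t) (hW : |W| * |E - D| ≤ m)
    (hE : |E| ≤ m * |D|) : |E - W * t| ≤ 2 * m * (|D - W * t| + √t) := by
  have hr := Real.sqrt_nonneg t
  have hr₂ := Real.mul_self_sqrt ht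
  have hD := abs_nonneg (D - W * t)
  rcases le_or_gt 1 (|W| * √t) with h | h
  · have hED : |E - D| ≤ m * √t :=
      calc |E - D| ≤ (|W| * √t) * |E - D| := le_mul_of_one_le_left (abs_nonneg _) h
        _ = (|W| * |E - D|) * √t := by ring
        _ ≤ m * √t := by gcongr
    have htri := abs_add_le (E - D) (D - W * t)
    rw [sub_add_sub_cancel] at htri
    nlinarith
  · have hWt : |W * t| ≤ √t := by
      calc |W * t| = |W| * √t * √t := by rw [abs_mul, abs_of_nonneg ht, mul_assoc, hr₂]
        _ ≤ √t := mul_le_of_le_one_left hr h.le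
    have hDr : |D| ≤ |D - W * t| + √t := by
      have := abs_add_le (D - W * t) (W * t)
      rw [sub_add_cancel] at this
      linarith
    have htri := abs_sub E (W * t)
    nlinarith

theorem exp_neg_sq_div_le {D E Λ c t : ℝ} (hΛ : 0 < Λ) (hc : 0 < c) (ht : 0 < t)
    (hE : |E| ≤ c * (|D| + √t)) :
    Real.exp (-D ^ 2 / (8 * Λ * t)) ≤
      Real.exp (1 / (8 * Λ)) * Real.exp (-|E| ^ 2 / (16 * Λ * c ^ 2 * t)) := by
  have hsq : |E| ^ 2 ≤ 2 * c ^ 2 * (D ^ 2 + t) :=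
    calc |E| ^ 2 ≤ (c * (|D| + √t)) ^ 2 := pow_le_pow_left₀ (abs_nonneg E) hE 2
      _ ≤ c ^ 2 * (2 * (|D| ^ 2 + √t ^ 2)) := by
        rw [mul_pow]
        gcongr
        exact add_sq_le
      _ = 2 * c ^ 2 * (D ^ 2 + t) := by
        rw [sq_abs, Real.sq_sqrt ht.le]
        ring
  rw [← Real.exp_add, Real.exp_le_exp]
  have hdiff : 1 / (8 * Λ) + -|E| ^ 2 / (16 * Λ * c ^ 2 * t) - -D ^ 2 / (8 * Λ * t) =
      (2 * c ^ 2 * (D ^ 2 + t) - |E| ^ 2) / (16 * Λ * c ^ 2 * t) := by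
    field_simp
    ring
  rw [← sub_nonneg, hdiff]
  exact div_nonneg (sub_nonneg.2 hsq) (by positivity)

theorem IsPoleSolution.le_gaussian {ν a T : ℝ → ℝ} {W μ y t : ℝ} {u : ℝ → ℝ → ℝ}
    (hu : IsPoleSolution ν a W y u) (hν : Continuous ν) (ha : Continuous a) (hμ : 1 ≤ μ)
    (hνμ : Elliptic μ ν) (haμ : Elliptic μ a) (hT : IsCorrector μ ν a W T) (ht : 0 < t) (x : ℝ) :
    u t x ≤ 4 * (2 + μ ^ 3) * Real.exp (1 / (2 * μ ^ 3)) * Real.exp (1 / (8 * μ ^ 3)) / √t *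
      Real.exp (-|T x - T y - W * t| ^ 2 / (16 * μ ^ 3 * (2 * μ ^ 7) ^ 2 * t)) := by
  have hμ₀ : 0 < μ := by linarith
  obtain ⟨S, X, hS⟩ := exists_isCoordinateChange hν (one_div_pos.2 hμ₀) fun x => (hνμ x).1
  have hTS : |T x - T y - W * t| ≤ 2 * μ ^ 7 * (|S x - S y - W * t| + √t) :=
    abs_sub_drift_le (one_le_pow₀ hμ) ht.le
      (hT.abs_mul_abs_sub_mass_le hμ₀ hνμ hS.hasDerivAt haμ x y)
      ((hT.abs_sub_le_mul_mass hμ₀ hνμ hS.hasDerivAt x y).trans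
        (mul_le_mul_of_nonneg_right (pow_le_pow_right₀ hμ (by norm_num)) (abs_nonneg _)))
  have hexp := exp_neg_sq_div_le (show 0 < μ ^ 3 by positivity)
    (show 0 < 2 * μ ^ 7 by positivity) ht hTS
  calc u t x ≤ _ := hu.le_gaussian_mass hν ha hμ₀ hνμ haμ hS ht x
    _ ≤ 4 * (2 + μ ^ 3) / √t * (Real.exp (1 / (2 * μ ^ 3)) * (Real.exp (1 / (8 * μ ^ 3)) *
        Real.exp (-|T x - T y - W * t| ^ 2 / (16 * μ ^ 3 * (2 * μ ^ 7) ^ 2 * t)))) := by gcongr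
    _ = _ := by ring

end GaussianBound

open GaussianBound in
theorem upper_gaussian_bound_general (μ : ℝ) (hμ : 1 ≤ μ) :
    ∃ C : ℝ, 0 < C ∧ ∀ ν a : ℝ → ℝ, Continuous ν → Continuous a →
      Elliptic μ ν → Elliptic μ a →
      ∀ W : ℝ, ∀ T : ℝ → ℝ, IsCorrector μ ν a W T →
      ∀ (y : ℝ) (u : ℝ → ℝ → ℝ), IsPoleSolution ν a W y u →
      ∀ t : ℝ, 0 < t → ∀ x : ℝ,
        u t x ≤ C / √t * Real.exp (-|T x - T y - W * t| ^ 2 / (C * t)) := by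
  have : 0 < μ := by linarith
  set K := 4 * (2 + μ ^ 3) * Real.exp (1 / (2 * μ ^ 3)) * Real.exp (1 / (8 * μ ^ 3))
  set L := 16 * μ ^ 3 * (2 * μ ^ 7) ^ 2
  have hK : 0 < K := by positivity
  have hL : 0 < L := by positivity
  refine ⟨K + L, add_pos hK hL, fun ν a hν ha hνμ haμ W T hT y u hu t ht x => ?_⟩
  calc u t x ≤ K / √t * Real.exp (-|T x - T y - W * t| ^ 2 / (L * t)) :=
        hu.le_gaussian hν ha hμ hνμ haμ hT ht x
    _ ≤ (K + L) / √t * Real.exp (-|T x - T y - W * t| ^ 2 / ((K + L) * t)) := by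
        simp only [neg_div]
        gcongr
        exacts [le_add_of_nonneg_right hL.le, le_add_of_nonneg_left hK.le]

/-- Theorem 1.1 (upper Gaussian bound): for every `μ ≥ 1` there is `C > 0` such that any
fundamental solution `P` of the canonical equation satisfies
`P(t,x,y) ≤ (C/√t)·exp(−|T(x) − T(y) − Wt|²/(Ct))` for all `t > 0`, `x, y ∈ ℝ`. -/
theorem upper_gaussian_bound (μ : ℝ) (hμ : 1 ≤ μ) :
    ∃ C : ℝ, 0 < C ∧ ∀ ν a : ℝ → ℝ, Continuous ν → Continuous a →
      Elliptic μ ν → Elliptic μ a →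
      ∀ W : ℝ, 0 ≤ W →
      ∀ T : ℝ → ℝ, IsCorrector μ ν a W T →
      ∀ P : ℝ → ℝ → ℝ → ℝ, IsFundSol ν a W P →
      ∀ t : ℝ, 0 < t → ∀ x y : ℝ,
        P t x y ≤ C / Real.sqrt t *
          Real.exp (-|T x - T y - W * t| ^ 2 / (C * t)) := by
  obtain ⟨C, hC, hbound⟩ := upper_gaussian_bound_general μ hμ
  exact ⟨C, hC, fun ν a hν ha hνμ haμ W _ T hT P hP t ht x y =>
    hbound ν a hν ha hνμ haμ W T hT y _ (hP.isPoleSolution y) t ht x⟩
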